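/- Let M > M₁(Ω₁) and let u^ε be the strictly k-convex solution of problem (2.1), assumed C² up to ∂Ω₁. Then there exists a constant C > 0, depending on n, k, Ω₁ and M but independent of ε, such that |D²u^ε(p)| < C for every p ∈ ∂Ω₁, where |D²u^ε(p)| denotes the operator norm of the Hessian matrix. -/

import Mathlib

open Set Metric Filter Topology Bornology
open scoped RealInnerProductSpace

noncomputable section

/-- Euclidean `n`-space. -/
abbrev Euc (n : ℕ) := EuclideanSpace ℝ (Fin n)

/-- The `k`-th elementary symmetric polynomial of a vector `lam ∈ ℝⁿ`. -/
def esymmVec {n : ℕ} (k : ℕ) (lam : Fin n → ℝ) : ℝ :=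
  ∑ S ∈ Finset.powersetCard k (Finset.univ : Finset (Fin n)), ∏ i ∈ S, lam i

/-- `σ_k(A)`: the `k`-th elementary symmetric polynomial of the eigenvalues of a
symmetric matrix `A` (junk value `0` if `A` is not symmetric). -/
noncomputable def sigmaMat {n : ℕ} (k : ℕ) (A : Matrix (Fin n) (Fin n) ℝ) : ℝ := by
  classical exact if h : A.IsHermitian then esymmVec k h.eigenvalues else 0

/-- The eigenvalues of the symmetric matrix `A` lie in the Gårding cone
`Γ_k = {λ : σ_j(λ) > 0, j = 1, …, k}`. -/
def InGardingCone {n : ℕ} (k : ℕ) (A : Matrix (Fin n) (Fin n) ℝ) : Prop :=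
  ∃ h : A.IsHermitian, ∀ j : ℕ, 1 ≤ j → j ≤ k → 0 < esymmVec j h.eigenvalues

/-- The Hessian matrix of `u` at `x`, with derivatives taken within the set `s`. -/
noncomputable def hessianWithin {n : ℕ} (u : Euc n → ℝ) (s : Set (Euc n)) (x : Euc n) :
    Matrix (Fin n) (Fin n) ℝ :=
  fun i j => iteratedFDerivWithin ℝ 2 u s x
    ![EuclideanSpace.single i (1:ℝ), EuclideanSpace.single j (1:ℝ)]

/-- The Hessian matrix `D²u(x)` of `u` at `x`. -/
noncomputable def hessian {n : ℕ} (u : Euc n → ℝ) (x : Euc n) : Matrix (Fin n) (Fin n) ℝ :=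
  fun i j => iteratedFDeriv ℝ 2 u x
    ![EuclideanSpace.single i (1:ℝ), EuclideanSpace.single j (1:ℝ)]

/-- Operator norm of the Hessian matrix of `u` at `x` (derivatives within `s`). -/
noncomputable def hessOpNormWithin {n : ℕ} (u : Euc n → ℝ) (s : Set (Euc n)) (x : Euc n) : ℝ :=
  ‖Matrix.toEuclideanCLM (𝕜 := ℝ) (hessianWithin u s x)‖

/-- A set has smooth boundary: it is the sublevel set of a smooth defining function
with nonvanishing differential on the boundary. -/
def HasSmoothBoundary {n : ℕ} (Ω : Set (Euc n)) : Prop :=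
  ∃ ρ : Euc n → ℝ, ContDiff ℝ (⊤ : ℕ∞) ρ ∧ Ω = {x | ρ x < 0} ∧
    ∀ x ∈ frontier Ω, fderiv ℝ ρ x ≠ 0

/-- `c_{n,k} = (C(n,k))^{1/k}` where `C(n,k)` is the binomial coefficient. -/
noncomputable def cnk (n k : ℕ) : ℝ := (n.choose k : ℝ) ^ ((1:ℝ)/(k:ℝ))

/-- The radially symmetric subsolution `|x - x₀|²/(2c_{n,k}) − ε²/(2c_{n,k}) − M`. -/
noncomputable def underSol {n : ℕ} (k : ℕ) (x₀ : Euc n) (ε M : ℝ) (x : Euc n) : ℝ :=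
  ‖x - x₀‖^2 / (2 * cnk n k) - ε^2 / (2 * cnk n k) - M

/-- The closed ring `Ω̄^ε = closure (Ω₁ \ B̄_ε(x₀))`. -/
def ringSet {n : ℕ} (Ω₁ : Set (Euc n)) (x₀ : Euc n) (ε : ℝ) : Set (Euc n) :=
  closure (Ω₁ \ closedBall x₀ ε)

/-- `u` is a strictly `k`-convex solution of problem (2.1):
`σ_k(D²u) = 1` in `Ω^ε = Ω₁ \ B̄_ε(x₀)`, `u = 0` on `∂Ω₁`, `u = −M` on `∂B_ε(x₀)`,
with `u ∈ C²(Ω̄^ε)`. -/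
def IsSol {n : ℕ} (k : ℕ) (Ω₁ : Set (Euc n)) (x₀ : Euc n) (ε M : ℝ) (u : Euc n → ℝ) : Prop :=
  ContDiffOn ℝ 2 u (ringSet Ω₁ x₀ ε) ∧
  (∀ x ∈ Ω₁ \ closedBall x₀ ε,
      InGardingCone k (hessianWithin u (ringSet Ω₁ x₀ ε) x) ∧
      sigmaMat k (hessianWithin u (ringSet Ω₁ x₀ ε) x) = 1) ∧
  (∀ x ∈ frontier Ω₁, u x = 0) ∧
  (∀ x ∈ sphere x₀ ε, u x = -M)

/-- `ψ` is a strictly `k`-convex solution of problem (2.2):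
`σ_k(D²ψ) = 1` in `Ω₁`, `ψ = 0` on `∂Ω₁`, with `ψ ∈ C^∞(Ω̄₁)`. -/
def IsSol22 {n : ℕ} (k : ℕ) (Ω₁ : Set (Euc n)) (ψ : Euc n → ℝ) : Prop :=
  ContDiffOn ℝ (⊤ : ℕ∞) ψ (closure Ω₁) ∧
  (∀ x ∈ Ω₁, InGardingCone k (hessianWithin ψ (closure Ω₁) x) ∧
      sigmaMat k (hessianWithin ψ (closure Ω₁) x) = 1) ∧
  (∀ x ∈ frontier Ω₁, ψ x = 0)

/-- `u` is a strictly `k`-convex solution of the Dirichlet problem on the convex ring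
`Ω = Ω₁ \ Ω̄₂`: `σ_k(D²u) = 1` in `Ω`, `u = 0` on `∂Ω₁`, `u = −M` on `∂Ω₂`,
with `u ∈ C²(Ω̄)`. -/
def IsSolRing {n : ℕ} (k : ℕ) (Ω₁ Ω₂ : Set (Euc n)) (M : ℝ) (u : Euc n → ℝ) : Prop :=
  ContDiffOn ℝ 2 u (closure (Ω₁ \ closure Ω₂)) ∧
  (∀ x ∈ Ω₁ \ closure Ω₂,
      InGardingCone k (hessianWithin u (closure (Ω₁ \ closure Ω₂)) x) ∧
      sigmaMat k (hessianWithin u (closure (Ω₁ \ closure Ω₂)) x) = 1) ∧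
  (∀ x ∈ frontier Ω₁, u x = 0) ∧
  (∀ x ∈ frontier Ω₂, u x = -M)

/-- The extension `ũ` of `u`, equal to `−M` on the closed ball `B̄_ε(x₀)`. -/
noncomputable def extendBy {n : ℕ} (u : Euc n → ℝ) (x₀ : Euc n) (ε M : ℝ) (x : Euc n) : ℝ := by
  classical exact if x ∈ closedBall x₀ ε then -M else u x

/-- The extension `ũ` of `u`, equal to `−M` on the set `Ω₂`. -/
noncomputable def extendOn {n : ℕ} (u : Euc n → ℝ) (Ω₂ : Set (Euc n)) (M : ℝ) (x : Euc n) : ℝ := by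
  classical exact if x ∈ Ω₂ then -M else u x

/-- The quadratic polynomial with Hessian `A`, linear part `b` and constant term `c`. -/
noncomputable def quadPoly {n : ℕ} (A : Matrix (Fin n) (Fin n) ℝ) (b : Euc n) (c : ℝ)
    (x : Euc n) : ℝ :=
  (∑ i, ∑ j, A i j * x i * x j) / 2 + ⟪b, x⟫ + c


namespace KH
set_option linter.unusedSectionVars false
open Polynomial

lemma splits_deriv {p : ℝ[X]} (hp : p.Splits) : (derivative p).Splits := by
  rw [splits_iff_card_roots] at hp ⊢
  have h1 := card_roots_le_derivative p
  have h2 := card_roots' (derivative p)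
  have h3 := natDegree_derivative_le p
  omega

lemma splits_iter {p : ℝ[X]} (hp : p.Splits) (j : ℕ) : (derivative^[j] p).Splits := by
  induction j with
  | zero => simpa
  | succ j ih => rw [Function.iterate_succ_apply']; exact splits_deriv ih

lemma newton_eval {p : ℝ[X]} (hp : p.Splits) (x : ℝ) :
    p.eval x * (derivative (derivative p)).eval x ≤ (derivative p).eval x ^ 2 := by
  induction hp using Submonoid.closure_induction with
  | mem y hy =>
    rcases hy with ⟨a, rfl⟩ | ⟨a, rfl⟩ <;> simp
  | one => simp
  | mul q r _ _ hq hr =>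
    simp only [derivative_mul, eval_mul, eval_add, derivative_add]
    nlinarith [mul_nonneg (sq_nonneg (q.eval x)) (sub_nonneg.2 hr),
      mul_nonneg (sq_nonneg (r.eval x)) (sub_nonneg.2 hq)]

variable {ι : Type*} [DecidableEq ι]

def pe (s : Finset ι) (x : ι → ℝ) : ℝ[X] := ∏ i ∈ s, (1 + C (x i) * X)

def e (s : Finset ι) (j : ℕ) (x : ι → ℝ) : ℝ := (pe s x).coeff j

lemma pe_splits (s : Finset ι) (x : ι → ℝ) : (pe s x).Splits := by
  apply Splits.prod
  intro i _
  apply Splits.of_natDegree_le_one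
  rw [add_comm, ← C_1]
  exact natDegree_linear_le

lemma newton (s : Finset ι) (x : ι → ℝ) (j : ℕ) :
    e s j x * e s (j+2) x ≤ e s (j+1) x ^ 2 := by
  have h := newton_eval (splits_iter (pe_splits s x) j) 0
  rw [← Function.iterate_succ_apply' derivative, ← Function.iterate_succ_apply' derivative] at h
  simp only [← coeff_zero_eq_eval_zero, coeff_iterate_derivative] at h
  simp only [Nat.succ_eq_add_one, zero_add, Nat.descFactorial_self, nsmul_eq_mul] at h
  rw [show j + 1 + 1 = j + 2 from rfl] at h
  simp only [e]
  set a := (pe s x).coeff j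
  set b := (pe s x).coeff (j+1)
  set c := (pe s x).coeff (j+2)
  have f1 : ((j+1).factorial : ℝ) = (j+1) * j.factorial := by
    rw [Nat.factorial_succ]; push_cast; ring
  have f2 : ((j+2).factorial : ℝ) = (j+2) * ((j+1) * j.factorial) := by
    rw [Nat.factorial_succ (j+1), Nat.factorial_succ]; push_cast; ring
  rw [f1, f2] at h
  have hf : (0:ℝ) < j.factorial := by positivity
  have hj : (0:ℝ) ≤ j := by positivity
  have h' : (j+2) * (a * c) ≤ (j+1) * b^2 := by
    have h3 : ((j:ℝ)+1) * j.factorial^2 * ((j+2) * (a * c)) ≤ ((j:ℝ)+1) * j.factorial^2 * ((j+1) * b^2) := by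
      nlinarith
    exact le_of_mul_le_mul_left h3 (by positivity)
  nlinarith [sq_nonneg b]

@[simp] lemma e_zero (s : Finset ι) (x : ι → ℝ) : e s 0 x = 1 := by
  simp [e, pe, coeff_zero_eq_eval_zero, eval_prod]

lemma e_erase {s : Finset ι} {i : ι} (hi : i ∈ s) (x : ι → ℝ) (j : ℕ) :
    e s (j+1) x = e (s.erase i) (j+1) x + x i * e (s.erase i) j x := by
  have : pe s x = (1 + C (x i) * X) * pe (s.erase i) x := (Finset.mul_prod_erase s _ hi).symm
  rw [e, this, add_mul, one_mul, coeff_add, mul_assoc, coeff_C_mul, coeff_X_mul]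
  rfl

lemma e_sum (s : Finset ι) (x : ι → ℝ) (j : ℕ) :
    (j+1) * e s (j+1) x = ∑ i ∈ s, x i * e (s.erase i) j x := by
  have h : derivative (pe s x) = ∑ i ∈ s, pe (s.erase i) x * C (x i) := by
    rw [pe, derivative_prod_finset]
    apply Finset.sum_congr rfl
    intro i _
    simp [pe]
  have h2 := congrArg (fun p => p.coeff j) h
  simp only [coeff_derivative, finsetSum_coeff, coeff_mul_C] at h2
  rw [e, mul_comm, h2]
  exact Finset.sum_congr rfl fun i _ => by rw [e, mul_comm]

/-- Garding cone -/
def Gam (k : ℕ) (s : Finset ι) (x : ι → ℝ) : Prop := ∀ j ≤ k, 0 < e s j x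

lemma Gam.erase {k : ℕ} {s : Finset ι} {x : ι → ℝ} (h : Gam (k+1) s x) {i : ι} (hi : i ∈ s) :
    Gam k (s.erase i) x := by
  intro j
  induction j with
  | zero => intro _; simp
  | succ j ih =>
    intro hj
    have h0 := ih (by omega)
    by_contra hneg
    push Not at hneg
    have h1 := h (j+1) (by omega)
    have h2 := h (j+2) (by omega)
    rw [e_erase hi] at h1
    rw [show j+2 = (j+1)+1 from rfl, e_erase hi] at h2
    have hN := newton (s.erase i) x j
    rw [show j+2 = (j+1)+1 from rfl] at hN
    set a := e (s.erase i) j x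
    set b := e (s.erase i) (j+1) x
    set c := e (s.erase i) (j+1+1) x
    have hx : 0 < x i * a := by linarith
    have hx : 0 < x i := (pos_iff_pos_of_mul_pos hx).2 h0
    nlinarith [mul_pos h0 h2, mul_nonneg (neg_nonneg.2 hneg) h1.le]

/-- parallel sum superadditive -/
lemma par_superadd {a b c d : ℝ} (h1 : 0 < a + b) (h2 : 0 < c + d) :
    a*b/(a+b) + c*d/(c+d) ≤ (a+c)*(b+d)/((a+c)+(b+d)) := by
  have h3 : 0 < (a+c)+(b+d) := by linarith
  rw [div_add_div _ _ h1.ne' h2.ne', div_le_div_iff₀ (mul_pos h1 h2) h3]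
  nlinarith [sq_nonneg (a*d - b*c)]

lemma par_mono {a b d : ℝ} (h1 : 0 < a + b) (h2 : b ≤ d) :
    a*b/(a+b) ≤ a*d/(a+d) := by
  have h3 : 0 < a+d := by linarith
  rw [div_le_div_iff₀ h1 h3]
  nlinarith [mul_nonneg (sq_nonneg a) (sub_nonneg.2 h2)]

def q (s : Finset ι) (j : ℕ) (x : ι → ℝ) : ℝ := e s (j+1) x / e s j x

lemma q_rec {k : ℕ} {s : Finset ι} {x : ι → ℝ} (h : Gam (k+1) s x) :
    ((k:ℝ)+2) * q s (k+1) x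
      = ∑ i ∈ s, x i * q (s.erase i) k x / (x i + q (s.erase i) k x) := by
  have h0 := h (k+1) le_rfl
  have := e_sum s x (k+1)
  push_cast at this
  rw [q, mul_div_assoc', show (k:ℝ)+2 = k+1+1 by ring, show k+1+1 = (k+1)+1 from rfl, this, Finset.sum_div]
  apply Finset.sum_congr rfl
  intro i hi
  have h1 := h.erase hi k le_rfl
  rw [e_erase hi] at h0 ⊢
  rw [q]
  set a := e (s.erase i) k x
  set b := e (s.erase i) (k+1) x
  have h2 : x i + b / a = (b + x i * a) / a := by field_simp; ring
  rw [h2]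
  field_simp

lemma q_den_pos {k : ℕ} {s : Finset ι} {x : ι → ℝ} (h : Gam (k+1) s x) {i : ι} (hi : i ∈ s) :
    0 < x i + q (s.erase i) k x := by
  have h0 := h (k+1) le_rfl
  have h1 := h.erase hi k le_rfl
  rw [e_erase hi] at h0
  have : x i + q (s.erase i) k x = (e (s.erase i) (k+1) x + x i * e (s.erase i) k x) / e (s.erase i) k x := by
    rw [q]; field_simp; ring
  rw [this]; positivity

lemma q_superadd (k : ℕ) : ∀ (s : Finset ι) (x y : ι → ℝ), Gam k s x → Gam k s y →
    Gam k s (x + y) ∧ q s k x + q s k y ≤ q s k (x+y) := by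
  induction k with
  | zero =>
    intro s x y _ _
    refine ⟨fun j hj => ?_, ?_⟩
    · obtain rfl : j = 0 := by omega
      simp
    · have h1 := fun x : ι → ℝ => e_sum s x 0
      simp only [Nat.cast_zero, zero_add, one_mul, e_zero, mul_one] at h1
      simp [q, h1, Finset.sum_add_distrib]
  | succ k ih =>
    intro s x y hx hy
    have hx' : Gam k s x := fun j hj => hx j (by omega)
    have hy' : Gam k s y := fun j hj => hy j (by omega)
    obtain ⟨hg, hq⟩ := ih s x y hx' hy'
    have hxy : Gam (k+1) s (x+y) := by
      intro j hj
      rcases Nat.lt_or_ge k j with h | h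
      · obtain rfl : j = k+1 := by omega
        have h1 : 0 < q s k x := div_pos (hx _ le_rfl) (hx' _ le_rfl)
        have h2 : 0 < q s k y := div_pos (hy _ le_rfl) (hy' _ le_rfl)
        have h3 : 0 < q s k (x+y) := by linarith
        have h4 := hg k le_rfl
        have : e s (k+1) (x+y) = q s k (x+y) * e s k (x+y) := by
          rw [q]; field_simp
        rw [this]; positivity
      · exact hg j h
    refine ⟨hxy, ?_⟩
    have key : ((k:ℝ)+2) * q s (k+1) x + ((k:ℝ)+2) * q s (k+1) y ≤ ((k:ℝ)+2) * q s (k+1) (x+y) := by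
      rw [q_rec hx, q_rec hy, q_rec hxy, ← Finset.sum_add_distrib]
      apply Finset.sum_le_sum
      intro i hi
      have h1 := q_den_pos hx hi
      have h2 := q_den_pos hy hi
      refine (par_superadd h1 h2).trans ?_
      exact par_mono (by linarith) ((ih (s.erase i) x y (hx.erase hi) (hy.erase hi)).2)
    have : (0:ℝ) < k + 2 := by positivity
    nlinarith

lemma q_anti {k : ℕ} {s : Finset ι} {x : ι → ℝ} (h : Gam (k+1) s x) :
    q s (k+1) x ≤ q s k x := by
  have h0 := h k (by omega)
  have h1 := h (k+1) le_rfl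
  rw [q, q, div_le_div_iff₀ h1 h0]
  have := newton s x k
  nlinarith

lemma e_smul (s : Finset ι) (j : ℕ) (c : ℝ) (x : ι → ℝ) : e s j (c • x) = c^j * e s j x := by
  have : pe s (c • x) = (pe s x).comp (C c * X) := by
    simp only [pe, Polynomial.prod_comp]
    apply Finset.prod_congr rfl
    intro i _
    simp; ring
  rw [e, this, comp_C_mul_X_coeff, e, mul_comm]

/-- maclaurin-type -/
lemma ge_one_of {k : ℕ} {s : Finset ι} {x : ι → ℝ} (h : Gam k s x) (h1 : 1 ≤ e s k x) :
    ∀ j ≤ k, 1 ≤ e s j x := by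
  induction k with
  | zero => intro j hj; obtain rfl : j = 0 := by omega
            exact h1
  | succ k ih =>
    have hg : Gam k s x := fun j hj => h j (by omega)
    suffices hk : 1 ≤ e s k x by
      intro j hj
      rcases Nat.lt_or_ge k j with h' | h'
      · obtain rfl : j = k+1 := by omega
        exact h1
      · exact ih hg hk j h'
    by_contra hlt
    push Not at hlt
    -- q s k > 1 so all q >= q s k > 1
    have hqk : 1 < q s k x := by
      rw [q, one_lt_div (hg k le_rfl)]; linarith
    have hall : ∀ i ≤ k, 1 < q s (k - i) x := by
      intro i
      induction i with
      | zero => intro _; simpa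
      | succ i ihi =>
        intro hi
        have := ihi (by omega)
        have h2 : Gam (k - (i+1) + 1) s x := fun j hj => h j (by omega)
        have h3 := q_anti h2
        rw [show k - (i+1) + 1 = k - i by omega] at h3
        linarith
    have hge : ∀ j ≤ k, 1 ≤ e s j x := by
      intro j
      induction j with
      | zero => intro _; simp
      | succ j ihj =>
        intro hj
        have h2 := ihj (by omega)
        have h3 := hall (k - j) (by omega)
        rw [show k - (k - j) = j by omega, q, one_lt_div (hg j (by omega))] at h3
        linarith
    linarith [hge k le_rfl]

lemma e_eq_prod_q {k : ℕ} {s : Finset ι} {x : ι → ℝ} (h : Gam k s x) :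
    e s k x = ∏ j ∈ Finset.range k, q s j x := by
  induction k with
  | zero => simp
  | succ k ih =>
    rw [Finset.prod_range_succ, ← ih (fun j hj => h j (by omega)), q]
    have := h k (by omega)
    field_simp

lemma Gam.smul {k : ℕ} {s : Finset ι} {x : ι → ℝ} (h : Gam k s x) {c : ℝ} (hc : 0 < c) :
    Gam k s (c • x) := by
  intro j hj
  rw [e_smul]
  exact mul_pos (pow_pos hc j) (h j hj)

def Kv (k : ℕ) (s : Finset ι) : Set (ι → ℝ) := {x | ∀ j ≤ k, 1 ≤ e s j x}

lemma Kv_convex (k : ℕ) (s : Finset ι) : Convex ℝ (Kv k s) := by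
  rw [convex_iff_forall_pos]
  intro x hx y hy a b ha hb hab
  have gx : Gam k s x := fun j hj => by have := hx j hj; linarith
  have gy : Gam k s y := fun j hj => by have := hy j hj; linarith
  have gx' := gx.smul ha
  have gy' := gy.smul hb
  obtain ⟨gz, -⟩ := q_superadd k s _ _ gx' gy'
  refine ge_one_of gz ?_
  have lx := hx k le_rfl
  have ly := hy k le_rfl
  rw [e_eq_prod_q gx] at lx
  rw [e_eq_prod_q gy] at ly
  rw [e_eq_prod_q gz]
  have hqs : ∀ j ∈ Finset.range k, q s j x ^ a * q s j y ^ b ≤ q s j (a • x + b • y) := by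
    intro j hj
    rw [Finset.mem_range] at hj
    have g1 : Gam j s x := fun i hi => gx i (by omega)
    have g2 : Gam j s y := fun i hi => gy i (by omega)
    have := (q_superadd j s _ _ (g1.smul ha) (g2.smul hb)).2
    refine le_trans ?_ this
    have hq : ∀ (c : ℝ) (_ : 0 < c) (z : ι → ℝ), Gam j s z → q s j (c • z) = c * q s j z := by
      intro c hc z hz
      rw [q, q, e_smul, e_smul]
      have := hz j le_rfl
      rw [pow_succ]
      field_simp
    rw [hq a ha x g1, hq b hb y g2]
    exact Real.geom_mean_le_arith_mean2_weighted ha.le hb.le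
      (div_pos (gx (j+1) (by omega)) (gx j (by omega))).le
      (div_pos (gy (j+1) (by omega)) (gy j (by omega))).le hab
  have hpos : ∀ (z : ι → ℝ), Gam k s z → ∀ j ∈ Finset.range k, 0 ≤ q s j z := by
    intro z hz j hj
    rw [Finset.mem_range] at hj
    exact (div_pos (hz (j+1) (by omega)) (hz j (by omega))).le
  calc (1:ℝ) ≤ (∏ j ∈ Finset.range k, q s j x)^a * (∏ j ∈ Finset.range k, q s j y)^b := by
        have h1 := Real.one_le_rpow lx ha.le
        have h2 := Real.one_le_rpow ly hb.le
        nlinarith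
    _ = ∏ j ∈ Finset.range k, (q s j x ^ a * q s j y ^ b) := by
        rw [Finset.prod_mul_distrib, Real.finsetProd_rpow _ _ (hpos x gx), Real.finsetProd_rpow _ _ (hpos y gy)]
    _ ≤ _ := by
        apply Finset.prod_le_prod
        · intro j hj
          exact mul_nonneg (Real.rpow_nonneg (hpos x gx j hj) _) (Real.rpow_nonneg (hpos y gy j hj) _)
        · exact hqs

end KH


namespace KH
set_option linter.unusedSectionVars false
open Matrix

lemma esymmVec_eq {n : ℕ} (k : ℕ) (lam : Fin n → ℝ) : esymmVec k lam = e Finset.univ k lam := by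
  rw [e, pe, Finset.prod_one_add, Polynomial.finsetSum_coeff, esymmVec]
  have : ∀ t : Finset (Fin n), (∏ i ∈ t, (Polynomial.C (lam i) * Polynomial.X)).coeff k
      = if t.card = k then ∏ i ∈ t, lam i else 0 := by
    intro t
    rw [Finset.prod_mul_distrib, Finset.prod_const, ← map_prod, Polynomial.coeff_C_mul,
      Polynomial.coeff_X_pow]
    simp [eq_comm]
  simp only [this]
  rw [← Finset.sum_filter, ← Finset.powersetCard_eq_filter]

variable {n : ℕ}

abbrev Mat (n : ℕ) := Matrix (Fin n) (Fin n) ℝ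

def sgc (j : ℕ) (A : Mat n) : ℝ := (-1)^j * A.charpoly.coeff (n - j)

lemma sgc_of_charpoly {A : Mat n} {d : Fin n → ℝ}
    (h : A.charpoly = ∏ i, (Polynomial.X - Polynomial.C (d i))) {j : ℕ} (hj : j ≤ n) :
    sgc j A = e Finset.univ j d := by
  rw [sgc, h, ← esymmVec_eq, esymmVec]
  have h1 := Multiset.prod_X_sub_C_coeff (Finset.univ.val.map d) (k := n - j) (by simp)
  rw [Multiset.map_map] at h1
  change (∏ i, (Polynomial.X - Polynomial.C (d i))).coeff (n - j) = _ at h1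
  rw [h1, Finset.esymm_map_val]
  simp only [Multiset.card_map, Finset.card_val, Finset.card_univ, Fintype.card_fin]
  rw [show n - (n - j) = j by omega, ← mul_assoc, ← mul_pow]
  simp

lemma sgc_herm {A : Mat n} (h : A.IsHermitian) {j : ℕ} (hj : j ≤ n) :
    sgc j A = e Finset.univ j h.eigenvalues :=
  sgc_of_charpoly h.charpoly_eq hj

lemma charpoly_conj {A V : Mat n} (hV : V * star V = 1) :
    (star V * A * V).charpoly = A.charpoly := by
  rw [Matrix.charpoly_mul_comm, ← mul_assoc, hV, one_mul]

lemma sgc_conj {A V : Mat n} (hV : V * star V = 1) (j : ℕ) : sgc j (star V * A * V) = sgc j A := by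
  rw [sgc, sgc, charpoly_conj hV]

lemma sgc_cont (j : ℕ) : Continuous (sgc j : Mat n → ℝ) := by
  unfold sgc
  apply continuous_const.mul
  have : ∀ A : Mat n, A.charpoly.coeff (n - j)
      = MvPolynomial.eval (fun p : Fin n × Fin n => A p.1 p.2)
          ((Matrix.charpoly.univ ℝ (Fin n)).coeff (n-j)) := by
    intro A
    have := Matrix.charpoly.univ_coeff_eval₂Hom (R := ℝ) (Fin n) (RingHom.id ℝ) (fun p => A p.1 p.2) (n-j)
    exact this.symm
  simp only [this]
  refine (MvPolynomial.continuous_eval _).comp ?_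
  fun_prop

lemma spec {A : Mat n} (h : A.IsHermitian) : ∃ V : Mat n, V * star V = 1 ∧ star V * V = 1 ∧
    A = V * diagonal h.eigenvalues * star V := by
  refine ⟨h.eigenvectorUnitary, by simp, by simp, ?_⟩
  have := h.spectral_theorem
  rw [Unitary.conjStarAlgAut_apply] at this
  have h2 : (RCLike.ofReal ∘ h.eigenvalues : Fin n → ℝ) = h.eigenvalues := by ext; simp
  rw [h2] at this
  exact this

lemma sgc_smul {A : Mat n} (h : A.IsHermitian) (c : ℝ) {j : ℕ} (hj : j ≤ n) :
    sgc j (c • A) = c^j * sgc j A := by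
  obtain ⟨V, h1, h2, h3⟩ := spec h
  have h4 : c • A = star (star V) * diagonal (c • h.eigenvalues) * star V := by
    conv_lhs => rw [h3]
    rw [star_star, diagonal_smul]
    simp
  rw [h4, sgc_conj (by rwa [star_star]), sgc_of_charpoly (charpoly_diagonal _) hj, e_smul, sgc_herm h hj]

def Km (k n : ℕ) : Set (Mat n) := {A | A.IsHermitian ∧ ∀ j ≤ k, 1 ≤ sgc j A}

lemma Kv_perm {k : ℕ} {d : Fin n → ℝ} (hd : d ∈ Kv k Finset.univ) (σ : Equiv.Perm (Fin n)) :
    (fun i => d (σ i)) ∈ Kv k Finset.univ := by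
  intro j hj
  have : e Finset.univ j (fun i => d (σ i)) = e Finset.univ j d := by
    rw [e, e, pe, pe]
    congr 1
    exact Equiv.prod_comp σ (fun i => 1 + Polynomial.C (d i) * Polynomial.X)
  rw [this]; exact hd j hj

lemma Kv_ds {k : ℕ} {d : Fin n → ℝ} (hd : d ∈ Kv k Finset.univ) {S : Mat n}
    (hS : S ∈ doublyStochastic ℝ (Fin n)) : S *ᵥ d ∈ Kv k Finset.univ := by
  rw [← SetLike.mem_coe, doublyStochastic_eq_convexHull_permMatrix] at hS
  have hc : Convex ℝ ((fun S : Mat n => S *ᵥ d) ⁻¹' (Kv k Finset.univ)) := by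
    have := (Kv_convex k (Finset.univ : Finset (Fin n))).linear_preimage
      ((Matrix.mulVecBilin ℝ ℝ).flip d)
    exact this
  refine convexHull_min ?_ hc hS
  rintro _ ⟨σ, rfl⟩
  rw [mem_preimage]
  have : (Equiv.Perm.permMatrix ℝ σ) *ᵥ d = fun i => d (σ i) := by
    ext i
    simp [Matrix.permMatrix_mulVec]
  rw [this]
  exact Kv_perm hd σ

lemma diag_mem {k : ℕ} (hkn : k ≤ n) {A : Mat n} (hA : A ∈ Km k n) {V : Mat n}
    (h1 : V * star V = 1) (h2 : star V * V = 1) :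
    (fun i => (star V * A * V) i i) ∈ Kv k Finset.univ := by
  obtain ⟨h, hj⟩ := hA
  obtain ⟨U, u1, u2, u3⟩ := spec h
  have hd : h.eigenvalues ∈ Kv k Finset.univ := by
    intro j hjk
    rw [← sgc_herm h (by omega)]
    exact hj j hjk
  set Y := star V * U with hY
  have hYY : Y * star Y = 1 := by
    rw [hY, star_mul, star_star, mul_assoc, ← mul_assoc U, u1, one_mul, h2]
  have hYY' : star Y * Y = 1 := by
    rw [hY, star_mul, star_star, mul_assoc, ← mul_assoc V, h1, one_mul, u2]
  have key : (fun i => (star V * A * V) i i) = (Matrix.of fun i j => Y i j ^ 2) *ᵥ h.eigenvalues := by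
    ext i
    have : star V * A * V = Y * diagonal h.eigenvalues * star Y := by
      conv_lhs => rw [u3]
      rw [hY, star_mul, star_star]
      simp only [mul_assoc]
    rw [this, Matrix.mul_apply]
    simp only [mul_diagonal, star_apply, mulVec, dotProduct, of_apply]
    apply Finset.sum_congr rfl
    intro j _
    simp; ring
  rw [key]
  apply Kv_ds hd
  rw [mem_doublyStochastic_iff_sum]
  refine ⟨fun i j => by simp [sq_nonneg], fun i => ?_, fun j => ?_⟩
  · have := congrFun (congrFun hYY i) i
    rw [Matrix.mul_apply] at this
    simpa [sq] using this
  · have := congrFun (congrFun hYY' j) j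
    rw [Matrix.mul_apply] at this
    simpa [sq] using this

lemma Km_convex {k : ℕ} (hkn : k ≤ n) : Convex ℝ (Km k n) := by
  intro A hA B hB a b ha hb hab
  have hC : (a • A + b • B).IsHermitian :=
    (hA.1.smul (IsSelfAdjoint.all a)).add (hB.1.smul (IsSelfAdjoint.all b))
  refine ⟨hC, ?_⟩
  obtain ⟨V, v1, v2, v3⟩ := spec hC
  have h1 := diag_mem hkn hA v1 v2
  have h2 := diag_mem hkn hB v1 v2
  have h3 := Kv_convex k Finset.univ h1 h2 ha hb hab
  have h4 : hC.eigenvalues = a • (fun i => (star V * A * V) i i) + b • (fun i => (star V * B * V) i i) := by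
    have : star V * (a • A + b • B) * V = diagonal hC.eigenvalues := by
      conv_lhs => rw [v3]
      rw [← mul_assoc, ← mul_assoc, v2, one_mul, mul_assoc, v2, mul_one]
    ext i
    have h5 := congrFun (congrFun this i) i
    rw [diagonal_apply_eq] at h5
    rw [← h5, mul_add, add_mul]
    simp
  intro j hj
  rw [sgc_herm hC (by omega), h4]
  exact h3 j hj

lemma Km_smul {k : ℕ} (hkn : k ≤ n) {A : Mat n} (hA : A ∈ Km k n) {c : ℝ} (hc : 1 ≤ c) :
    c • A ∈ Km k n := by
  refine ⟨hA.1.smul (IsSelfAdjoint.all c), fun j hj => ?_⟩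
  rw [sgc_smul hA.1 c (by omega)]
  have := hA.2 j hj
  nlinarith [one_le_pow₀ hc (n := j)]

lemma Km_closed (k n : ℕ) : IsClosed (Km k n) := by
  have : Km k n = {A : Mat n | Aᴴ = A} ∩ ⋂ j ∈ Finset.range (k+1), {A | 1 ≤ sgc j A} := by
    ext A
    simp [Km, Matrix.IsHermitian]
  rw [this]
  apply IsClosed.inter
  · exact isClosed_eq (by fun_prop) continuous_id
  · exact isClosed_biInter fun j _ => isClosed_le continuous_const (sgc_cont j)

lemma Km_conj {k : ℕ} {A V : Mat n} (hA : A ∈ Km k n) (hV : V * star V = 1) :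
    star V * A * V ∈ Km k n := by
  refine ⟨?_, fun j hj => by rw [sgc_conj hV]; exact hA.2 j hj⟩
  exact Matrix.isHermitian_conjTranspose_mul_mul V hA.1

lemma Km_trace {k : ℕ} (hk : 1 ≤ k) (hkn : k ≤ n) {A : Mat n} (hA : A ∈ Km k n) : 1 ≤ A.trace := by
  have := hA.2 1 hk
  rw [sgc_herm hA.1 (by omega)] at this
  have h1 := e_sum (Finset.univ) hA.1.eigenvalues 0
  rw [hA.1.trace_eq_sum_eigenvalues]
  simp at h1 ⊢
  linarith

lemma Km_big {k : ℕ} (hkn : k ≤ n) {A : Mat n} (hA : A.IsHermitian) {η T : ℝ} (hη : 0 < η)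
    (h1 : ∀ v : Fin n → ℝ, η * (v ⬝ᵥ v) ≤ v ⬝ᵥ (A *ᵥ v)) (hT : n * T ≤ A.trace) (hT0 : 0 < T)
    (h2 : ∀ j < k, 1 ≤ T * η^j) : A ∈ Km k n := by
  have hev : ∀ i, η ≤ hA.eigenvalues i := by
    intro i
    have h3 := hA.eigenvalues_eq i
    have h4 := h1 (hA.eigenvectorBasis i).ofLp
    have h5 : (hA.eigenvectorBasis i).ofLp ⬝ᵥ (hA.eigenvectorBasis i).ofLp = 1 := by
      have h6 := hA.eigenvectorBasis.orthonormal.1 i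
      have h7 := EuclideanSpace.real_norm_sq_eq (hA.eigenvectorBasis i)
      rw [h6] at h7
      simp only [dotProduct]
      simp only [← sq]
      rw [← h7]; norm_num
    rw [h5] at h4
    simp at h3
    linarith
  refine ⟨hA, fun j hj => ?_⟩
  rw [sgc_herm hA (by omega)]
  rcases Nat.eq_zero_or_pos j with rfl | hj0
  · simp
  have hne : (Finset.univ : Finset (Fin n)).Nonempty := by
    rw [Finset.univ_nonempty_iff]; exact ⟨⟨0, by omega⟩⟩
  obtain ⟨i0, -, hi0⟩ : ∃ i ∈ Finset.univ, T ≤ hA.eigenvalues i := by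
    apply Finset.exists_le_of_sum_le hne
    rw [hA.trace_eq_sum_eigenvalues] at hT
    simpa using hT
  obtain ⟨S, hS1, -, hS2⟩ := Finset.exists_subsuperset_card_eq (Finset.subset_univ {i0}) (n := j)
    (by simp; omega) (by simp; omega)
  rw [← esymmVec_eq, esymmVec]
  have hpos : ∀ i, 0 < hA.eigenvalues i := fun i => hη.trans_le (hev i)
  refine le_trans ?_ (Finset.single_le_sum (f := fun S => ∏ i ∈ S, hA.eigenvalues i)
    (fun t _ => Finset.prod_nonneg fun i _ => (hpos i).le)
    (show S ∈ Finset.powersetCard j Finset.univ by simp [hS2]))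
  have hi0S : i0 ∈ S := hS1 (by simp)
  rw [← Finset.mul_prod_erase S _ hi0S]
  have h3 : η^(j-1) ≤ ∏ i ∈ S.erase i0, hA.eigenvalues i := by
    have := Finset.prod_le_prod (s := S.erase i0) (f := fun _ => η) (g := hA.eigenvalues)
      (fun _ _ => hη.le) (fun i _ => hev i)
    rwa [Finset.prod_const, Finset.card_erase_of_mem hi0S, hS2] at this
  calc (1:ℝ) ≤ T * η^(j-1) := h2 _ (by omega)
    _ ≤ _ := mul_le_mul hi0 h3 (by positivity) (hpos _).le

lemma Km_of_garding {k : ℕ} (hkn : k ≤ n) {A : Mat n} (h : InGardingCone k A)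
    (h1 : sigmaMat k A = 1) : A ∈ Km k n ∧ sgc k A = 1 := by
  obtain ⟨hA, hj⟩ := h
  rw [sigmaMat, dif_pos hA, esymmVec_eq] at h1
  have hg : Gam k Finset.univ hA.eigenvalues := by
    intro j hjk
    rcases Nat.eq_zero_or_pos j with rfl | hj0
    · simp
    · rw [← esymmVec_eq]; exact hj j hj0 hjk
  refine ⟨⟨hA, fun j hjk => ?_⟩, by rw [sgc_herm hA hkn, h1]⟩
  rw [sgc_herm hA (by omega)]
  exact ge_one_of hg h1.ge j hjk

lemma Km_shrink {k : ℕ} (hkn : k ≤ n) {S : Set (Mat n)} (hS : IsCompact S) (hSK : S ⊆ Km k n) :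
    ∃ η > (0:ℝ), ∀ A ∈ S, (2:ℝ) • (A - η • (1 : Mat n)) ∈ Km k n := by
  have key : ∀ j ≤ k, ∀ᶠ η in 𝓝 (0:ℝ), ∀ A ∈ S, 1 ≤ sgc j ((2:ℝ) • (A - η • (1 : Mat n))) := by
    intro j hj
    rcases Nat.eq_zero_or_pos j with rfl | hj0
    · refine Filter.Eventually.of_forall fun η A hA => ?_
      have : ((2:ℝ) • (A - η • (1 : Mat n))).IsHermitian :=
        ((hSK hA).1.sub (isHermitian_one.smul (IsSelfAdjoint.all η))).smul (IsSelfAdjoint.all _)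
      rw [sgc_herm this (by omega)]; simp
    have hopen : IsOpen {p : ℝ × Mat n | (1:ℝ) < sgc j ((2:ℝ) • (p.2 - p.1 • (1 : Mat n)))} := by
      apply isOpen_lt continuous_const
      exact (sgc_cont j).comp (by fun_prop)
    have hsub : ({0} : Set ℝ) ×ˢ S ⊆ {p : ℝ × Mat n | (1:ℝ) < sgc j ((2:ℝ) • (p.2 - p.1 • (1 : Mat n)))} := by
      rintro ⟨η, A⟩ ⟨h0, hA⟩
      simp only [mem_singleton_iff] at h0
      subst h0
      simp only [mem_ofPred_eq, zero_smul, sub_zero]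
      rw [sgc_smul (hSK hA).1 _ (by omega)]
      have h3 := (hSK hA).2 j hj
      have : (1:ℝ) < 2^j := one_lt_pow₀ (by norm_num) (by omega)
      nlinarith
    obtain ⟨u, v, hu, hv, hu0, hvS, huv⟩ := generalized_tube_lemma isCompact_singleton hS hopen hsub
    filter_upwards [hu.mem_nhds (hu0 rfl)] with η hη A hA
    have h7 : (η, A) ∈ u ×ˢ v := ⟨hη, hvS hA⟩
    have h8 := huv h7
    rw [mem_ofPred_eq] at h8
    exact h8.le
  have h2 : ∀ᶠ η in 𝓝 (0:ℝ), ∀ j ∈ Finset.range (k+1), ∀ A ∈ S, 1 ≤ sgc j ((2:ℝ) • (A - η • (1 : Mat n))) := by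
    rw [Filter.eventually_all_finset]
    intro j hj
    exact key j (by simpa [Nat.lt_succ_iff] using hj)
  have h3 : ∀ᶠ η in 𝓝[>] (0:ℝ), ∀ j ∈ Finset.range (k+1), ∀ A ∈ S, 1 ≤ sgc j ((2:ℝ) • (A - η • (1 : Mat n))) :=
    h2.filter_mono nhdsWithin_le_nhds
  obtain ⟨η, h4, h5⟩ := (h3.and self_mem_nhdsWithin).exists
  refine ⟨η, h5, fun A hA => ⟨?_, fun j hj => h4 j (by simp; omega) A hA⟩⟩
  exact ((hSK hA).1.sub (isHermitian_one.smul (IsSelfAdjoint.all η))).smul (IsSelfAdjoint.all _)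

lemma Km_not_scaled {k : ℕ} (hk : 1 ≤ k) (hkn : k ≤ n) {A B : Mat n} (hA : sgc k A = 1) (hB : B ∈ Km k n)
    {s : ℝ} (hs : 1 < s) : A ≠ s • B := by
  rintro rfl
  rw [sgc_smul hB.1 _ hkn] at hA
  have := hB.2 k le_rfl
  have h2 : (1:ℝ) < s^k := one_lt_pow₀ hs (by omega)
  nlinarith

end KH


namespace KH
open Matrix

variable {n : ℕ}

abbrev Bil (n : ℕ) := Euc n →L[ℝ] Euc n →L[ℝ] ℝ

instance instBilN : NormedAddCommGroup (Bil n) := inferInstance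
instance instBilS : NormedSpace ℝ (Bil n) := inferInstance
instance instBilG : AddCommGroup (Bil n) := inferInstance
instance instBilM : Module ℝ (Bil n) := inferInstance
instance instBilA : Add (Bil n) := inferInstance
instance instBilAZ : AddZeroClass (Bil n) := inferInstance
instance instBilAM : AddMonoid (Bil n) := inferInstance
instance instBilACM : AddCommMonoid (Bil n) := inferInstance
instance instBilAG : AddGroup (Bil n) := inferInstance
instance instBilSM : SMul ℝ (Bil n) := inferInstance
instance instBilMA : MulAction ℝ (Bil n) := inferInstance
instance instBilDMA : DistribMulAction ℝ (Bil n) := inferInstance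
instance instBilDS : DistribSMul ℝ (Bil n) := inferInstance
instance instBilT : TopologicalSpace (Bil n) := inferInstance
instance instBilCA : ContinuousAdd (Bil n) := inferInstance
instance instBilCS : ContinuousSMul ℝ (Bil n) := inferInstance

abbrev bs (i : Fin n) : Euc n := EuclideanSpace.single i (1:ℝ)

def matOf (B : Bil n) : Mat n := Matrix.of fun i j => B (bs i) (bs j)

lemma matOf_add (B C : Bil n) : matOf (B + C) = matOf B + matOf C := by ext; simp [matOf]
lemma matOf_sub (B C : Bil n) : matOf (B - C) = matOf B - matOf C := by ext; simp [matOf]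
lemma matOf_smul (c : ℝ) (B : Bil n) : matOf (c • B) = c • matOf B := by ext; simp [matOf]

lemma matOf_cont : Continuous (matOf : Bil n → Mat n) := by
  unfold matOf
  apply continuous_matrix
  intro i j
  simp only [of_apply]
  fun_prop

lemma eq_sum_bs (x : Euc n) : x = ∑ i, x i • bs i := by
  ext j
  simp [Finset.sum_apply, Pi.single_apply]

lemma matOf_apply (B : Bil n) (x y : Euc n) : B x y = x.ofLp ⬝ᵥ (matOf B *ᵥ y.ofLp) := by
  conv_lhs => rw [eq_sum_bs x, eq_sum_bs y]
  simp only [map_sum, map_smul, _root_.sum_apply, _root_.smul_apply,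
    smul_eq_mul, dotProduct, mulVec, matOf, of_apply]
  simp only [Finset.mul_sum]
  rw [Finset.sum_comm]
  refine Finset.sum_congr rfl fun i _ => Finset.sum_congr rfl fun j _ => by ring

lemma bil_ext {B C : Bil n} (h : matOf B = matOf C) : B = C := by
  ext x y
  rw [matOf_apply, matOf_apply, h]

def IdB (n : ℕ) : Bil n := innerSL ℝ

@[simp] lemma IdB_apply (x y : Euc n) : IdB n x y = ⟪x, y⟫ := rfl

lemma matOf_Id : matOf (IdB n) = 1 := by
  ext i j
  simp [matOf, Matrix.one_apply, EuclideanSpace.inner_single_left]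

def tr (B : Bil n) : ℝ := ∑ i, B (bs i) (bs i)

lemma tr_eq (B : Bil n) : tr B = (matOf B).trace := by simp [tr, Matrix.trace, matOf]
@[simp] lemma tr_add (B C : Bil n) : tr (B + C) = tr B + tr C := by simp [tr, Finset.sum_add_distrib]
@[simp] lemma tr_smul (c : ℝ) (B : Bil n) : tr (c • B) = c * tr B := by simp [tr, Finset.mul_sum]
@[simp] lemma tr_Id : tr (IdB n) = n := by simp [tr_eq, matOf_Id]

def tens (a b : Euc n →L[ℝ] ℝ) : Bil n := a.smulRight b

@[simp] lemma tens_apply (a b : Euc n →L[ℝ] ℝ) (x y : Euc n) : tens a b x y = a x * b y := by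
  simp [tens]

lemma sum_sq_bs (x : Euc n) : ∑ i, ⟪x, bs i⟫^2 = ‖x‖^2 := by
  rw [EuclideanSpace.real_norm_sq_eq]
  simp [EuclideanSpace.inner_single_right]

lemma tr_tens_inner (x : Euc n) : tr (tens (innerSL ℝ x) (innerSL ℝ x)) = ‖x‖^2 := by
  rw [← sum_sq_bs]; simp [tr, sq]

lemma tr_tens (a : Euc n →L[ℝ] ℝ) : tr (tens a a) = ‖a‖^2 := by
  obtain ⟨x, rfl⟩ := (InnerProductSpace.toDual ℝ (Euc n)).surjective a
  rw [LinearIsometryEquiv.norm_map]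
  exact tr_tens_inner x

def Kb (k n : ℕ) : Set (Bil n) := {B | matOf B ∈ Km k n}

lemma mem_Kb {k : ℕ} {B : Bil n} : B ∈ Kb k n ↔ matOf B ∈ Km k n := Iff.rfl

def K0 (k n : ℕ) : Set (Bil n) := {B | matOf B ∈ Km k n ∧ sgc k (matOf B) = 1}

def Sup (k : ℕ) (B : Bil n) : Prop := ∀ s > (1:ℝ), ∀ B' ∈ Kb k n, B ≠ s • B'

lemma K0_sub {k : ℕ} {B : Bil n} (h : B ∈ K0 k n) : B ∈ Kb k n := h.1

variable {k : ℕ}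

lemma Kb_convex (hkn : k ≤ n) : Convex ℝ (Kb k n) := by
  intro A hA B hB a b ha hb hab
  rw [mem_Kb]
  rw [matOf_add, matOf_smul, matOf_smul]
  exact Km_convex hkn hA hB ha hb hab

lemma Kb_smul (hkn : k ≤ n) {B : Bil n} (hB : B ∈ Kb k n) {c : ℝ} (hc : 1 ≤ c) : c • B ∈ Kb k n := by
  rw [mem_Kb]
  rw [matOf_smul]; exact Km_smul hkn hB hc

lemma Kb_closed (k n : ℕ) : IsClosed (Kb k n) := (Km_closed k n).preimage matOf_cont

lemma K0_closed (k n : ℕ) : IsClosed (K0 k n) :=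
  (Kb_closed k n).inter (isClosed_eq ((sgc_cont k).comp matOf_cont) continuous_const)

lemma isHerm_iff {B : Bil n} : (matOf B).IsHermitian ↔ ∀ x y, B x y = B y x := by
  constructor
  · intro h x y
    rw [matOf_apply, matOf_apply, dotProduct_mulVec, ← mulVec_transpose, dotProduct_comm]
    have : (matOf B)ᵀ = matOf B := by
      have := h.eq
      rwa [conjTranspose_eq_transpose_of_trivial] at this
    rw [this]
  · intro h
    ext i j
    simp [matOf, h (bs i)]

lemma Kb_symm {B : Bil n} (h : B ∈ Kb k n) (x y : Euc n) : B x y = B y x :=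
  isHerm_iff.1 h.1 x y

lemma Kb_trace (hk : 1 ≤ k) (hkn : k ≤ n) {B : Bil n} (h : B ∈ Kb k n) : 1 ≤ tr B := by
  rw [tr_eq]; exact Km_trace hk hkn h

lemma Kb_big (hkn : k ≤ n) {B : Bil n} (hs : ∀ x y, B x y = B y x) {η T : ℝ} (hη : 0 < η)
    (h1 : ∀ v, η * ‖v‖^2 ≤ B v v) (hT : n * T ≤ tr B) (hT0 : 0 < T)
    (h2 : ∀ j < k, 1 ≤ T * η^j) : B ∈ Kb k n := by
  refine Km_big hkn (isHerm_iff.2 hs) hη (fun v => ?_) (by rwa [← tr_eq]) hT0 h2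
  have := h1 (WithLp.toLp 2 v)
  rw [matOf_apply, EuclideanSpace.real_norm_sq_eq] at this
  simpa [dotProduct, sq] using this

lemma Kb_comp {B : Bil n} (h : B ∈ Kb k n) (L : Euc n →ₗᵢ[ℝ] Euc n) :
    B.bilinearComp L.toContinuousLinearMap L.toContinuousLinearMap ∈ Kb k n := by
  set V : Mat n := Matrix.of fun i j => L (bs j) i with hV
  have h1 : star V * V = 1 := by
    ext i j
    have : ⟪L (bs j), L (bs i)⟫ = ⟪(bs j : Euc n), bs i⟫ := L.inner_map_map _ _
    rw [PiLp.inner_apply] at this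
    simp only [mul_apply, star_apply, hV, of_apply]
    simp [EuclideanSpace.inner_single_left] at this
    simp [this, Matrix.one_apply, eq_comm]
  have h2 : V * star V = 1 := mul_eq_one_comm.1 h1
  have h3 : matOf (B.bilinearComp L.toContinuousLinearMap L.toContinuousLinearMap) =
      star V * matOf B * V := by
    ext i j
    have : matOf (B.bilinearComp L.toContinuousLinearMap L.toContinuousLinearMap) i j
      = B (L (bs i)) (L (bs j)) := rfl
    rw [this, matOf_apply, mul_assoc]
    rw [mul_apply]
    simp [dotProduct, hV, mulVec, mul_apply]
  rw [mem_Kb]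
  rw [h3]
  exact Km_conj h h2

lemma Id_big (hkn : k ≤ n) : ∃ c ≥ (1:ℝ), c • IdB n ∈ Kb k n := by
  refine ⟨1, le_rfl, Kb_big hkn (fun x y => ?_) one_pos (fun v => ?_) (T := 1) ?_ one_pos (by simp)⟩
  · simp [real_inner_comm]
  · simp
  · simp

lemma Id_mem (hkn : k ≤ n) : IdB n ∈ Kb k n := by
  refine Kb_big hkn (fun x y => ?_) one_pos (fun v => ?_) (T := 1) ?_ one_pos (by simp)
  · simp [real_inner_comm]
  · simp
  · simp

lemma tr_ge {B : Bil n} {η : ℝ} (h1 : ∀ v, η * ‖v‖^2 ≤ B v v) : n * η ≤ tr B := by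
  rw [tr]
  have : ∑ i : Fin n, η ≤ ∑ i, B (bs i) (bs i) := Finset.sum_le_sum fun i _ => by simpa using h1 (bs i)
  simpa using this

/-- positive definite forms become large after scaling -/
lemma Kb_posdef (hkn : k ≤ n) {P : Bil n} (hs : ∀ x y, P x y = P y x) {η : ℝ} (hη : 0 < η)
    (h1 : ∀ v, η * ‖v‖^2 ≤ P v v) : ∃ s > (1:ℝ), s • P ∈ Kb k n := by
  refine ⟨1 + 1/η, by simp [hη], Kb_big hkn (by simp [hs]) (η := 1) one_pos (fun v => ?_) (T := 1) ?_ one_pos (by simp)⟩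
  · have := h1 v
    have h3 : ‖v‖^2 ≤ (1/η) * P v v := by rw [one_div, inv_mul_eq_div, le_div_iff₀ hη]; linarith
    have h4 : 0 ≤ P v v := le_trans (by positivity) this
    simp only [_root_.smul_apply, smul_eq_mul]
    linarith
  · have := tr_ge h1
    rw [tr_smul]
    have h3 : (n:ℝ) ≤ (1/η) * tr P := by rw [one_div, inv_mul_eq_div, le_div_iff₀ hη]; linarith
    have h4 : 0 ≤ tr P := le_trans (by positivity) this
    linarith

lemma Kb_add_pd (hkn : k ≤ n) {B P : Bil n} (hB : B ∈ Kb k n) (hs : ∀ x y, P x y = P y x) {η : ℝ} (hη : 0 < η)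
    (h1 : ∀ v, η * ‖v‖^2 ≤ P v v) : B + P ∈ Kb k n := by
  obtain ⟨s, hs1, hsP⟩ := Kb_posdef hkn hs hη h1
  have hs0 : 0 < s := by linarith
  have h1s : 1/s < 1 := by rw [div_lt_one hs0]; exact hs1
  have h2 : 0 < 1 - 1/s := by linarith
  have hB2 : (1/(1-1/s)) • B ∈ Kb k n := Kb_smul hkn hB (by rw [le_div_iff₀ h2]; have : 0 < 1/s := by positivity
                                                            linarith)
  have := Kb_convex hkn hB2 hsP h2.le (by positivity : 0 ≤ 1/s) (by ring)
  rw [smul_smul, smul_smul, mul_one_div_cancel h2.ne', one_div_mul_cancel hs0.ne', one_smul, one_smul] at this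
  exact this

lemma Kb_add_psd (hkn : k ≤ n) {B P : Bil n} (hB : B ∈ Kb k n) (hs : ∀ x y, P x y = P y x)
    (h1 : ∀ v, 0 ≤ P v v) : B + P ∈ Kb k n := by
  have hlim : Tendsto (fun η : ℝ => B + (P + η • IdB n)) (𝓝[>] 0) (𝓝 (B + (P + (0:ℝ) • IdB n))) := by
    apply Tendsto.mono_left _ nhdsWithin_le_nhds
    apply Continuous.tendsto
    fun_prop
  rw [zero_smul, add_zero] at hlim
  refine (Kb_closed k n).mem_of_tendsto hlim ?_
  filter_upwards [self_mem_nhdsWithin] with η hη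
  refine Kb_add_pd hkn hB (fun x y => ?_) hη (fun v => ?_)
  · simp [hs x y, real_inner_comm]
  · simpa using h1 v

lemma K0_Sup (hk : 1 ≤ k) (hkn : k ≤ n) {B : Bil n} (hB : B ∈ K0 k n) : Sup k B := by
  intro s hs B' hB' h
  refine Km_not_scaled hk hkn hB.2 hB' hs ?_
  rw [h, matOf_smul]

lemma Sup_of_tr (hk : 1 ≤ k) (hkn : k ≤ n) {B : Bil n} (hB : tr B ≤ 0) : Sup k B := by
  rintro s hs B' hB' rfl
  rw [tr_smul] at hB
  have := Kb_trace hk hkn hB'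
  nlinarith

lemma Sup_add (hkn : k ≤ n) {B : Bil n} (hB : B ∈ Kb k n) {C : Bil n} (hC : Sup k C)
    (hs : ∀ x y, C x y = C y x) {η : ℝ} (hη : 0 < η)
    (h : ∀ v, B v v + η * ‖v‖^2 ≤ C v v) : False := by
  -- C = B + η/2 I + P, with P pos def; so C ∈ s K
  have hI := Id_mem hkn (k := k) (n := n)
  have h1 : (1/(1+η)) • (B + η • IdB n) ∈ Kb k n := by
    have := Kb_convex hkn hB hI (a := 1/(1+η)) (b := η/(1+η)) (by positivity) (by positivity) (by field_simp)
    convert this using 1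
    rw [smul_add, smul_smul]; congr 2; field_simp
  have h2 : (1/(1+η)) • (B + η • IdB n) + (1/(1+η)) • (C - (B + η • IdB n)) ∈ Kb k n := by
    refine Kb_add_psd hkn h1 (fun x y => ?_) (fun v => ?_)
    · simp [hs x y, Kb_symm hB x y, real_inner_comm]
    · have := h v
      simp only [_root_.smul_apply, _root_.sub_apply, _root_.add_apply, IdB_apply, smul_eq_mul, real_inner_self_eq_norm_sq]
      apply mul_nonneg (by positivity)
      linarith
  refine hC (1+η) (by linarith) _ h2 ?_
  rw [← smul_add, smul_smul, mul_one_div_cancel (by positivity)]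
  simp

lemma Kb_shrink (hkn : k ≤ n) {S : Set (Bil n)} (hS : IsCompact S) (hSK : S ⊆ Kb k n) :
    ∃ η > (0:ℝ), ∀ B ∈ S, (2:ℝ) • (B - η • IdB n) ∈ Kb k n := by
  obtain ⟨η, h1, h2⟩ := Km_shrink hkn (hS.image matOf_cont) (by rintro _ ⟨B, hB, rfl⟩; exact hSK hB)
  refine ⟨η, h1, fun B hB => ?_⟩
  have := h2 _ ⟨B, hB, rfl⟩
  rw [mem_Kb]
  rwa [matOf_smul, matOf_sub, matOf_smul, matOf_Id]

lemma Kb_rank1 (hkn : k ≤ n) {η : ℝ} (hη : 0 < η) : ∃ b0 > (0:ℝ), ∀ ν : Euc n, ‖ν‖ = 1 → ∀ b ≥ b0,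
    η • IdB n + b • tens (innerSL ℝ ν) (innerSL ℝ ν) ∈ Kb k n := by
  -- T η^j ≥ 1 for all j < k
  set T := ∑ j ∈ Finset.range k, (1/η)^j + 1 with hT
  have hT0 : 0 < T := by positivity
  have hTj : ∀ j < k, 1 ≤ T * η^j := by
    intro j hj
    have h1 : (1/η)^j ≤ ∑ j ∈ Finset.range k, (1/η)^j :=
      Finset.single_le_sum (f := fun j => (1/η)^j) (fun _ _ => by positivity) (by simpa using hj)
    have h2 : (1/η)^j ≤ T := by linarith
    calc (1:ℝ) = (1/η)^j * η^j := by rw [← mul_pow, one_div_mul_cancel hη.ne', one_pow]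
      _ ≤ _ := by gcongr
  refine ⟨n * T + 1, by positivity, fun ν hν b hb => Kb_big hkn (fun x y => ?_) hη (fun v => ?_) (T := T) ?_ hT0 hTj⟩
  · simp only [_root_.smul_apply, _root_.add_apply, IdB_apply, smul_eq_mul, tens_apply, innerSL_apply_apply, real_inner_comm]; ring
  · have : 0 ≤ b := le_trans (by positivity) hb
    simp only [_root_.smul_apply, _root_.add_apply, IdB_apply, smul_eq_mul, real_inner_self_eq_norm_sq, tens_apply, innerSL_apply_apply]
    nlinarith [mul_self_nonneg ⟪ν, v⟫]
  · rw [tr_add, tr_smul, tr_smul, tr_tens_inner, hν, tr_Id]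
    have : 0 ≤ η * n := by positivity
    nlinarith

lemma cnk_pos (hkn : k ≤ n) : 0 < cnk n k := by
  unfold cnk
  apply Real.rpow_pos_of_pos
  exact_mod_cast Nat.choose_pos hkn

lemma Id_cnk (hk : 1 ≤ k) (hkn : k ≤ n) : (1 / cnk n k) • IdB n ∈ Kb k n := by
  set c := 1 / cnk n k with hc
  have hc0 : 0 < c := by have := cnk_pos hkn; positivity
  have h1 : matOf (c • IdB n) = Matrix.diagonal (fun _ => c) := by
    rw [matOf_smul, matOf_Id]
    ext i j; simp [diagonal_apply, Matrix.one_apply]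
  have he : ∀ j, e Finset.univ j (fun _ : Fin n => c) = n.choose j * c^j := by
    intro j
    rw [← esymmVec_eq, esymmVec]
    rw [Finset.sum_congr rfl (g := fun _ => c^j)]
    · simp
    · intro S hS
      rw [Finset.prod_const, (Finset.mem_powersetCard.1 hS).2]
  have hg : Gam k Finset.univ (fun _ : Fin n => c) := by
    intro j hj
    rw [he]
    have : 0 < (n.choose j : ℝ) := by exact_mod_cast Nat.choose_pos (hj.trans hkn)
    positivity
  have h3 : e Finset.univ k (fun _ : Fin n => c) = 1 := by
    rw [he, hc, one_div, inv_pow, cnk, ← Real.rpow_natCast, ← Real.rpow_mul (by positivity)]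
    rw [one_div_mul_cancel (by positivity), Real.rpow_one]
    have : 0 < (n.choose k : ℝ) := by exact_mod_cast Nat.choose_pos hkn
    field_simp
  rw [mem_Kb]
  rw [h1]
  refine ⟨by simp [Matrix.IsHermitian], fun j hj => ?_⟩
  rw [sgc_of_charpoly (charpoly_diagonal _) (hj.trans hkn)]
  exact ge_one_of hg h3.ge j hj

end KH


namespace KH
open Asymptotics

variable {n : ℕ}

def HasQ (f : Euc n → ℝ) (x : Euc n) (ℓ : Euc n →L[ℝ] ℝ) (B : Bil n) : Prop :=
  (fun h => f (x + h) - f x - ℓ h - (1/2) * B h h) =o[𝓝 0] fun h : Euc n => ‖h‖^2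

variable {f g : Euc n → ℝ} {x : Euc n} {ℓ ℓ' : Euc n →L[ℝ] ℝ} {B B' : Bil n}

lemma HasQ.add (hf : HasQ f x ℓ B) (hg : HasQ g x ℓ' B') :
    HasQ (fun y => f y + g y) x (ℓ + ℓ') (B + B') := by
  unfold HasQ at *
  refine (IsLittleO.add hf hg).congr_left fun h => ?_
  simp only [_root_.add_apply]; ring

lemma HasQ.smul (hf : HasQ f x ℓ B) (c : ℝ) : HasQ (fun y => c * f y) x (c • ℓ) (c • B) := by
  unfold HasQ at *
  refine (hf.const_mul_left c).congr_left fun h => ?_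
  simp only [_root_.smul_apply, smul_eq_mul]; ring

lemma HasQ.add_const (hf : HasQ f x ℓ B) (c : ℝ) : HasQ (fun y => f y + c) x ℓ B := by
  unfold HasQ at *
  refine hf.congr_left fun h => ?_
  ring

lemma HasQ.congr (hf : HasQ f x ℓ B) (h : f =ᶠ[𝓝 x] g) : HasQ g x ℓ B := by
  unfold HasQ at *
  refine hf.congr' ?_ EventuallyEq.rfl
  have h1 : Tendsto (fun h : Euc n => x + h) (𝓝 0) (𝓝 x) := by
    have : Continuous (fun h : Euc n => x + h) := by fun_prop
    simpa using this.tendsto 0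
  filter_upwards [h1.eventually h] with y hy
  rw [hy, h.self_of_nhds]

lemma HasQ_sq (p x : Euc n) : HasQ (fun y => ‖y - p‖^2) x ((2:ℝ) • innerSL ℝ (x - p)) ((2:ℝ) • IdB n) := by
  unfold HasQ
  refine (isLittleO_zero _ _).congr_left fun h => ?_
  have : x + h - p = (x - p) + h := by abel
  simp only [this, _root_.smul_apply, smul_eq_mul, IdB_apply, innerSL_apply_apply,
    norm_add_sq_real, real_inner_self_eq_norm_sq]
  ring

lemma HasQ_const (c : ℝ) (x : Euc n) : HasQ (fun _ => c) x 0 0 := by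
  unfold HasQ
  refine (isLittleO_zero _ _).congr_left fun h => ?_
  simp

lemma HasQ.affine {T : Euc n → Euc n} {L : Euc n →L[ℝ] Euc n} (hT : ∀ h, T (x + h) = T x + L h)
    (hf : HasQ f (T x) ℓ B) : HasQ (fun y => f (T y)) x (ℓ.comp L) (B.bilinearComp L L) := by
  unfold HasQ at *
  have h1 : Tendsto (fun h : Euc n => L h) (𝓝 0) (𝓝 0) := by simpa using L.continuous.tendsto 0
  have h2 := hf.comp_tendsto h1
  have h3 : (fun h : Euc n => ‖L h‖^2) =O[𝓝 0] fun h : Euc n => ‖h‖^2 := by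
    have : (fun h : Euc n => L h) =O[𝓝 0] fun h : Euc n => h := L.isBigO_id _
    exact this.norm_norm.pow 2
  refine (h2.trans_isBigO h3).congr_left fun h => ?_
  simp [hT]

lemma HasQ.isBigO (hf : HasQ f x ℓ B) : (fun h => f (x+h) - f x - ℓ h) =O[𝓝 0] fun h : Euc n => ‖h‖^2 := by
  have h1 := IsLittleO.isBigO hf
  have h2 : (fun h : Euc n => (1/2) * B h h) =O[𝓝 0] fun h : Euc n => ‖h‖^2 := by
    refine IsBigO.of_bound (‖B‖) (Eventually.of_forall fun h => ?_)
    have := B.le_opNorm₂ h h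
    rw [norm_mul]; simp only [norm_pow, norm_norm]
    have h3 : ‖(1/2:ℝ)‖ ≤ 1 := by norm_num
    nlinarith [norm_nonneg (B h h), norm_nonneg B]
  refine (h1.add h2).congr_left fun h => ?_
  ring

lemma HasQ.isBigO1 (hf : HasQ f x ℓ B) : (fun h => f (x+h) - f x) =O[𝓝 0] fun h : Euc n => ‖h‖ := by
  have h1 := hf.isBigO
  have h2 : (fun h : Euc n => ‖h‖^2) =O[𝓝 0] fun h : Euc n => ‖h‖ := by
    refine IsBigO.of_bound 1 ?_
    filter_upwards [Metric.ball_mem_nhds (0 : Euc n) one_pos] with h hh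
    have : ‖h‖ < 1 := by simpa using hh
    simp only [norm_pow, norm_norm]
    nlinarith [norm_nonneg h]
  have h3 : (fun h : Euc n => ℓ h) =O[𝓝 0] fun h : Euc n => ‖h‖ := (ℓ.isBigO_id _).norm_right
  refine ((h1.trans h2).add h3).congr_left fun h => ?_
  ring

lemma exp_exp : (fun s : ℝ => Real.exp s - 1 - s - (1/2) * s^2) =o[𝓝 0] fun s : ℝ => s^2 := by
  have h : (fun s : ℝ => Real.exp s - 1 - s - (1/2) * s^2) =O[𝓝 0] fun s : ℝ => s^3 := by
    refine IsBigO.of_bound 1 ?_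
    filter_upwards [Metric.ball_mem_nhds (0 : ℝ) one_pos] with s hs
    have hs1 : |s| ≤ 1 := by have := mem_ball_zero_iff.1 hs; rw [Real.norm_eq_abs] at this; exact this.le
    have := Real.exp_bound hs1 (n := 3) (by norm_num)
    simp [Finset.sum_range_succ] at this
    rw [Real.norm_eq_abs, norm_pow, Real.norm_eq_abs]
    have h3 : 0 ≤ |s|^3 := by positivity
    have h4 : Real.exp s - 1 - s - 1/2*s^2 = Real.exp s - (1 + s + s^2/2) := by ring
    rw [h4]
    norm_num [Nat.factorial] at this
    linarith
  refine h.trans_isLittleO ?_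
  exact isLittleO_pow_pow (by norm_num)

lemma HasQ.exp (hf : HasQ f x ℓ B) :
    HasQ (fun y => Real.exp (f y)) x (Real.exp (f x) • ℓ) (Real.exp (f x) • (B + tens ℓ ℓ)) := by
  have h1 := hf.isBigO
  have h2 := hf.isBigO1
  have hs0 : Tendsto (fun h => f (x+h) - f x) (𝓝 0) (𝓝 0) := by
    refine h2.trans_tendsto ?_
    simpa using (continuous_norm (E := Euc n)).tendsto 0
  have a1 : (fun h => Real.exp (f (x+h) - f x) - 1 - (f (x+h) - f x) - (1/2) * (f (x+h) - f x)^2) =o[𝓝 0]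
      fun h : Euc n => ‖h‖^2 := by
    have := exp_exp.comp_tendsto hs0
    exact this.trans_isBigO (h2.pow 2)
  have h3 : (fun h : Euc n => ℓ h) =O[𝓝 0] fun h : Euc n => ‖h‖ := (ℓ.isBigO_id _).norm_right
  have a2 : (fun h : Euc n => (f (x+h) - f x - ℓ h) * (f (x+h) - f x + ℓ h)) =o[𝓝 0] fun h : Euc n => ‖h‖^2 := by
    have := h1.mul (h2.add h3)
    refine this.trans_isLittleO ?_
    have h5 : (fun h : Euc n => ‖h‖) =o[𝓝 0] fun _ : Euc n => (1:ℝ) := by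
      rw [isLittleO_one_iff]
      simpa using (continuous_norm (E := Euc n)).tendsto 0
    simpa using (isBigO_refl (fun h : Euc n => ‖h‖^2) (𝓝 0)).mul_isLittleO h5
  unfold HasQ at *
  have := ((a1.add hf).add (a2.const_mul_left (1/2))).const_mul_left (Real.exp (f x))
  refine this.congr_left fun h => ?_
  simp only [_root_.smul_apply, _root_.add_apply, tens_apply, smul_eq_mul]
  have : Real.exp (f (x+h)) = Real.exp (f x) * Real.exp (f (x+h) - f x) := by
    rw [← Real.exp_add]; congr 1; ring
  rw [this]
  ring

lemma HasQ_of_contDiffAt (hf : ContDiffAt ℝ 2 f x) :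
    HasQ f x (fderiv ℝ f x) (fderiv ℝ (fderiv ℝ f) x) := by
  have hsym : IsSymmSndFDerivAt ℝ f x := hf.isSymmSndFDerivAt (by simp)
  have h1 : ∀ᶠ y in 𝓝 x, DifferentiableAt ℝ f y := by
    have := hf.eventually (by simp)
    filter_upwards [this] with y hy using hy.differentiableAt (by norm_num)
  have hd : DifferentiableAt ℝ (fderiv ℝ f) x :=
    (hf.fderiv_right (m := 1) (by norm_num)).differentiableAt (by norm_num)
  have h2 := hd.hasFDerivAt.isLittleO
  set B := fderiv ℝ (fderiv ℝ f) x
  unfold HasQ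
  rw [isLittleO_iff]
  intro c hc
  have h3 := (isLittleO_iff.1 h2) hc
  obtain ⟨r, hr, hball⟩ := Metric.eventually_nhds_iff_ball.1 (h1.and h3)
  filter_upwards [Metric.ball_mem_nhds (0 : Euc n) hr] with h hh
  have hhr : ‖h‖ < r := by simpa using hh
  -- mean value
  set G : Euc n → ℝ := fun z => f (x + z) - f x - fderiv ℝ f x z - (1/2) * B z z
  have hG : ∀ z ∈ closedBall (0 : Euc n) ‖h‖, HasFDerivWithinAt G
      (fderiv ℝ f (x + z) - fderiv ℝ f x - B z) (closedBall (0 : Euc n) ‖h‖) z := by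
    intro z hz
    have hz' : x + z ∈ ball x r := by
      have : ‖z‖ ≤ ‖h‖ := by simpa using hz
      simp; linarith
    apply HasFDerivAt.hasFDerivWithinAt
    have e1 : HasFDerivAt (fun z => f (x + z)) (fderiv ℝ f (x + z)) z := by
      have := (hball _ hz').1.hasFDerivAt
      exact (hasFDerivAt_comp_add_left x).2 this
    have e2 : HasFDerivAt (fun z : Euc n => (1/2) * B z z) (B z) z := by
      have : HasFDerivAt (fun z : Euc n => B z z) _ z := B.hasFDerivAt.clm_apply (hasFDerivAt_id z)
      refine (this.const_mul (1/2)).congr_fderiv ?_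
      ext v
      have := hsym.eq v z
      simp
      rw [this]; ring
    exact ((e1.sub_const _).sub (fderiv ℝ f x).hasFDerivAt).sub e2
  have hbd : ∀ z ∈ closedBall (0 : Euc n) ‖h‖, ‖fderiv ℝ f (x + z) - fderiv ℝ f x - B z‖ ≤ c * ‖h‖ := by
    intro z hz
    have hzh : ‖z‖ ≤ ‖h‖ := by simpa using hz
    have hz' : x + z ∈ ball x r := by
      simp; linarith
    have := (hball _ hz').2
    simp only [add_sub_cancel_left] at this
    refine this.trans ?_
    gcongr
  have := (convex_closedBall (0 : Euc n) ‖h‖).norm_image_sub_le_of_norm_hasFDerivWithin_le hG hbd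
    (x := 0) (y := h) (by simp) (by simp)
  have hG0 : G 0 = 0 := by simp [G]
  rw [hG0, sub_zero, sub_zero] at this
  simp only [norm_pow, norm_norm]
  calc ‖G h‖ ≤ c * ‖h‖ * ‖h‖ := this
    _ = _ := by ring

lemma HasQ.locmax (hf : HasQ f x ℓ B) (hm : IsLocalMax f x) (v : Euc n) : B v v ≤ 0 := by
  by_contra hcon
  push Not at hcon
  have hv : v ≠ 0 := by rintro rfl; simp at hcon
  have hv0 : 0 < ‖v‖^2 := by positivity
  set c := B v v / (4 * ‖v‖^2) with hc
  have hc0 : 0 < c := by positivity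
  have h1 := (isLittleO_iff.1 hf) hc0
  have hT : Tendsto (fun h : Euc n => x + h) (𝓝 0) (𝓝 x) := by
    have : Continuous (fun h : Euc n => x + h) := by fun_prop
    simpa using this.tendsto 0
  have h2 := hT.eventually hm
  have h3 := h1.and h2
  have ht1 : Tendsto (fun t : ℝ => t • v) (𝓝[>] 0) (𝓝 0) := by
    apply Tendsto.mono_left _ nhdsWithin_le_nhds
    have : Continuous (fun t : ℝ => t • v) := by fun_prop
    simpa using this.tendsto 0
  have ht2 : Tendsto (fun t : ℝ => -(t • v)) (𝓝[>] 0) (𝓝 0) := by simpa using ht1.neg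
  obtain ⟨t, ⟨⟨a1, a2⟩, b1, b2⟩, ht⟩ := (((ht1.eventually h3).and (ht2.eventually h3)).and self_mem_nhdsWithin).exists
  have ht0 : 0 < t := ht
  simp only [norm_pow, norm_norm, norm_neg, Real.norm_eq_abs] at a1 b1
  rw [abs_le] at a1 b1
  simp only [map_neg, _root_.neg_apply, neg_neg, map_smul, _root_.smul_apply, smul_eq_mul, norm_smul, mul_pow, Real.norm_eq_abs, sq_abs] at a1 b1
  have h5 : c * (t^2 * ‖v‖^2) = t^2 * (B v v) / 4 := by rw [hc]; field_simp
  rw [h5] at a1 b1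
  have : 0 < t^2 * B v v := by positivity
  nlinarith [a1.1, b1.1]

variable {k : ℕ}

def SubAt (k : ℕ) (f : Euc n → ℝ) (x : Euc n) : Prop := ∃ ℓ B, HasQ f x ℓ B ∧ B ∈ Kb k n

def SupAt (k : ℕ) (f : Euc n → ℝ) (x : Euc n) : Prop :=
  ∃ ℓ B, HasQ f x ℓ B ∧ (∀ y z, B y z = B z y) ∧ Sup k B

lemma comparison (hkn : k ≤ n) {D : Set (Euc n)} (hD : IsOpen D) (hb : IsBounded D)
    (hf : ContinuousOn f (closure D)) (hg : ContinuousOn g (closure D))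
    (hfr : ∀ x ∈ closure D, x ∉ D → f x ≤ g x) (h1 : ∀ x ∈ D, SubAt k f x) (h2 : ∀ x ∈ D, SupAt k g x) :
    ∀ x ∈ closure D, f x ≤ g x := by
  intro x0 hx0
  by_contra hcon
  push Not at hcon
  obtain ⟨R, hR⟩ := hb.closure.exists_norm_le
  have hcomp : IsCompact (closure D) := hb.isCompact_closure
  set η := (f x0 - g x0) / (2 * (R^2 + 1)) with hη
  have hd : 0 < f x0 - g x0 := by linarith
  have hη0 : 0 < η := by positivity
  have hηR : η * R^2 < f x0 - g x0 := by
    rw [hη, div_mul_eq_mul_div, div_lt_iff₀ (by positivity)]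
    nlinarith [sq_nonneg R]
  obtain ⟨y, hy, hmax⟩ := hcomp.exists_isMaxOn ⟨x0, hx0⟩
    (f := fun y => f y + (-1) * g y + η * ‖y - 0‖^2) (by fun_prop)
  have hyx := hmax hx0
  simp only [mem_ofPred_eq] at hyx
  have hyD : y ∈ D := by
    by_contra hyD
    have h3 := hfr y hy hyD
    have h4 := hR y hy
    have h5 : ‖y - 0‖^2 ≤ R^2 := by rw [sub_zero]; gcongr
    have h6 : 0 ≤ η * ‖x0 - 0‖^2 := by positivity
    nlinarith
  obtain ⟨l1, B1, q1, k1⟩ := h1 y hyD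
  obtain ⟨l2, B2, q2, s2, k2⟩ := h2 y hyD
  have hq := (q1.add (q2.smul (-1))).add ((HasQ_sq 0 y).smul η)
  have hlm : IsLocalMax (fun y => f y + (-1) * g y + η * ‖y - 0‖^2) y := by
    filter_upwards [hD.mem_nhds hyD] with z hz using hmax (subset_closure hz)
  refine Sup_add hkn k1 k2 s2 (η := 2*η) (by positivity) fun v => ?_
  have := hq.locmax hlm v
  simp only [_root_.add_apply, _root_.smul_apply, smul_eq_mul, IdB_apply, real_inner_self_eq_norm_sq] at this
  linarith

end KH


namespace KH
variable {n k : ℕ}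

structure Reg (k : ℕ) (Ω' S : Set (Euc n)) (w : Euc n → ℝ) (G : Euc n → Euc n →L[ℝ] ℝ)
    (H : Euc n → Bil n) : Prop where
  hG : ∀ x ∈ S, HasFDerivWithinAt w (G x) S x
  hH : ∀ x ∈ S, HasFDerivWithinAt G (H x) S x
  cG : ContinuousOn G S
  cH : ContinuousOn H S
  hK : ∀ x ∈ S, H x ∈ K0 k n
  hQ : ∀ x ∈ Ω', HasQ w x (G x) (H x)

lemma hess_eq {S : Set (Euc n)} (hu : UniqueDiffOn ℝ S) {w : Euc n → ℝ}
    {x : Euc n} (hx : x ∈ S) :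
    hessianWithin w S x = matOf (fderivWithin ℝ (fderivWithin ℝ w S) S x) := by
  ext i j
  rw [hessianWithin, iteratedFDerivWithin_two_apply w hu hx]
  rfl

lemma mk_reg (hkn : k ≤ n) {S Ω' : Set (Euc n)} (ho : IsOpen Ω') (hsub : Ω' ⊆ S) (hcl : S ⊆ closure Ω')
    (hu : UniqueDiffOn ℝ S) {w : Euc n → ℝ} (hw : ContDiffOn ℝ 2 w S)
    (hK : ∀ x ∈ Ω', InGardingCone k (hessianWithin w S x) ∧ sigmaMat k (hessianWithin w S x) = 1) :
    Reg k Ω' S w (fderivWithin ℝ w S) (fderivWithin ℝ (fderivWithin ℝ w S) S) := by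
  have h1 : ContDiffOn ℝ 1 (fderivWithin ℝ w S) S := hw.fderivWithin hu (by norm_num)
  have h2 : ContDiffOn ℝ 0 (fderivWithin ℝ (fderivWithin ℝ w S) S) S := h1.fderivWithin hu (by norm_num)
  have hc2 := h2.continuousOn
  refine ⟨fun x hx => ((hw x hx).differentiableWithinAt (by norm_num)).hasFDerivWithinAt,
    fun x hx => ((h1 x hx).differentiableWithinAt (by norm_num)).hasFDerivWithinAt, h1.continuousOn, hc2, ?_, ?_⟩
  · intro x hx
    have h3 := ((hc2 x hx).mono hsub).mem_closure_image (hcl hx)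
    refine closure_minimal ?_ (K0_closed k n) h3
    rintro _ ⟨y, hy, rfl⟩
    have := Km_of_garding hkn (hK y hy).1 (hK y hy).2
    rw [hess_eq hu (hsub hy)] at this
    exact this
  · intro x hx
    have hn : S ∈ 𝓝 x := mem_of_superset (ho.mem_nhds hx) hsub
    have h3 := HasQ_of_contDiffAt (hw.contDiffAt hn)
    have h4 : fderivWithin ℝ w S =ᶠ[𝓝 x] fderiv ℝ w := by
      filter_upwards [ho.mem_nhds hx] with y hy
      exact fderivWithin_of_mem_nhds (mem_of_superset (ho.mem_nhds hy) hsub)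
    rw [fderivWithin_of_mem_nhds hn, fderivWithin_of_mem_nhds hn, h4.fderiv_eq]
    exact h3

structure Ctx (n k : ℕ) where
  hk : 1 ≤ k
  hkn : k ≤ n
  Ω : Set (Euc n)
  ho : IsOpen Ω
  hc : Convex ℝ Ω
  hb : IsBounded Ω
  ρ : Euc n → ℝ
  hρ : ContDiff ℝ (⊤ : ℕ∞) ρ
  hΩρ : Ω = {x | ρ x < 0}
  hdρ : ∀ x ∈ frontier Ω, fderiv ℝ ρ x ≠ 0
  ε₀ : ℝ
  hε₀ : 0 < ε₀
  hball : closedBall (0 : Euc n) ε₀ ⊆ Ω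
  ψ : Euc n → ℝ
  G : Euc n → Euc n →L[ℝ] ℝ
  H : Euc n → Bil n
  reg : Reg k Ω (closure Ω) ψ G H
  LH : ℝ
  hLH : ∀ x ∈ closure Ω, ∀ y ∈ closure Ω, ‖H y - H x‖ ≤ LH * ‖y - x‖
  hψ0 : ∀ x ∈ frontier Ω, ψ x = 0
  M : ℝ
  hM : 0 < M
  hMψ : ∀ x ∈ closure Ω, -ψ x ≤ M
  hMsub : ∀ ε ∈ Ioo (0:ℝ) ε₀, ∀ x ∈ frontier Ω, underSol k 0 ε M x ≤ 0

def Ctx.U (c : Ctx n k) (ε : ℝ) : Set (Euc n) := c.Ω \ closedBall 0 ε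
def Ctx.V (c : Ctx n k) (ε : ℝ) : Set (Euc n) := closure c.Ω \ closedBall 0 ε

structure Ctx.USol (c : Ctx n k) (ε : ℝ) (u : Euc n → ℝ) (Gu : Euc n → Euc n →L[ℝ] ℝ)
    (Hu : Euc n → Bil n) : Prop where
  hε : ε ∈ Ioo (0:ℝ) c.ε₀
  reg : Reg k (c.U ε) (c.V ε) u Gu Hu
  cu : ContinuousOn u (closure (c.U ε))
  h0 : ∀ x ∈ frontier c.Ω, u x = 0
  hM : ∀ x ∈ sphere (0 : Euc n) ε, u x = - c.M

lemma uniqueDiffOn_closure {Ω : Set (Euc n)} (ho : IsOpen Ω) (hc : Convex ℝ Ω) (hne : Ω.Nonempty) :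
    UniqueDiffOn ℝ (closure Ω) := by
  apply uniqueDiffOn_convex hc.closure
  exact hne.mono (interior_maximal subset_closure ho)

lemma mk_USol (c : Ctx n k) {ε : ℝ} (hε : ε ∈ Ioo (0:ℝ) c.ε₀) {u : Euc n → ℝ}
    (hu : IsSol k c.Ω 0 ε c.M u) : ∃ Gu Hu, c.USol ε u Gu Hu ∧ ∀ p ∈ frontier c.Ω,
      hessianWithin u (ringSet c.Ω 0 ε) p = matOf (Hu p) := by
  obtain ⟨h1, h2, h3, h4⟩ := hu
  have hne : c.Ω.Nonempty := ⟨0, c.hball (by simp [c.hε₀.le])⟩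
  have hud := uniqueDiffOn_closure c.ho c.hc hne
  have hVeq : c.V ε = ringSet c.Ω 0 ε ∩ (closedBall (0 : Euc n) ε)ᶜ := by
    unfold Ctx.V ringSet
    apply Subset.antisymm
    · rintro x ⟨hx, hx2⟩
      refine ⟨?_, hx2⟩
      have := (isClosed_closedBall (x := (0 : Euc n)) (ε := ε)).isOpen_compl.inter_closure (t := c.Ω) ⟨hx2, hx⟩
      rwa [inter_comm] at this
    · rintro x ⟨hx, hx2⟩
      exact ⟨closure_mono sdiff_subset hx, hx2⟩
  have hVud : UniqueDiffOn ℝ (c.V ε) := hud.inter isClosed_closedBall.isOpen_compl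
  have hess : ∀ x ∈ c.V ε, hessianWithin u (ringSet c.Ω 0 ε) x = hessianWithin u (c.V ε) x := by
    intro x hx
    ext i j
    rw [hessianWithin, hessianWithin, hVeq, iteratedFDerivWithin_inter_open isClosed_closedBall.isOpen_compl hx.2]
  have hUo : IsOpen (c.U ε) := c.ho.sdiff isClosed_closedBall
  have hUV : c.U ε ⊆ c.V ε := sdiff_subset_sdiff_left subset_closure
  have hreg := mk_reg (k := k) c.hkn (S := c.V ε) (Ω' := c.U ε) hUo hUV (by rw [hVeq]; exact inter_subset_left)
    hVud (w := u) (h1.mono (by rw [hVeq]; exact inter_subset_left)) (by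
      intro x hx
      rw [← hess x (hUV hx)]
      exact h2 x hx)
  refine ⟨_, _, ⟨hε, hreg, h1.continuousOn, h3, h4⟩, ?_⟩
  intro p hp
  have hpV : p ∈ c.V ε := by
    refine ⟨frontier_subset_closure hp, fun hp2 => ?_⟩
    have : p ∈ c.Ω := c.hball (closedBall_subset_closedBall hε.2.le hp2)
    rw [frontier, c.ho.interior_eq] at hp
    exact hp.2 this
  rw [hess p hpV, hess_eq hVud hpV]

end KH


namespace KH
variable {n k : ℕ}

lemma lin_prop {E : Type*} [NormedAddCommGroup E] [NormedSpace ℝ E] {a b : E →L[ℝ] ℝ} {c : ℝ} (ha : a ≠ 0)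
    (h : ∀ v, a v < 0 → b v ≤ c * a v) : ∃ r ≥ c, b = r • a := by
  obtain ⟨v0, hv0⟩ : ∃ v, a v = -1 := by
    obtain ⟨w, hw⟩ : ∃ w, a w ≠ 0 := by
      by_contra hcon
      push Not at hcon
      exact ha (by ext v; simpa using hcon v)
    exact ⟨(-1/a w) • w, by simp [hw]⟩
  have hker : ∀ v, a v = 0 → b v ≤ 0 := by
    intro v hv
    have h1 : ∀ᶠ s in 𝓝[>] (0:ℝ), b v + s * b v0 ≤ c * (-s) := by
      filter_upwards [self_mem_nhdsWithin] with s hs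
      have hs' : 0 < s := hs
      have := h (v + s • v0) (by simp [hv, hv0, hs'])
      simpa [hv, hv0] using this
    have h2 : Tendsto (fun s : ℝ => b v + s * b v0) (𝓝[>] 0) (𝓝 (b v + 0 * b v0)) :=
      Tendsto.mono_left (Continuous.tendsto (by fun_prop) 0) nhdsWithin_le_nhds
    have h3 : Tendsto (fun s : ℝ => c * (-s)) (𝓝[>] 0) (𝓝 (c * (-0))) :=
      Tendsto.mono_left (Continuous.tendsto (by fun_prop) 0) nhdsWithin_le_nhds
    have := le_of_tendsto_of_tendsto h2 h3 h1
    simpa using this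
  refine ⟨-b v0, ?_, ?_⟩
  · have := h v0 (by rw [hv0]; norm_num)
    rw [hv0] at this; linarith
  · ext v
    have h1 := hker (v + (a v) • v0) (by simp [hv0])
    have h2 := hker (-(v + (a v) • v0)) (by simp [hv0])
    simp at h1 h2 ⊢
    linarith

lemma SupAt_of {f : Euc n → ℝ} {x : Euc n} {ℓ : Euc n →L[ℝ] ℝ} {B : Bil n} (hk : 1 ≤ k) (hkn : k ≤ n)
    (h : HasQ f x ℓ B) (hs : ∀ y z, B y z = B z y) (ht : tr B ≤ 0) : SupAt k f x :=
  ⟨ℓ, B, h, hs, Sup_of_tr hk hkn ht⟩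

lemma SupAt_const (hk : 1 ≤ k) (hkn : k ≤ n) (a : ℝ) (x : Euc n) : SupAt k (fun _ => a) x :=
  SupAt_of hk hkn (HasQ_const a x) (by simp) (by simp [tr])

namespace Ctx
variable (c : Ctx n k)

lemma ne : c.Ω.Nonempty := ⟨0, c.hball (by simp [c.hε₀.le])⟩

lemma fr_not {p : Euc n} (hp : p ∈ frontier c.Ω) : p ∉ c.Ω := by
  rw [frontier, c.ho.interior_eq] at hp
  exact hp.2

lemma fr_of {p : Euc n} (hp : p ∈ closure c.Ω) (hp2 : p ∉ c.Ω) : p ∈ frontier c.Ω := by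
  rw [frontier, c.ho.interior_eq]; exact ⟨hp, hp2⟩

lemma cl_compact : IsCompact (closure c.Ω) := c.hb.isCompact_closure

lemma fr_compact : IsCompact (frontier c.Ω) :=
  c.cl_compact.of_isClosed_subset isClosed_frontier frontier_subset_closure

lemma ρ_fr {p : Euc n} (hp : p ∈ frontier c.Ω) : c.ρ p = 0 := by
  apply le_antisymm
  · have h1 : closure c.Ω ⊆ {x | c.ρ x ≤ 0} := by
      apply closure_minimal
      · rw [c.hΩρ]; intro x hx; rw [mem_ofPred_eq] at hx ⊢; exact hx.le
      · exact isClosed_le c.hρ.continuous continuous_const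
    exact h1 (frontier_subset_closure hp)
  · have := c.fr_not hp
    rw [c.hΩρ] at this
    simpa using this

lemma ψ_cont : ContinuousOn c.ψ (closure c.Ω) := fun x hx => (c.reg.hG x hx).continuousWithinAt

lemma shrink : ∃ η > (0:ℝ), ∀ x ∈ closure c.Ω, (2:ℝ) • (c.H x - η • IdB n) ∈ Kb k n := by
  obtain ⟨η, h1, h2⟩ := Kb_shrink c.hkn (c.cl_compact.image_of_continuousOn c.reg.cH)
    (by rintro _ ⟨x, hx, rfl⟩; exact K0_sub (c.reg.hK x hx))
  exact ⟨η, h1, fun x hx => h2 _ ⟨x, hx, rfl⟩⟩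

lemma ψ_bd : ∃ η > (0:ℝ), ∀ x0 ∈ c.Ω, ∀ r > 0, ball x0 r ⊆ c.Ω → ∀ x ∈ closure c.Ω,
    2 * c.ψ x ≤ η * (‖x - x0‖^2 - r^2) := by
  obtain ⟨η, hη, hsh⟩ := c.shrink
  refine ⟨η, hη, fun x0 hx0 r hr hball x hx => ?_⟩
  have := comparison c.hkn (f := fun y => 2 * c.ψ y + (-η) * ‖y - x0‖^2) (g := fun _ => - η * r^2) c.ho c.hb
    (by have := c.ψ_cont; fun_prop) (by fun_prop) ?_ ?_ ?_ x hx
  · linarith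
  · intro y hy hy2
    rw [c.hψ0 y (c.fr_of hy hy2)]
    have h1 : r ≤ ‖y - x0‖ := by
      by_contra hcon
      push Not at hcon
      exact hy2 (hball (by rwa [mem_ball_iff_norm]))
    have : r^2 ≤ ‖y - x0‖^2 := by gcongr
    nlinarith
  · intro y hy
    refine ⟨_, _, ((c.reg.hQ y hy).smul 2).add ((HasQ_sq x0 y).smul (-η)), ?_⟩
    have := hsh y (subset_closure hy)
    convert this using 1
    module
  · intro y hy
    exact SupAt_const c.hk c.hkn _ _

lemma ψ_neg {x : Euc n} (hx : x ∈ c.Ω) : c.ψ x < 0 := by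
  obtain ⟨η, hη, h⟩ := c.ψ_bd
  obtain ⟨r, hr, hb⟩ := Metric.isOpen_iff.1 c.ho x hx
  have := h x hx r hr hb x (subset_closure hx)
  simp at this
  have : 0 < η * r^2 := by positivity
  linarith

lemma ψ_nonpos {x : Euc n} (hx : x ∈ closure c.Ω) : c.ψ x ≤ 0 := by
  by_cases h : x ∈ c.Ω
  · exact (c.ψ_neg h).le
  · exact (c.hψ0 x (c.fr_of hx h)).le

lemma dρ_bd : ∃ m > (0:ℝ), ∀ x ∈ closure c.Ω, -m < c.ρ x → m ≤ ‖fderiv ℝ c.ρ x‖ := by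
  have hc1 : Continuous (fderiv ℝ c.ρ) := c.hρ.continuous_fderiv (by simp)
  have hcont : Continuous fun x => max ‖fderiv ℝ c.ρ x‖ (- c.ρ x) := hc1.norm.max c.hρ.continuous.neg
  obtain ⟨x, hx, hmin⟩ := c.cl_compact.exists_isMinOn c.ne.closure hcont.continuousOn
  refine ⟨max ‖fderiv ℝ c.ρ x‖ (- c.ρ x), ?_, ?_⟩
  · by_cases h : x ∈ c.Ω
    · rw [c.hΩρ] at h
      have h2 : c.ρ x < 0 := h
      exact lt_max_of_lt_right (by linarith)
    · exact lt_max_of_lt_left (norm_pos_iff.2 (c.hdρ x (c.fr_of hx h)))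
  · intro y hy h1
    have h2 := hmin hy
    simp only [mem_ofPred_eq] at h2
    rcases le_max_iff.1 h2 with h3 | h3
    · exact h3
    · linarith

lemma hopf0 : ∃ c' > (0:ℝ), ∃ δ > (0:ℝ), ∀ x ∈ closure c.Ω, -δ < c.ρ x → c.ψ x ≤ c' * c.ρ x := by
  obtain ⟨m, hm, hmd⟩ := c.dρ_bd
  have hρ2 : ContDiff ℝ 2 c.ρ := contDiff_infty.1 c.hρ 2
  have hc1 : Continuous (fderiv ℝ c.ρ) := c.hρ.continuous_fderiv (by simp)
  have hc2 : Continuous (fderiv ℝ (fderiv ℝ c.ρ)) :=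
    (hρ2.fderiv_right (m := 1) (by norm_num)).continuous_fderiv (by norm_num)
  have htr : Continuous fun x => tr (fderiv ℝ (fderiv ℝ c.ρ) x) := by
    unfold tr; fun_prop
  obtain ⟨T, hT⟩ := c.cl_compact.exists_bound_of_continuousOn htr.continuousOn
  -- K
  set K := |T| / m^2 + 1 with hK
  have hK0 : 0 < K := by positivity
  have hKm : |T| ≤ K * m^2 := by rw [hK, add_mul, div_mul_cancel₀ _ (by positivity)]; nlinarith
  set δ := m / 2 with hδ
  have hδ0 : 0 < δ := by positivity
  -- c1
  have hcp : IsCompact (closure c.Ω ∩ {x | c.ρ x ≤ -δ}) :=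
    c.cl_compact.inter_right (isClosed_le c.hρ.continuous continuous_const)
  obtain ⟨c1, hc10, hc1b⟩ : ∃ c1 > (0:ℝ), ∀ x ∈ closure c.Ω ∩ {x | c.ρ x ≤ -δ}, c.ψ x ≤ -c1 := by
    rcases (closure c.Ω ∩ {x | c.ρ x ≤ -δ}).eq_empty_or_nonempty with h | h
    · exact ⟨1, one_pos, by rw [h]; simp⟩
    · obtain ⟨x, hx, hmax⟩ := hcp.exists_isMaxOn h (c.ψ_cont.mono inter_subset_left)
      refine ⟨-c.ψ x, ?_, fun y hy => by simpa using hmax hy⟩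
      have : x ∈ c.Ω := by
        rw [c.hΩρ]; have := hx.2; simp at this ⊢; linarith
      linarith [c.ψ_neg this]
  set a := c1 / Real.exp (K * δ) with ha
  have ha0 : 0 < a := by positivity
  set D := c.Ω ∩ {x | -δ < c.ρ x} with hD
  have hDo : IsOpen D := c.ho.inter (isOpen_lt continuous_const c.hρ.continuous)
  have hDcl : closure D ⊆ closure c.Ω := closure_mono inter_subset_left
  have hcmp := comparison c.hkn (f := c.ψ) (g := fun x => (-a) * Real.exp ((-K) * c.ρ x) + a) hDo
    (c.hb.subset inter_subset_left) (c.ψ_cont.mono hDcl)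
    (by have := c.hρ.continuous; fun_prop) ?_ ?_ ?_
  · refine ⟨a * K, by positivity, δ, hδ0, fun x hx hxδ => ?_⟩
    by_cases hxΩ : x ∈ c.Ω
    · have h1 := hcmp x (subset_closure ⟨hxΩ, hxδ⟩)
      have h2 := Real.add_one_le_exp (-K * c.ρ x)
      nlinarith
    · have hf := c.fr_of hx hxΩ
      rw [c.hψ0 x hf, c.ρ_fr hf]; simp
  · intro x hx hxD
    by_cases hxΩ : x ∈ c.Ω
    · have h1 : c.ρ x ≤ -δ := by
        by_contra hcon
        push Not at hcon
        exact hxD ⟨hxΩ, hcon⟩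
      have h1' : -δ ≤ c.ρ x := by
        have : closure D ⊆ {x | -δ ≤ c.ρ x} := closure_minimal (fun y hy => by have := hy.2; rw [mem_ofPred_eq] at this ⊢; exact this.le)
          (isClosed_le continuous_const c.hρ.continuous)
        exact this hx
      have h2 := hc1b x ⟨subset_closure hxΩ, h1⟩
      have h3 : c.ρ x = -δ := le_antisymm h1 h1'
      simp only [h3, neg_mul_neg]
      have : a * Real.exp (K * δ) = c1 := by rw [ha]; field_simp
      linarith
    · have hf := c.fr_of (hDcl hx) hxΩ
      rw [c.hψ0 x hf, c.ρ_fr hf]; simp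
  · intro x hx
    exact ⟨_, _, c.reg.hQ x hx.1, K0_sub (c.reg.hK x (subset_closure hx.1))⟩
  · intro x hx
    have q1 := (((HasQ_of_contDiffAt (hρ2.contDiffAt (x := x))).smul (-K)).exp.smul (-a)).add_const a
    have hsym : IsSymmSndFDerivAt ℝ c.ρ x := (hρ2.contDiffAt (x := x)).isSymmSndFDerivAt (by simp)
    refine SupAt_of c.hk c.hkn q1 (fun y z => ?_) ?_
    · simp only [_root_.smul_apply, _root_.add_apply, smul_eq_mul, tens_apply, hsym.eq y z]
      ring
    · have h1 : m ≤ ‖fderiv ℝ c.ρ x‖ := hmd x (subset_closure hx.1) (by have := hx.2; simp at this; linarith)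
      have h2 := hT x (subset_closure hx.1)
      rw [Real.norm_eq_abs, abs_le] at h2
      simp only [tr_smul, tr_add, tr_tens, norm_smul, mul_pow, norm_neg, Real.norm_eq_abs, sq_abs]
      have h3 : m^2 ≤ ‖fderiv ℝ c.ρ x‖^2 := by gcongr
      have h4 : 0 ≤ -K * tr (fderiv ℝ (fderiv ℝ c.ρ) x) + K^2 * ‖fderiv ℝ c.ρ x‖^2 := by
        have : K * (K * m^2) ≤ K * (K * ‖fderiv ℝ c.ρ x‖^2) := by gcongr
        have h5 : K * tr (fderiv ℝ (fderiv ℝ c.ρ) x) ≤ K * (K * m^2) := by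
          gcongr
          linarith [le_abs_self T]
        nlinarith
      have h6 := Real.exp_pos (-K * c.ρ x)
      have : 0 ≤ a * (Real.exp (-K * c.ρ x) * (-K * tr (fderiv ℝ (fderiv ℝ c.ρ) x) + K^2 * ‖fderiv ℝ c.ρ x‖^2)) := by positivity
      linarith

lemma ev_mem_of_dρ {p h : Euc n} (hp : p ∈ frontier c.Ω) (hh : fderiv ℝ c.ρ p h < 0) :
    ∀ᶠ s in 𝓝[>] (0:ℝ), p + s • h ∈ c.Ω := by
  have hd : HasFDerivAt c.ρ (fderiv ℝ c.ρ p) p := (c.hρ.differentiable (by simp) p).hasFDerivAt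
  have hl : HasDerivAt (fun s : ℝ => p + s • h) h 0 := by
    simpa using ((hasDerivAt_id (0:ℝ)).smul_const h).const_add p
  have hcomp : HasDerivAt (fun s : ℝ => c.ρ (p + s • h)) (fderiv ℝ c.ρ p h) 0 := by
    have hd' : HasFDerivAt c.ρ (fderiv ℝ c.ρ p) (p + (0:ℝ) • h) := by simpa using hd
    exact hd'.comp_hasDerivAt (0:ℝ) hl
  have := hcomp.tendsto_slope_zero_right
  simp only [zero_add, zero_smul, add_zero, c.ρ_fr hp, sub_zero, smul_eq_mul] at this
  filter_upwards [this.eventually (gt_mem_nhds hh), self_mem_nhdsWithin] with s hs hs0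
  rw [c.hΩρ]
  have hs0' : 0 < s := hs0
  by_contra hcon
  have h3 : 0 ≤ c.ρ (p + s • h) := by simpa using hcon
  have : 0 ≤ s⁻¹ * c.ρ (p + s • h) := by positivity
  linarith

lemma deriv_along {w : Euc n → ℝ} {g : Euc n →L[ℝ] ℝ} {S : Set (Euc n)} {p h : Euc n}
    (hw : HasFDerivWithinAt w g S p) (hS : ∀ᶠ s in 𝓝[>] (0:ℝ), p + s • h ∈ S) :
    Tendsto (fun s : ℝ => s⁻¹ * (w (p + s • h) - w p)) (𝓝[>] 0) (𝓝 (g h)) := by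
  have := hw.lim (l := 𝓝[>] (0:ℝ)) (c := fun s => s⁻¹) (d := fun s => s • h) (v := h) ?_ hS ?_
  · simpa using this
  · apply Tendsto.mono_left _ nhdsWithin_le_nhds
    have : Continuous (fun t : ℝ => t • h) := by fun_prop
    simpa using this.tendsto 0
  · refine tendsto_const_nhds.congr' ?_
    filter_upwards [self_mem_nhdsWithin] with s hs
    have : (0:ℝ) < s := hs
    simp only [smul_smul, inv_mul_cancel₀ this.ne', one_smul]

lemma hopf : ∃ g0 > (0:ℝ), ∀ p ∈ frontier c.Ω, g0 ≤ ‖c.G p‖ ∧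
    ∀ h, c.G p h < 0 → ∀ᶠ s in 𝓝[>] (0:ℝ), p + s • h ∈ c.Ω := by
  obtain ⟨c', hc', δ, hδ, hop⟩ := c.hopf0
  obtain ⟨m, hm, hmd⟩ := c.dρ_bd
  refine ⟨c' * m, by positivity, fun p hp => ?_⟩
  have hpc := frontier_subset_closure hp
  have hmp : m ≤ ‖fderiv ℝ c.ρ p‖ := hmd p hpc (by rw [c.ρ_fr hp]; linarith)
  have key : ∀ h, fderiv ℝ c.ρ p h < 0 → c.G p h ≤ c' * fderiv ℝ c.ρ p h := by
    intro h hh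
    have hev := c.ev_mem_of_dρ hp hh
    have t1 := deriv_along (c.reg.hG p hpc) (hev.mono fun s hs => subset_closure hs)
    have t2 := deriv_along (S := univ) (h := h) (c.hρ.differentiable (by simp) p).hasFDerivAt.hasFDerivWithinAt (by simp)
    refine le_of_tendsto_of_tendsto t1 (t2.const_mul c') ?_
    have hρev : ∀ᶠ s in 𝓝[>] (0:ℝ), -δ < c.ρ (p + s • h) := by
      have : Tendsto (fun s : ℝ => c.ρ (p + s • h)) (𝓝[>] 0) (𝓝 (c.ρ (p + (0:ℝ) • h))) :=
        Tendsto.mono_left (Continuous.tendsto (by have := c.hρ.continuous; fun_prop) 0) nhdsWithin_le_nhds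
      rw [zero_smul, add_zero, c.ρ_fr hp] at this
      exact this.eventually (lt_mem_nhds (by linarith))
    filter_upwards [hev, hρev, self_mem_nhdsWithin] with s h1 h2 h3
    have h3' : 0 < s := h3
    have := hop _ (subset_closure h1) h2
    rw [c.hψ0 p hp, c.ρ_fr hp, sub_zero, sub_zero]
    calc s⁻¹ * c.ψ (p + s • h) ≤ s⁻¹ * (c' * c.ρ (p + s • h)) := by gcongr
      _ = _ := by ring
  obtain ⟨r, hr, hrG⟩ := lin_prop (c.hdρ p hp) key
  have hr0 : 0 < r := by linarith
  refine ⟨?_, fun h hh => ?_⟩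
  · rw [hrG, norm_smul, Real.norm_of_nonneg hr0.le]
    gcongr
  · apply c.ev_mem_of_dρ hp
    rw [hrG] at hh
    simp at hh
    nlinarith

end Ctx
end KH


namespace KH
variable {n k : ℕ}
namespace Ctx
variable (c : Ctx n k)

lemma exR : ∃ R > c.ε₀, closedBall (0 : Euc n) R ⊆ c.Ω := by
  obtain ⟨δ, hδ, h⟩ := (isCompact_closedBall (0 : Euc n) c.ε₀).exists_cthickening_subset_open c.ho c.hball
  rw [cthickening_closedBall hδ.le c.hε₀.le] at h
  exact ⟨δ + c.ε₀, by linarith, h⟩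

lemma exA : ∃ A ≥ (2:ℝ), ∀ x ∈ closedBall (0 : Euc n) c.ε₀, A * c.ψ x ≤ - c.M := by
  obtain ⟨x, hx, hmax⟩ := (isCompact_closedBall (0 : Euc n) c.ε₀).exists_isMaxOn ⟨0, by simp [c.hε₀.le]⟩
    (c.ψ_cont.mono (c.hball.trans subset_closure))
  have h1 := c.ψ_neg (c.hball hx)
  have h3 : 0 < c.M / (-c.ψ x) := by have := c.hM; apply div_pos this; linarith
  refine ⟨2 + c.M / (-c.ψ x), by linarith, fun y hy => ?_⟩
  have h2 : c.ψ y ≤ c.ψ x := hmax hy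
  have h4 : c.M / (-c.ψ x) * c.ψ x = -c.M := by rw [div_neg, neg_mul, div_mul_cancel₀ _ h1.ne]
  nlinarith

variable {c} {ε : ℝ} {u : Euc n → ℝ} {Gu : Euc n → Euc n →L[ℝ] ℝ} {Hu : Euc n → Bil n}

lemma U_open : IsOpen (c.U ε) := c.ho.sdiff isClosed_closedBall
lemma U_bdd : IsBounded (c.U ε) := c.hb.subset sdiff_subset
lemma U_V : c.U ε ⊆ c.V ε := sdiff_subset_sdiff_left subset_closure
lemma clU_Ω : closure (c.U ε) ⊆ closure c.Ω := closure_mono sdiff_subset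
lemma clU_norm {x : Euc n} (hx : x ∈ closure (c.U ε)) : ε ≤ ‖x‖ := by
  have : closure (c.U ε) ⊆ {x | ε ≤ ‖x‖} := closure_minimal
    (fun y hy => by have := hy.2; simp at this ⊢; exact this.le) (isClosed_le continuous_const continuous_norm)
  exact this hx
lemma bdU {x : Euc n} (hx : x ∈ closure (c.U ε)) (h : x ∉ c.U ε) : x ∈ frontier c.Ω ∨ ‖x‖ = ε := by
  by_cases h1 : x ∈ c.Ω
  · right
    apply le_antisymm _ (clU_norm hx)
    by_contra hcon
    exact h ⟨h1, by simpa using hcon⟩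
  · left; exact c.fr_of (clU_Ω hx) h1

namespace USol

lemma SubAt (hu : c.USol ε u Gu Hu) {x : Euc n} (hx : x ∈ c.U ε) : KH.SubAt k u x :=
  ⟨_, _, hu.reg.hQ x hx, K0_sub (hu.reg.hK x (U_V hx))⟩

lemma SupAt (hu : c.USol ε u Gu Hu) {x : Euc n} (hx : x ∈ c.U ε) : KH.SupAt k u x :=
  ⟨_, _, hu.reg.hQ x hx, Kb_symm (K0_sub (hu.reg.hK x (U_V hx))), K0_Sup c.hk c.hkn (hu.reg.hK x (U_V hx))⟩

lemma sph (hu : c.USol ε u Gu Hu) {x : Euc n} (hx : ‖x‖ = ε) : u x = -c.M := hu.hM x (by simpa using hx)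

lemma ge_Aψ (hu : c.USol ε u Gu Hu) {A : ℝ} (hA1 : 1 ≤ A) (hA : ∀ x ∈ closedBall (0 : Euc n) c.ε₀, A * c.ψ x ≤ - c.M) :
    ∀ x ∈ closure (c.U ε), A * c.ψ x ≤ u x := by
  refine comparison c.hkn U_open U_bdd (by have := c.ψ_cont.mono (clU_Ω (ε := ε)); fun_prop) hu.cu ?_ ?_ (fun x hx => hu.SupAt hx)
  · intro x hx hx2
    rcases bdU hx hx2 with h | h
    · rw [hu.h0 x h, c.hψ0 x h]; simp
    · rw [hu.sph h]
      exact hA x (by simpa [h] using hu.hε.2.le)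
  · intro x hx
    exact ⟨_, _, (c.reg.hQ x hx.1).smul A, Kb_smul c.hkn (K0_sub (c.reg.hK x (subset_closure hx.1))) hA1⟩

lemma le_ψ (hu : c.USol ε u Gu Hu) : ∀ x ∈ closure (c.U ε), u x ≤ c.ψ x := by
  refine comparison c.hkn U_open U_bdd hu.cu (c.ψ_cont.mono (clU_Ω (ε := ε))) ?_ (fun x hx => hu.SubAt hx) ?_
  · intro x hx hx2
    rcases bdU hx hx2 with h | h
    · rw [hu.h0 x h, c.hψ0 x h]
    · rw [hu.sph h]
      have := c.hMψ x (clU_Ω hx)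
      linarith
  · intro x hx
    have := c.reg.hK x (subset_closure hx.1)
    exact ⟨_, _, c.reg.hQ x hx.1, Kb_symm (K0_sub this), K0_Sup c.hk c.hkn this⟩

lemma nonpos (hu : c.USol ε u Gu Hu) {x : Euc n} (hx : x ∈ closure (c.U ε)) : u x ≤ 0 :=
  (hu.le_ψ x hx).trans (c.ψ_nonpos (clU_Ω hx))

lemma ge_M (hu : c.USol ε u Gu Hu) : ∀ x ∈ closure (c.U ε), -c.M ≤ u x := by
  have hcp := cnk_pos c.hkn
  have h := comparison c.hkn (f := underSol k 0 ε c.M) (g := u) (D := c.U ε) U_open U_bdd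
    (by unfold underSol; fun_prop) hu.cu ?_ ?_ (fun x hx => hu.SupAt hx)
  · intro x hx
    have h1 := h x hx
    have h2 := clU_norm hx
    refine le_trans ?_ h1
    unfold underSol
    have : ε^2 / (2 * cnk n k) ≤ ‖x - 0‖^2 / (2 * cnk n k) := by
      rw [sub_zero]
      have := hu.hε.1
      gcongr
    linarith
  · intro x hx hx2
    rcases bdU hx hx2 with h | h
    · rw [hu.h0 x h]; exact c.hMsub ε hu.hε x h
    · rw [hu.sph h, underSol, sub_zero, h]; linarith
  · intro x hx
    have q := (((HasQ_sq 0 x).smul (1 / (2 * cnk n k))).add_const (- (ε^2 / (2 * cnk n k)) - c.M))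
    refine ⟨_, _, q.congr (Eventually.of_forall fun y => ?_), ?_⟩
    · simp only [underSol]; ring
    · have := Id_cnk c.hk c.hkn
      convert this using 1
      rw [smul_smul]; congr 1; field_simp

end USol

lemma S3 (c : Ctx n k) {R : ℝ} (hR : R > c.ε₀) (hRΩ : closedBall (0 : Euc n) R ⊆ c.Ω) :
    ∃ C3 > (0:ℝ), ∀ ε u Gu Hu, c.USol ε u Gu Hu → ∀ x : Euc n, ε ≤ ‖x‖ → ‖x‖ ≤ R →
      u x ≤ -c.M + C3 * (‖x‖^2/ε^2 - 1) := by
  have hM := c.hM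
  have hε₀ := c.hε₀
  set α : ℝ := n / 2 + 1 with hα
  have hα0 : 0 < α := by positivity
  set q := 1 - Real.exp (-(α * (R^2/c.ε₀^2 - 1))) with hq
  have hRe : 1 < R^2/c.ε₀^2 := by
    rw [one_lt_div (by positivity)]; gcongr
  have hq0 : 0 < q := by
    have : Real.exp (-(α * (R^2/c.ε₀^2 - 1))) < 1 := by
      rw [Real.exp_lt_one_iff]
      have : 0 < α * (R^2/c.ε₀^2 - 1) := by apply mul_pos hα0; linarith
      linarith
    rw [hq]; linarith
  refine ⟨c.M / q * α, by positivity, fun ε u Gu Hu hu => ?_⟩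
  have hε := hu.hε.1
  set w : Euc n → ℝ := fun x => (-(c.M / q)) * Real.exp ((-(α/ε^2)) * ‖x - 0‖^2 + α) + (-c.M + c.M / q) with hw
  set D := ball (0 : Euc n) R \ closedBall 0 ε with hD
  have hDU : D ⊆ c.U ε := sdiff_subset_sdiff_left (ball_subset_closedBall.trans hRΩ)
  have hDcl : closure D ⊆ closure (c.U ε) := closure_mono hDU
  have hle : ∀ x, w x ≤ -c.M + c.M / q * α * (‖x‖^2/ε^2 - 1) := by
    intro x
    have h1 := Real.add_one_le_exp (-(α / ε^2) * ‖x - 0‖^2 + α)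
    have h2 : 0 < c.M / q := by positivity
    have h3 : c.M / q * α * (‖x‖^2/ε^2 - 1) = - (c.M / q * (-(α / ε^2) * ‖x - 0‖^2 + α)) := by
      rw [sub_zero]; ring
    rw [h3]
    simp only [hw]
    nlinarith
  have hcmp := comparison c.hkn (f := u) (g := w) (D := D) (isOpen_ball.sdiff isClosed_closedBall)
    (isBounded_ball.subset sdiff_subset) (hu.cu.mono hDcl) (by fun_prop) ?_ (fun x hx => hu.SubAt (hDU hx)) ?_
  · intro x hx1 hx2
    refine le_trans ?_ (hle x)
    by_cases hxD : x ∈ closure D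
    · exact hcmp x hxD
    -- x in the closed annulus: boundary cases
    · exfalso
      apply hxD
      have hx0 : x ≠ 0 := by rintro rfl; simp at hx1; linarith
      have hxp : 0 < ‖x‖ := by positivity
      -- approximate by t x
      have hr : ε < R := hu.hε.2.trans hR
      set m := (ε + R) / 2 with hm
      have hcur : Tendsto (fun t : ℝ => ((1 - t) * ‖x‖ + t * m) • (‖x‖⁻¹ • x)) (𝓝[>] 0) (𝓝 (((1 - 0) * ‖x‖ + 0 * m) • (‖x‖⁻¹ • x))) :=
        Tendsto.mono_left (Continuous.tendsto (by fun_prop) 0) nhdsWithin_le_nhds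
      have hxx : ((1 - 0) * ‖x‖ + 0 * m) • (‖x‖⁻¹ • x) = x := by
        rw [smul_smul]; simp [hxp.ne']
      rw [hxx] at hcur
      refine mem_closure_of_tendsto hcur ?_
      filter_upwards [Ioo_mem_nhdsGT (show (0:ℝ) < 1 by norm_num)] with t ht
      have hpos : ε < (1 - t) * ‖x‖ + t * m := by nlinarith [ht.1, ht.2]
      have hlt : (1 - t) * ‖x‖ + t * m < R := by nlinarith [ht.1, ht.2]
      have hnorm : ‖((1 - t) * ‖x‖ + t * m) • (‖x‖⁻¹ • x)‖ = (1 - t) * ‖x‖ + t * m := by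
        rw [norm_smul, norm_smul, norm_inv, norm_norm, inv_mul_cancel₀ hxp.ne', mul_one, Real.norm_of_nonneg (by linarith)]
      refine ⟨by rw [mem_ball_zero_iff, hnorm]; exact hlt, ?_⟩
      rw [mem_closedBall_zero_iff, hnorm]; linarith
  · intro x hx hxD
    have h1 : ‖x‖ ≤ R := by
      have : closure D ⊆ closedBall 0 R := closure_minimal (sdiff_subset.trans ball_subset_closedBall) isClosed_closedBall
      simpa using this hx
    have h2 := clU_norm (hDcl hx)
    have h3 : ‖x‖ = R ∨ ‖x‖ = ε := by
      by_contra hcon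
      push Not at hcon
      apply hxD
      refine ⟨by simpa using lt_of_le_of_ne h1 hcon.1, by simpa using lt_of_le_of_ne h2 hcon.2.symm⟩
    rcases h3 with h3 | h3
    · refine (hu.nonpos (hDcl hx)).trans ?_
      simp only [hw, sub_zero, h3]
      have h4 : Real.exp (-(α/ε^2) * R^2 + α) ≤ 1 - q := by
        rw [hq, sub_sub_cancel]
        apply Real.exp_le_exp.2
        have : R^2/c.ε₀^2 ≤ R^2/ε^2 := by have := hu.hε.2; gcongr
        have h5 : -(α/ε^2) * R^2 + α = -(α * (R^2/ε^2 - 1)) := by ring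
        rw [h5]
        apply neg_le_neg
        gcongr
      have h5 : 0 < c.M / q := by positivity
      have h6 : c.M / q * q = c.M := by field_simp
      nlinarith
    · rw [hu.sph h3]
      simp only [hw, sub_zero, h3]
      have : -(α/ε^2) * ε^2 + α = 0 := by field_simp; ring
      rw [this, Real.exp_zero]; linarith
  · intro x hx
    have q1 := (((((HasQ_sq 0 x).smul (-(α/ε^2))).add_const α).exp).smul (-(c.M/q))).add_const (-c.M + c.M / q)
    refine SupAt_of c.hk c.hkn q1 (fun y z => ?_) ?_
    · simp only [_root_.smul_apply, _root_.add_apply, smul_eq_mul, tens_apply, IdB_apply]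
      rw [real_inner_comm]; ring
    · simp only [tr_smul, tr_add, tr_tens, norm_smul, mul_pow, norm_neg, Real.norm_eq_abs, sq_abs, tr_Id, innerSL_apply_norm, sub_zero]
      have hx2 : ε ≤ ‖x‖ := by have := hx.2; simp at this; exact this.le
      have h3 : ε^2 ≤ ‖x‖^2 := by gcongr
      have h5 : 0 < c.M / q := by positivity
      have h6 : 0 < α/ε^2 := by positivity
      have h4 : 0 ≤ -(α/ε^2) * (2 * n) + (α/ε^2)^2 * (|2|^2 * ‖x‖^2) := by
        have h7 : (n:ℝ) ≤ 2 * (α/ε^2) * ‖x‖^2 := by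
          have : 2 * (α/ε^2) * ε^2 = n + 2 := by rw [hα]; field_simp
          nlinarith
        rw [abs_two]
        nlinarith
      have h8 := Real.exp_pos (-(α/ε^2) * ‖x‖^2 + α)
      have := mul_nonneg h5.le (mul_nonneg h8.le h4)
      linarith

end Ctx
end KH


namespace KH
variable {n k : ℕ}

lemma rot (W : Euc n →L[ℝ] Euc n) (hW : ∀ x, ⟪W x, x⟫ = 0) : ∃ O : ℝ → (Euc n →ₗᵢ[ℝ] Euc n),
    (∀ x, O 0 x = x) ∧ (∀ x t, HasDerivAt (fun t => O t x) (W (O t x)) t) ∧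
    (∀ x t, ‖O t x - x‖ ≤ |t| * ‖W‖ * ‖x‖) ∧
    (∀ x t, ‖O t x - x - t • W x‖ ≤ t^2 * ‖W‖^2 * ‖x‖) := by
  set Ex : ℝ → (Euc n →L[ℝ] Euc n) := fun t => NormedSpace.exp (t • W) with hEx
  have hE0 : Ex 0 = 1 := by
    simp only [hEx]
    rw [zero_smul ℝ W, NormedSpace.exp_zero]
  have hd : ∀ x t, HasDerivAt (fun t => Ex t x) (W (Ex t x)) t := by
    intro x t
    have := hasDerivAt_exp_smul_const' (𝕂 := ℝ) W t
    have h2 := this.clm_apply (hasDerivAt_const t x)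
    simpa using h2
  have hn : ∀ x t, ‖Ex t x‖ = ‖x‖ := by
    intro x t
    have h1 : ∀ s, HasDerivAt (fun s => ‖Ex s x‖^2) 0 s := by
      intro s
      have := (hd x s).norm_sq
      rw [real_inner_comm, hW, mul_zero] at this
      exact this
    have h2 := is_const_of_deriv_eq_zero (f := fun s => ‖Ex s x‖^2) (fun s => (h1 s).differentiableAt) (fun s => (h1 s).deriv) t 0
    simp only [hE0, one_apply_eq_self] at h2
    exact (pow_left_inj₀ (norm_nonneg _) (norm_nonneg _) two_ne_zero).1 h2
  set O : ℝ → (Euc n →ₗᵢ[ℝ] Euc n) := fun t => ⟨(Ex t).toLinearMap, fun x => hn x t⟩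
  have hO : ∀ t x, O t x = Ex t x := fun _ _ => rfl
  have hb1 : ∀ x t, ‖O t x - x‖ ≤ |t| * ‖W‖ * ‖x‖ := by
    intro x t
    have := Convex.norm_image_sub_le_of_norm_hasDerivWithin_le (f := fun t => Ex t x) (s := univ) (C := ‖W‖ * ‖x‖)
      (fun s _ => (hd x s).hasDerivWithinAt) (fun s _ => (W.le_opNorm _).trans (by rw [hn])) convex_univ (mem_univ 0) (mem_univ t)
    simp only [hE0, one_apply_eq_self, sub_zero, Real.norm_eq_abs] at this
    rw [hO]; linarith
  refine ⟨O, fun x => by simp [hO, hE0], hd, hb1, ?_⟩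
  intro x t
  have := Convex.norm_image_sub_le_of_norm_hasDerivWithin_le (f := fun s => Ex s x - s • W x) (s := uIcc 0 t) (C := |t| * ‖W‖^2 * ‖x‖)
      (x := 0) (y := t) (f' := fun s => W (Ex s x) - W x)
      (fun s _ => ((hd x s).sub (by simpa using (hasDerivAt_id s).smul_const (W x))).hasDerivWithinAt) (fun s hs => ?_) (convex_uIcc 0 t) left_mem_uIcc right_mem_uIcc
  · simp only [hE0, one_apply_eq_self, sub_zero, Real.norm_eq_abs, zero_smul] at this
    have h2 : O t x - x - t • W x = Ex t x - t • W x - x := by rw [hO]; abel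
    rw [h2]
    refine this.trans (le_of_eq ?_)
    rw [← sq_abs t]; ring
  · rw [← map_sub]
    have h3 := hb1 x s
    rw [hO] at h3
    have hst : |s| ≤ |t| := by
      have := abs_sub_left_of_mem_uIcc hs
      simpa using this
    calc ‖W (Ex s x - x)‖ ≤ ‖W‖ * ‖Ex s x - x‖ := W.le_opNorm _
      _ ≤ ‖W‖ * (|t| * ‖W‖ * ‖x‖) := by
          gcongr
          refine h3.trans ?_
          gcongr
      _ = _ := by ring

lemma slope_le {F : ℝ → ℝ} {d C : ℝ} (h : HasDerivAt F d 0) (h0 : F 0 = 0) (hF : ∀ᶠ t in 𝓝[>] (0:ℝ), F t ≤ C * t) :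
    d ≤ C := by
  have := h.tendsto_slope_zero_right
  refine le_of_tendsto this ?_
  filter_upwards [hF, self_mem_nhdsWithin] with t h1 h2
  have h2' : 0 < t := h2
  simp only [zero_add, h0, sub_zero, smul_eq_mul]
  rw [inv_mul_le_iff₀ h2']; linarith

namespace Ctx
variable (c : Ctx n k)

lemma ψ_lip : ∃ Lψ > (0:ℝ), ∀ x ∈ closure c.Ω, ∀ y ∈ closure c.Ω, |c.ψ y - c.ψ x| ≤ Lψ * ‖y - x‖ := by
  obtain ⟨L, hL⟩ := c.cl_compact.exists_bound_of_continuousOn c.reg.cG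
  refine ⟨|L| + 1, by positivity, fun x hx y hy => ?_⟩
  exact c.hc.closure.norm_image_sub_le_of_norm_hasFDerivWithin_le c.reg.hG
    (fun z hz => (hL z hz).trans (by linarith [le_abs_self L])) hx hy

lemma S4a : ∃ C > (0:ℝ), ∃ l > (1:ℝ), ∀ ε u Gu Hu, c.USol ε u Gu Hu → ∀ lam ∈ Ioo 0 l,
    ∀ (O : Euc n →ₗᵢ[ℝ] Euc n) (κ : ℝ), (∀ x, ‖O x - x‖ ≤ κ * ‖x‖) → 0 ≤ κ →
    ∀ x ∈ c.U ε, lam • O x ∈ c.U ε → (lam^2)⁻¹ * u (lam • O x) ≤ u x + C * (|lam - 1| + κ) := by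
  obtain ⟨R, hR, hRΩ⟩ := c.exR
  obtain ⟨A, hA2, hA⟩ := c.exA
  obtain ⟨C3, hC3, hS3⟩ := c.S3 hR hRΩ
  obtain ⟨Lψ, hLψ, hlip⟩ := c.ψ_lip
  obtain ⟨Rb', hRb'⟩ := c.hb.closure.exists_norm_le
  set Rb := |Rb'| with hRbd
  have hRb : ∀ x ∈ closure c.Ω, ‖x‖ ≤ Rb := fun x hx => (hRb' x hx).trans (le_abs_self _)
  have hRb0 : 0 ≤ Rb := abs_nonneg _
  have hM := c.hM
  have hε₀ := c.hε₀
  refine ⟨2 * (c.M + C3) + A * Lψ * Rb, by positivity, R / c.ε₀, by rw [gt_iff_lt, one_lt_div hε₀]; exact hR, ?_⟩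
  intro ε u Gu Hu hu lam hlam O κ hκ hκ0
  have hε := hu.hε.1
  set C := 2 * (c.M + C3) + A * Lψ * Rb with hC
  have hC0 : 0 < C := by positivity
  have hl0 := hlam.1
  set T : Euc n → Euc n := fun x => lam • O x with hT
  have hTc : Continuous T := by have := O.continuous; fun_prop
  set D := c.U ε ∩ T ⁻¹' (c.U ε) with hD
  have hDo : IsOpen D := U_open.inter (U_open.preimage hTc)
  have hDcl : closure D ⊆ closure (c.U ε) := closure_mono inter_subset_left
  have hDcl2 : MapsTo T (closure D) (closure (c.U ε)) := by
    have : MapsTo T D (c.U ε) := fun x hx => hx.2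
    exact this.closure hTc
  have hθ : 0 ≤ |lam - 1| + κ := by positivity
  have hTn : ∀ x, ‖T x‖ = lam * ‖x‖ := fun x => by
    rw [hT]; simp only [norm_smul, O.norm_map, Real.norm_of_nonneg hl0.le]
  have hl1 : 1 ≤ lam → 1 - (lam^2)⁻¹ ≤ 2 * |lam - 1| := by
    intro h
    have h2 : (0:ℝ) ≤ lam - 1 := by linarith
    rw [abs_of_nonneg h2]
    have : (lam^2)⁻¹ * lam^2 = 1 := inv_mul_cancel₀ (by positivity)
    have h3 : 0 < (lam^2)⁻¹ := by positivity
    have h4 : (lam^2)⁻¹ ≤ 1 := inv_le_one_of_one_le₀ (by nlinarith)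
    -- 1 - q ≤ 2(l-1), q = 1/l^2 ; q ≥ 1 - 2(l-1) since q(1+(l-1))^2=1
    nlinarith [mul_nonneg h3.le h2, mul_nonneg h2 h2, mul_nonneg (mul_nonneg h3.le h2) h2]
  have hcmp := comparison c.hkn (f := fun x => (lam^2)⁻¹ * u (T x)) (g := fun x => u x + C * (|lam - 1| + κ)) hDo
    (U_bdd.subset inter_subset_left) ?_ ?_ ?_ ?_ ?_
  · intro x hx hx2
    exact hcmp x (subset_closure ⟨hx, hx2⟩)
  · exact continuousOn_const.mul (hu.cu.comp hTc.continuousOn hDcl2)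
  · exact (hu.cu.mono hDcl).add continuousOn_const
  · intro x hx hxD
    have hxU := hDcl hx
    have hyU := hDcl2 hx
    have hq : 0 < (lam^2)⁻¹ := by positivity
    have hCθ : 0 ≤ C * (|lam - 1| + κ) := by positivity
    have hCθ2 : 2 * (c.M + C3) * |lam - 1| ≤ C * (|lam - 1| + κ) := by
      have h1 : 0 ≤ A * Lψ * Rb := by positivity
      have h2 := abs_nonneg (lam - 1)
      have h3 : 2 * (c.M + C3) * |lam - 1| ≤ C * |lam - 1| := by
        apply mul_le_mul_of_nonneg_right _ h2; rw [hC]; linarith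
      have h4 : 0 ≤ C * κ := by positivity
      linarith
    have hcase : x ∉ c.U ε ∨ T x ∉ c.U ε := by
      by_contra hcon
      push Not at hcon
      exact hxD hcon
    rcases hcase with h | h
    · rcases bdU hxU h with h | h
      · rw [hu.h0 x h]
        have := hu.nonpos hyU
        nlinarith
      · rw [hu.sph h]
        have h1 : ε ≤ lam * ε := by have := clU_norm hyU; rwa [hTn, h] at this
        have h2 : 1 ≤ lam := by nlinarith
        have h3 : ‖T x‖ ≤ R := by
          rw [hTn, h]
          have h4 := hlam.2
          rw [lt_div_iff₀ hε₀] at h4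
          have : lam * ε ≤ lam * c.ε₀ := by gcongr; exact hu.hε.2.le
          linarith
        have h5 := hS3 ε u Gu Hu hu (T x) (clU_norm hyU) h3
        rw [hTn, h] at h5
        have h6 : (lam * ε)^2 / ε^2 = lam^2 := by field_simp
        rw [h6] at h5
        have h7 := hl1 h2
        have h8 : (lam^2)⁻¹ * u (T x) ≤ (lam^2)⁻¹ * (-c.M + C3 * (lam^2 - 1)) := by gcongr
        have h9 : (lam^2)⁻¹ * (-c.M + C3 * (lam^2 - 1)) = -c.M + (c.M + C3) * (1 - (lam^2)⁻¹) := by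
          field_simp; ring
        have h10 : (c.M + C3) * (1 - (lam^2)⁻¹) ≤ (c.M + C3) * (2 * |lam - 1|) := by gcongr
        linarith
    · rcases bdU hyU h with h | h
      · rw [hu.h0 _ h, mul_zero]
        have h1 := hu.ge_Aψ (by linarith) hA x hxU
        have h2 := hlip x (clU_Ω hxU) (T x) (clU_Ω hyU)
        rw [c.hψ0 _ h] at h2
        have h3 : ‖T x - x‖ ≤ (|lam - 1| + κ) * Rb := by
          have h4 : T x - x = (lam - 1) • O x + (O x - x) := by rw [hT]; simp only; module
          rw [h4]
          refine (norm_add_le _ _).trans ?_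
          rw [norm_smul, O.norm_map, Real.norm_eq_abs]
          have h5 := hRb x (clU_Ω hxU)
          have h6 := hκ x
          have h7 : κ * ‖x‖ ≤ κ * Rb := by gcongr
          have h8 : |lam - 1| * ‖x‖ ≤ |lam - 1| * Rb := by gcongr
          linarith
        have h4 : -c.ψ x ≤ Lψ * ((|lam - 1| + κ) * Rb) := by
          have := le_abs_self (0 - c.ψ x)
          have h5 : Lψ * ‖T x - x‖ ≤ Lψ * ((|lam - 1| + κ) * Rb) := by gcongr
          linarith
        have h5 : A * (-c.ψ x) ≤ A * (Lψ * ((|lam - 1| + κ) * Rb)) := by gcongr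
        have h6 : 0 ≤ 2 * (c.M + C3) * (|lam - 1| + κ) := by positivity
        rw [hC]; linarith
      · rw [hu.sph h]
        have h1 := hu.ge_M x hxU
        by_cases h2 : 1 ≤ lam
        · have h3 := hl1 h2
          have h4 : c.M * (1 - (lam^2)⁻¹) ≤ c.M * (2 * |lam - 1|) := by gcongr
          have h5 : 0 ≤ C3 * |lam - 1| := by positivity
          linarith
        · have h3 : 1 ≤ (lam^2)⁻¹ := by
            apply (one_le_inv₀ (by positivity)).2; nlinarith
          nlinarith
  · intro x hx
    have hq := hu.reg.hQ (T x) hx.2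
    have hK := K0_sub (hu.reg.hK (T x) (U_V hx.2))
    have := (HasQ.affine (T := T) (L := lam • O.toContinuousLinearMap) (x := x) (fun h => by simp [hT]) hq).smul ((lam^2)⁻¹)
    refine ⟨_, _, this, ?_⟩
    convert Kb_comp hK O using 1
    ext y z
    simp
    field_simp
  · intro x hx
    obtain ⟨l, B, h1, h2, h3⟩ := hu.SupAt hx.1
    exact ⟨l, B, h1.add_const _, h2, h3⟩

lemma S4 : ∃ L > (0:ℝ), ∀ ε u Gu Hu, c.USol ε u Gu Hu → ∀ x ∈ c.Ω, c.ε₀ ≤ ‖x‖ → ‖Gu x‖ ≤ L := by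
  obtain ⟨C, hC, l, hl, h4⟩ := c.S4a
  have hM := c.hM
  have hε₀ := c.hε₀
  refine ⟨(3 * C + 2 * c.M) / c.ε₀, by positivity, fun ε u Gu Hu hu x hx hxε => ?_⟩
  have hxp : 0 < ‖x‖ := by linarith
  have hxU : x ∈ c.U ε := ⟨hx, by have := hu.hε.2; simp; linarith⟩
  have key : ∀ v, Gu x v ≤ (3 * C + 2 * c.M) / c.ε₀ * ‖v‖ := by
    intro v
    set s := ⟪v, x⟫ / ‖x‖^2 with hs
    set W : Euc n →L[ℝ] Euc n := (‖x‖^2)⁻¹ • ((innerSL ℝ x).smulRight v - (innerSL ℝ v).smulRight x) with hWd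
    have hWa : ∀ z, W z = (‖x‖^2)⁻¹ • (⟪x, z⟫ • v - ⟪v, z⟫ • x) := fun z => by simp [hWd]
    have hW : ∀ z, ⟪W z, z⟫ = 0 := by
      intro z
      rw [hWa, inner_smul_left, inner_sub_left, inner_smul_left, inner_smul_left]
      simp; right; ring
    have hsb : |s| ≤ ‖v‖ / c.ε₀ := by
      rw [hs, abs_div, abs_of_pos (by positivity : 0 < ‖x‖^2), div_le_div_iff₀ (by positivity) hε₀]
      have h1 := abs_real_inner_le_norm v x
      calc |⟪v, x⟫| * c.ε₀ ≤ (‖v‖ * ‖x‖) * ‖x‖ := by gcongr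
        _ = _ := by ring
    have hWb : ‖W‖ ≤ 2 * (‖v‖ / c.ε₀) := by
      apply ContinuousLinearMap.opNorm_le_bound _ (by positivity)
      intro z
      rw [hWa, norm_smul, norm_inv, norm_pow, norm_norm, inv_mul_le_iff₀ (by positivity)]
      have h1 := abs_real_inner_le_norm v z
      have h2 := abs_real_inner_le_norm x z
      calc ‖⟪x, z⟫ • v - ⟪v, z⟫ • x‖ ≤ ‖⟪x, z⟫ • v‖ + ‖⟪v, z⟫ • x‖ := norm_sub_le _ _
        _ ≤ (‖x‖ * ‖z‖) * ‖v‖ + (‖v‖ * ‖z‖) * ‖x‖ := by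
            rw [norm_smul, norm_smul, Real.norm_eq_abs, Real.norm_eq_abs]; gcongr
        _ = ‖x‖ * (2 * (‖v‖ / c.ε₀) * ‖z‖) * c.ε₀ := by field_simp; ring
        _ ≤ ‖x‖ * (2 * (‖v‖ / c.ε₀) * ‖z‖) * ‖x‖ := by gcongr
        _ = _ := by ring
    obtain ⟨O, hO0, hOd, hO1, -⟩ := rot W hW
    have hud : HasFDerivAt u (Gu x) x :=
      (hu.reg.hG x (U_V hxU)).hasFDerivAt (mem_of_superset (U_open.mem_nhds hxU) U_V)
    have hyd : HasDerivAt (fun t : ℝ => (1 + t * s) • O t x) v 0 := by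
      have h1 : HasDerivAt (fun t : ℝ => 1 + t * s) s 0 := by
        simpa using ((hasDerivAt_id (0:ℝ)).mul_const s).const_add 1
      have h2 := h1.smul (hOd x 0)
      refine h2.congr_deriv ?_
      rw [hO0, hWa, hs, real_inner_self_eq_norm_sq, smul_sub, smul_smul, smul_smul, inv_mul_cancel₀ (by positivity)]
      simp only [zero_mul, add_zero, one_smul, div_eq_inv_mul]
      abel
    have hy0 : (1 + (0:ℝ) * s) • O 0 x = x := by simp [hO0]
    have hud' : HasFDerivAt u (Gu x) ((1 + (0:ℝ) * s) • O 0 x) := by rw [hy0]; exact hud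
    have hcd := hud'.comp_hasDerivAt (0:ℝ) hyd
    have hld : HasDerivAt (fun t : ℝ => ((1 + t * s)^2)⁻¹) (-(2 * s)) 0 := by
      have h1 : HasDerivAt (fun t : ℝ => 1 + t * s) s 0 := by
        simpa using ((hasDerivAt_id (0:ℝ)).mul_const s).const_add 1
      have h2 : HasDerivAt (fun t : ℝ => ((1 + t * s)^2)⁻¹) _ 0 := (h1.pow 2).inv (by simp)
      refine h2.congr_deriv ?_
      simp
    have hF := (hld.mul hcd).sub_const (u x)
    have hfin := slope_le (C := C * (|s| + ‖W‖)) hF (by simp [hO0]) ?_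
    · simp only [Function.comp, hy0] at hfin
      simp at hfin
      have hux := hu.ge_M x (subset_closure hxU)
      have hux2 := hu.nonpos (subset_closure hxU)
      have h1 : -(2 * |s| * c.M) ≤ -(2 * s * u x) := by
        have : |2 * s * u x| ≤ 2 * |s| * c.M := by
          rw [abs_mul, abs_mul, abs_two]
          gcongr
          rw [abs_le]; constructor <;> linarith
        linarith [le_abs_self (2 * s * u x)]
      have h2 : C * (|s| + ‖W‖) ≤ C * (‖v‖ / c.ε₀ + 2 * (‖v‖ / c.ε₀)) := by gcongr
      have h3 : 2 * |s| * c.M ≤ 2 * (‖v‖ / c.ε₀) * c.M := by gcongr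
      have h4 : (3 * C + 2 * c.M) / c.ε₀ * ‖v‖ = C * (‖v‖ / c.ε₀ + 2 * (‖v‖ / c.ε₀)) + 2 * (‖v‖ / c.ε₀) * c.M := by
        ring
      linarith
    · have e1 : ∀ᶠ t in 𝓝 (0:ℝ), (1 + t * s) • O t x ∈ c.U ε := by
        have := hyd.continuousAt.tendsto
        rw [hy0] at this
        exact this.eventually (U_open.mem_nhds hxU)
      have e2 : ∀ᶠ t in 𝓝 (0:ℝ), (1 + t * s) ∈ Ioo 0 l := by
        have : Tendsto (fun t : ℝ => 1 + t * s) (𝓝 0) (𝓝 (1 + 0 * s)) := Continuous.tendsto (by fun_prop) 0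
        exact this.eventually (isOpen_Ioo.mem_nhds (by simp; linarith))
      filter_upwards [e1.filter_mono nhdsWithin_le_nhds, e2.filter_mono nhdsWithin_le_nhds, self_mem_nhdsWithin] with t h1 h2 h3
      have h3' : 0 < t := h3
      have := h4 ε u Gu Hu hu _ h2 (O t) (t * ‖W‖) (fun z => by simpa [abs_of_pos h3'] using hO1 z t) (by positivity) x hxU h1
      have h5 : |1 + t * s - 1| = t * |s| := by rw [add_sub_cancel_left, abs_mul, abs_of_pos h3']
      rw [h5] at this
      change ((1 + t * s)^2)⁻¹ * u ((1 + t * s) • O t x) - u x ≤ _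
      linarith
  apply ContinuousLinearMap.opNorm_le_bound _ (by positivity)
  intro v
  rw [Real.norm_eq_abs, abs_le]
  have h1 := key v
  have h2 := key (-v)
  rw [map_neg, norm_neg] at h2
  constructor <;> linarith

end Ctx
end KH


namespace KH
variable {n k : ℕ}
namespace Ctx
variable (c : Ctx n k)

lemma taylor : ∃ C > (0:ℝ), ∀ p ∈ closure c.Ω, ‖c.G p‖ ≤ C ∧ ‖c.H p‖ ≤ C ∧ ∀ x ∈ closure c.Ω,
    ‖c.G x - c.G p - c.H p (x - p)‖ ≤ C * ‖x - p‖^2 ∧ |c.ψ x - c.ψ p - c.G p (x - p)| ≤ C * ‖x - p‖^2 ∧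
    ‖c.G x - c.G p‖ ≤ C * ‖x - p‖ := by
  obtain ⟨L1, hL1⟩ := c.cl_compact.exists_bound_of_continuousOn c.reg.cG
  obtain ⟨L2, hL2⟩ := c.cl_compact.exists_bound_of_continuousOn c.reg.cH
  set C := |L1| + |L2| + |c.LH| + 1 with hC
  have a1 := abs_nonneg L1
  have a2 := abs_nonneg L2
  have a3 := abs_nonneg c.LH
  have b1 := le_abs_self L1
  have b2 := le_abs_self L2
  have b3 := le_abs_self c.LH
  have hC0 : 0 < C := by positivity
  have hG1 : ∀ p ∈ closure c.Ω, ‖c.G p‖ ≤ C := fun p hp => (hL1 p hp).trans (by linarith)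
  have hH1 : ∀ p ∈ closure c.Ω, ‖c.H p‖ ≤ C := fun p hp => (hL2 p hp).trans (by linarith)
  have hG2 : ∀ p ∈ closure c.Ω, ∀ x ∈ closure c.Ω, ‖c.G x - c.G p‖ ≤ C * ‖x - p‖ := fun p hp x hx =>
    c.hc.closure.norm_image_sub_le_of_norm_hasFDerivWithin_le c.reg.hH hH1 hp hx
  refine ⟨C, hC0, fun p hp => ⟨hG1 p hp, hH1 p hp, fun x hx => ⟨?_, ?_, hG2 p hp x hx⟩⟩⟩
  · have := (c.hc.closure.inter (convex_closedBall p ‖x - p‖)).norm_image_sub_le_of_norm_hasFDerivWithin_le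
      (f := fun y => c.G y - c.H p y) (f' := fun y => c.H y - c.H p) (C := C * ‖x - p‖) (x := p) (y := x)
      (fun y hy => ((c.reg.hH y hy.1).sub (c.H p).hasFDerivWithinAt).mono inter_subset_left)
      (fun y hy => by
        have h1 := c.hLH p hp y hy.1
        have h2 : ‖y - p‖ ≤ ‖x - p‖ := by simpa [dist_eq_norm] using hy.2
        refine h1.trans ?_
        gcongr; linarith) ⟨hp, by simp⟩ ⟨hx, by simp [dist_eq_norm]⟩
    have e : c.G x - c.G p - c.H p (x - p) = (c.G x - c.H p x) - (c.G p - c.H p p) := by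
      rw [map_sub]; abel
    rw [e]; refine this.trans (le_of_eq (by ring))
  · have := (c.hc.closure.inter (convex_closedBall p ‖x - p‖)).norm_image_sub_le_of_norm_hasFDerivWithin_le
      (f := fun y => c.ψ y - c.G p y) (f' := fun y => c.G y - c.G p) (C := C * ‖x - p‖) (x := p) (y := x)
      (fun y hy => ((c.reg.hG y hy.1).sub (c.G p).hasFDerivWithinAt).mono inter_subset_left)
      (fun y hy => by
        have h1 := hG2 p hp y hy.1
        have h2 : ‖y - p‖ ≤ ‖x - p‖ := by simpa [dist_eq_norm] using hy.2
        refine h1.trans ?_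
        gcongr) ⟨hp, by simp⟩ ⟨hx, by simp [dist_eq_norm]⟩
    have e : c.ψ x - c.ψ p - c.G p (x - p) = (c.ψ x - c.G p x) - (c.ψ p - c.G p p) := by
      rw [map_sub]; ring
    rw [e, ← Real.norm_eq_abs]; refine this.trans (le_of_eq (by ring))

structure Cfg (Kw t : ℝ) (p τ : Euc n) (W : Euc n →L[ℝ] Euc n) (κ : ℝ) (O : Euc n →ₗᵢ[ℝ] Euc n) : Prop where
  hp : p ∈ frontier c.Ω
  hτ : ‖τ‖ ≤ 1
  hGτ : c.G p τ = 0
  hW : ‖W‖ ≤ Kw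
  hκ : |κ| ≤ Kw
  rel : ∀ d, c.H p d τ + c.G p (W d) = κ * c.G p d
  O1 : ∀ d, ‖O d - d‖ ≤ t * Kw * ‖d‖
  O2 : ∀ d, ‖O d - d - t • W d‖ ≤ t^2 * Kw^2 * ‖d‖

variable {c}

lemma Cfg.move {Kw t : ℝ} {p τ W κ O} (h : c.Cfg Kw t p τ W κ O) (hK : 0 ≤ Kw) (ht : 0 < t) {x : Euc n} (hx : ‖x - p‖ ≤ 1) :
    ‖p + t • τ + O (x - p) - x‖ ≤ t * (1 + Kw) := by
  have e : p + t • τ + O (x - p) - x = t • τ + (O (x - p) - (x - p)) := by abel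
  rw [e]
  have h1 := h.O1 (x - p)
  have h2 : t * Kw * ‖x - p‖ ≤ t * Kw * 1 := by gcongr
  have h3 : ‖t • τ‖ ≤ t * 1 := by
    rw [norm_smul, Real.norm_of_nonneg ht.le]; have := h.hτ; gcongr
  exact (norm_add_le _ _).trans (by linarith)

variable (c)

lemma S5k {Kw : ℝ} (hK : 0 ≤ Kw) : ∃ C1 > (0:ℝ), ∃ C2 > (0:ℝ), ∃ t0 > (0:ℝ), ∀ p τ W κ t O, c.Cfg Kw t p τ W κ O →
    0 < t → t < t0 → ∀ x ∈ closure c.Ω, ‖x - p‖ ≤ 1 → p + t • τ + O (x - p) ∈ frontier c.Ω →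
    -c.ψ x ≤ t * (C1 * ‖x - p‖^2) + C2 * t^2 := by
  obtain ⟨C, hC, hT⟩ := c.taylor
  refine ⟨2 * C * (1 + 2 * Kw), by positivity, 2 * C * (Kw^2 + (1 + Kw)^2), by positivity, 1 / (2 * (Kw + 1)), by positivity, ?_⟩
  intro p τ W κ t O h ht ht0 x hx hx1 hy
  have hmv := h.move hK ht hx1
  set y := p + t • τ + O (x - p) with hyd
  set d := x - p with hd
  have hpc := frontier_subset_closure h.hp
  obtain ⟨-, -, T1⟩ := hT p hpc
  obtain ⟨G1, -, T2⟩ := hT x hx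
  obtain ⟨T11, T12, T13⟩ := T1 x hx
  obtain ⟨-, T22, -⟩ := T2 y (frontier_subset_closure hy)
  rw [c.hψ0 y hy] at T22
  rw [c.hψ0 p h.hp] at T12
  have hψx := c.ψ_nonpos hx
  set e := O d - d - t • W d with he
  have hye : y - x = t • (τ + W d) + e := by
    rw [he, hyd, smul_add]
    have : x = p + d := by rw [hd]; abel
    rw [this]; abel
  have he1 : ‖e‖ ≤ t^2 * Kw^2 := by
    refine (h.O2 d).trans ?_
    have : t^2 * Kw^2 * ‖d‖ ≤ t^2 * Kw^2 * 1 := by gcongr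
    linarith
  have he2 : |c.G x e| ≤ C * (t^2 * Kw^2) := by
    refine ((c.G x).le_opNorm e).trans ?_
    gcongr
  have E1 : |(c.G x - c.G p - c.H p d) τ| ≤ C * ‖d‖^2 := by
    refine ((c.G x - c.G p - c.H p d).le_opNorm τ).trans ?_
    have := h.hτ
    calc _ ≤ (C * ‖d‖^2) * 1 := by gcongr
      _ = _ := by ring
  have E2 : |(c.G x - c.G p) (W d)| ≤ C * Kw * ‖d‖^2 := by
    refine ((c.G x - c.G p).le_opNorm (W d)).trans ?_
    have h1 := h.hW
    have h2 : ‖W d‖ ≤ Kw * ‖d‖ := (W.le_opNorm d).trans (by gcongr)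
    calc _ ≤ (C * ‖d‖) * (Kw * ‖d‖) := by gcongr
      _ = _ := by ring
  have E3 : |κ * c.G p d| ≤ Kw * (-c.ψ x + C * ‖d‖^2) := by
    rw [abs_mul]
    have h1 : |c.G p d| ≤ -c.ψ x + C * ‖d‖^2 := by
      rw [abs_le] at T12 ⊢
      constructor <;> linarith [T12.1, T12.2]
    have := h.hκ
    gcongr
  simp only [_root_.sub_apply] at E1 E2
  rw [h.hGτ] at E1
  have h4 := h.rel d
  have h5 : c.G x (τ + W d) ≤ Kw * (-c.ψ x) + C * (1 + 2 * Kw) * ‖d‖^2 := by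
    rw [map_add]
    have := (abs_le.1 E1).2
    have := (abs_le.1 E2).2
    have := (abs_le.1 E3).2
    nlinarith
  have h6 : t * c.G x (τ + W d) ≤ t * (Kw * (-c.ψ x) + C * (1 + 2 * Kw) * ‖d‖^2) := by gcongr
  have h7 : C * ‖y - x‖^2 ≤ C * (t * (1 + Kw))^2 := by gcongr
  have h8 : t * Kw ≤ 1/2 := by
    rw [lt_div_iff₀ (by positivity)] at ht0
    nlinarith
  have h9 : t * Kw * (-c.ψ x) ≤ 1/2 * (-c.ψ x) := by
    apply mul_le_mul_of_nonneg_right h8; linarith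
  rw [hye, map_add, map_smul, smul_eq_mul] at T22
  rw [← hye] at T22
  have h10 := (abs_le.1 T22).2
  have h11 := (abs_le.1 he2).2
  have h12 := (abs_le.1 T22).1
  have h13 := (abs_le.1 he2).1
  nlinarith

end Ctx
end KH


namespace KH
variable {n k : ℕ}

lemma Sup_mix (hkn : k ≤ n) {B Z : Bil n} {b : ℝ} (hb : 0 ≤ b) (hB : Sup k B) (hZ : Z ∈ Kb k n) :
    Sup k ((1 + b) • B - b • Z) := by
  intro s hs B' hB' h
  have hsb : 0 < s + b := by linarith
  refine hB ((s + b) / (1 + b)) (by rw [gt_iff_lt, one_lt_div (by linarith)]; linarith) ((s / (s + b)) • B' + (b / (s + b)) • Z)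
    (Kb_convex hkn hB' hZ (by positivity) (by positivity) (by field_simp)) ?_
  have h2 : (1 + b) • B = s • B' + b • Z := by rw [← h]; abel
  have h3 : B = (1 + b)⁻¹ • ((1 + b) • B) := by rw [smul_smul, inv_mul_cancel₀ (by linarith), one_smul]
  rw [h3, h2, smul_add, smul_add, smul_smul, smul_smul, smul_smul, smul_smul]
  have : 1 + b ≠ 0 := by linarith
  congr 2 <;> field_simp

namespace Ctx
variable {c : Ctx n k}

lemma V_sub {ε : ℝ} : c.V ε ⊆ closure (c.U ε) := by
  rintro x ⟨hx, hx2⟩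
  have := (isClosed_closedBall (x := (0 : Euc n)) (ε := ε)).isOpen_compl.inter_closure (t := c.Ω) ⟨hx2, hx⟩
  rwa [inter_comm] at this

lemma mem_V {ε : ℝ} (hε : ε ∈ Ioo 0 c.ε₀) {x : Euc n} (hx : x ∈ closure c.Ω) (h : c.ε₀ ≤ ‖x‖) : x ∈ c.V ε :=
  ⟨hx, by have := hε.2; simp; linarith⟩
lemma mem_U {ε : ℝ} (hε : ε ∈ Ioo 0 c.ε₀) {x : Euc n} (hx : x ∈ c.Ω) (h : c.ε₀ ≤ ‖x‖) : x ∈ c.U ε :=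
  ⟨hx, by have := hε.2; simp; linarith⟩

variable (c)

lemma exδ : ∃ δ > (0:ℝ), δ ≤ 1 ∧ ∀ p ∈ frontier c.Ω, ∀ x, ‖x - p‖ ≤ 2 * δ → c.ε₀ ≤ ‖x‖ := by
  obtain ⟨R, hR, hRΩ⟩ := c.exR
  refine ⟨min 1 ((R - c.ε₀)/2), lt_min one_pos (by linarith), min_le_left _ _, fun p hp x hx => ?_⟩
  have h1 : R < ‖p‖ := by
    by_contra hcon
    exact c.fr_not hp (hRΩ (by simpa using hcon))
  have h2 : ‖p‖ - ‖x‖ ≤ ‖x - p‖ := by rw [norm_sub_rev]; exact norm_sub_norm_le _ _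
  have h3 := min_le_right 1 ((R - c.ε₀)/2)
  linarith

lemma S5a {Kw : ℝ} (hK : 0 ≤ Kw) : ∃ A ≥ (2:ℝ), (∀ x ∈ closedBall (0 : Euc n) c.ε₀, A * c.ψ x ≤ - c.M) ∧
    ∃ B1 > (0:ℝ), ∃ B2 > (0:ℝ), ∃ C' > (0:ℝ), ∃ δ > (0:ℝ), (∀ p ∈ frontier c.Ω, ∀ x, ‖x - p‖ ≤ 2 * δ → c.ε₀ ≤ ‖x‖) ∧ 
    ∃ t0 > (0:ℝ), ∀ ε u Gu Hu, c.USol ε u Gu Hu →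
    ∀ p τ W κ t O, c.Cfg Kw t p τ W κ O → 0 < t → t < t0 → ∀ x ∈ c.Ω, ‖x - p‖ < δ →
    p + t • τ + O (x - p) ∈ c.Ω →
    u (p + t • τ + O (x - p)) ≤ u x + t * (B1 * (u x - A * c.ψ x) + B2 * ‖x - p‖^2) + C' * t^2 := by
  obtain ⟨A, hA2, hA⟩ := c.exA
  obtain ⟨C1, hC1, C2, hC2, t1, ht1, h5k⟩ := c.S5k hK
  obtain ⟨L, hL, hS4⟩ := c.S4
  obtain ⟨η, hη, hshr⟩ := c.shrink
  obtain ⟨δ, hδ, hδ1, hδε⟩ := c.exδ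
  set B2 := A * C1 + L * (1 + Kw) / δ^2 with hB2
  have hB20 : 0 < B2 := by positivity
  set B1 := 2 * B2 / (A * η) with hB1
  have hB10 : 0 < B1 := by positivity
  refine ⟨A, hA2, hA, B1, hB10, B2, hB20, A * C2, by positivity, δ, hδ, hδε, min t1 δ, lt_min ht1 hδ, ?_⟩
  intro ε u Gu Hu hu p τ W κ t O hcfg ht htlt x hx hxδ hyΩ
  have htt1 := lt_of_lt_of_le htlt (min_le_left _ _)
  have htδ := lt_of_lt_of_le htlt (min_le_right _ _)
  set T : Euc n → Euc n := fun x => p + t • τ + O (x - p) with hTd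
  have hTc : Continuous T := by have := O.continuous; fun_prop
  have hTp : ∀ x, ‖x - p‖ ≤ δ → ‖T x - p‖ ≤ 2 * δ := by
    intro x hx
    have e : T x - p = t • τ + O (x - p) := by rw [hTd]; simp only; abel
    rw [e]
    have h3 : ‖t • τ‖ ≤ t * 1 := by
      rw [norm_smul, Real.norm_of_nonneg ht.le]; have := hcfg.hτ; gcongr
    refine (norm_add_le _ _).trans ?_
    rw [O.norm_map]; linarith
  set D : Set (Euc n) := (c.Ω ∩ ball p δ) ∩ T ⁻¹' c.Ω with hD
  have hDo : IsOpen D := (c.ho.inter isOpen_ball).inter (c.ho.preimage hTc)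
  have hDcl : ∀ x ∈ closure D, x ∈ closure c.Ω ∧ ‖x - p‖ ≤ δ ∧ T x ∈ closure c.Ω := by
    intro x hx
    refine ⟨closure_mono (fun y hy => hy.1.1) hx, ?_, ?_⟩
    · have : x ∈ closedBall p δ := closure_minimal (fun y hy => ball_subset_closedBall hy.1.2) isClosed_closedBall hx
      simpa [dist_eq_norm] using this
    · have : MapsTo T D c.Ω := fun x hx => hx.2
      exact this.closure hTc hx
  have hV : ∀ x ∈ closure D, x ∈ c.V ε ∧ T x ∈ c.V ε := by
    intro x hx
    obtain ⟨h1, h2, h3⟩ := hDcl x hx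
    exact ⟨mem_V hu.hε h1 (hδε p hcfg.hp x (by linarith)), mem_V hu.hε h3 (hδε p hcfg.hp _ (hTp x h2))⟩
  have hUm : ∀ x ∈ D, x ∈ c.U ε ∧ T x ∈ c.U ε := by
    intro x hx
    obtain ⟨h1, h2, h3⟩ := hDcl x (subset_closure hx)
    exact ⟨mem_U hu.hε hx.1.1 (hδε p hcfg.hp x (by linarith)), mem_U hu.hε hx.2 (hδε p hcfg.hp _ (hTp x h2))⟩
  have hcomp := comparison c.hkn (f := fun x => u (T x))
    (g := fun x => u x + t * (B1 * (u x - A * c.ψ x) + B2 * ‖x - p‖^2) + A * C2 * t^2) (D := D) hDo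
    (c.hb.subset (fun y hy => hy.1.1)) ?_ ?_ ?_ ?_ ?_
  · exact hcomp x (subset_closure ⟨⟨hx, by simpa [dist_eq_norm] using hxδ⟩, hyΩ⟩)
  · exact hu.cu.comp hTc.continuousOn (fun x hx => V_sub (hV x hx).2)
  · have h1 := hu.cu.mono (fun x hx => V_sub (hV x hx).1)
    have h2 := c.ψ_cont.mono (fun x hx => (hDcl x hx).1)
    fun_prop
  · intro x hx hxD
    obtain ⟨h1, h2, h3⟩ := hDcl x hx
    obtain ⟨h4, h5⟩ := hV x hx
    have h6 := hu.ge_Aψ (by linarith) hA x (V_sub h4)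
    have hux := hu.nonpos (V_sub h4)
    have huT := hu.nonpos (V_sub h5)
    have h7 : 0 ≤ t * (B1 * (u x - A * c.ψ x)) := by
      have : 0 ≤ u x - A * c.ψ x := by linarith
      positivity
    have h8 : 0 ≤ t * (B2 * ‖x - p‖^2) := by positivity
    have h9 : 0 ≤ A * C2 * t^2 := by positivity
    by_cases hxΩ : x ∈ c.Ω
    · by_cases hTΩ : T x ∈ c.Ω
      · have h10 : ‖x - p‖ = δ := by
          apply le_antisymm h2
          by_contra hcon
          exact hxD ⟨⟨hxΩ, by simpa [dist_eq_norm] using hcon⟩, hTΩ⟩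
        have hlip := (c.hc.inter (convex_closedBall p (2 * δ))).norm_image_sub_le_of_norm_hasFDerivWithin_le
          (f := u) (f' := Gu) (C := L) (x := x) (y := T x)
          (fun y hy => (hu.reg.hG y (mem_V hu.hε (subset_closure hy.1) (hδε p hcfg.hp y (by simpa [dist_eq_norm] using hy.2)))).mono
            (fun z hz => mem_V hu.hε (subset_closure hz.1) (hδε p hcfg.hp z (by simpa [dist_eq_norm] using hz.2))))
          (fun y hy => hS4 ε u Gu Hu hu y hy.1 (hδε p hcfg.hp y (by simpa [dist_eq_norm] using hy.2)))
          ⟨hxΩ, by simp [dist_eq_norm]; linarith⟩ ⟨hTΩ, by simpa [dist_eq_norm] using hTp x h2⟩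
        have h11 := hcfg.move hK ht (x := x) (by linarith)
        have h12 := (abs_le.1 hlip).2
        have h13 : L * ‖T x - x‖ ≤ L * (t * (1 + Kw)) := by gcongr
        have h14 : B2 * ‖x - p‖^2 = A * C1 * δ^2 + L * (1 + Kw) := by
          rw [h10, hB2]; field_simp
        have h15 : 0 ≤ t * (A * C1 * δ^2) := by positivity
        have h16 : t * (B2 * ‖x - p‖^2) = t * (A * C1 * δ^2) + t * (L * (1 + Kw)) := by rw [h14]; ring
        nlinarith
      · have h10 := c.fr_of h3 hTΩ
        rw [hu.h0 _ h10]
        have h11 := h5k p τ W κ t O hcfg ht htt1 x h1 (by linarith) h10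
        have h12 : A * (-c.ψ x) ≤ A * (t * (C1 * ‖x - p‖^2) + C2 * t^2) := by gcongr
        have h13 : 0 ≤ t * (L * (1 + Kw) / δ^2 * ‖x - p‖^2) := by positivity
        have h14 : t * (B2 * ‖x - p‖^2) = A * (t * (C1 * ‖x - p‖^2)) + t * (L * (1 + Kw) / δ^2 * ‖x - p‖^2) := by
          rw [hB2]; ring
        linarith
    · have h10 := c.fr_of h1 hxΩ
      have := hu.h0 x h10
      linarith
  · intro x hx
    have hTU := (hUm x hx).2
    have hq := hu.reg.hQ (T x) hTU
    have hKb := K0_sub (hu.reg.hK (T x) (U_V hTU))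
    have := HasQ.affine (T := T) (L := O.toContinuousLinearMap) (x := x) (fun h => by
      simp only [hTd]
      rw [show x + h - p = (x - p) + h by abel, map_add, LinearIsometry.coe_toContinuousLinearMap]; abel) hq
    exact ⟨_, _, this, Kb_comp hKb O⟩
  · intro x hx
    have hxU := (hUm x hx).1
    have hq := hu.reg.hQ x hxU
    have hKb := hu.reg.hK x (U_V hxU)
    have hqψ := c.reg.hQ x hx.1.1
    have hxc : x ∈ closure c.Ω := subset_closure hx.1.1
    have hZ : (A / 2) • ((2:ℝ) • (c.H x - η • IdB n)) ∈ Kb k n := Kb_smul c.hkn (hshr x hxc) (by linarith)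
    have hq2 := (((hq.smul (1 + t * B1)).add (hqψ.smul (-(t * B1 * A)))).add ((HasQ_sq p x).smul (t * B2))).add_const (A * C2 * t^2)
    have hS := Sup_mix c.hkn (b := t * B1) (by positivity) (K0_Sup c.hk c.hkn hKb) hZ
    have hBe : ((1 + t * B1) • Hu x + (-(t * B1 * A)) • c.H x) + (t * B2) • ((2:ℝ) • IdB n) =
        (1 + t * B1) • Hu x - (t * B1) • ((A / 2) • ((2:ℝ) • (c.H x - η • IdB n))) := by
      have e : t * B1 * A * η = t * B2 * 2 := by rw [hB1]; field_simp
      have e2 : (t * B2) • ((2:ℝ) • IdB n) = (t * B1 * A * η) • IdB n := by rw [smul_smul, e]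
      rw [e2]; module
    refine ⟨_, _, hq2.congr (Eventually.of_forall fun y => ?_), ?_, ?_⟩
    · simp only; ring
    · intro v w
      have s1 := Kb_symm (K0_sub hKb) v w
      have s2 := Kb_symm (K0_sub (c.reg.hK x hxc)) v w
      simp only [_root_.add_apply, _root_.smul_apply, IdB_apply, s1, s2, real_inner_comm v w]
    · rw [hBe]; exact hS

end Ctx
end KH


namespace KH
variable {n k : ℕ}
namespace Ctx
variable (c : Ctx n k)

structure Rot (Kw : ℝ) (p τ : Euc n) (W : Euc n →L[ℝ] Euc n) (κ : ℝ) : Prop where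
  hp : p ∈ frontier c.Ω
  hτ : ‖τ‖ ≤ 1
  hGτ : c.G p τ = 0
  skew : ∀ x, ⟪W x, x⟫ = 0
  hW : ‖W‖ ≤ Kw
  hκ : |κ| ≤ Kw
  rel : ∀ d, c.H p d τ + c.G p (W d) = κ * c.G p d

variable {c}
lemma Rot.neg {Kw : ℝ} {p τ : Euc n} {W κ} (h : c.Rot Kw p τ W κ) : c.Rot Kw p (-τ) (-W) (-κ) where
  hp := h.hp
  hτ := by rw [norm_neg]; exact h.hτ
  hGτ := by rw [map_neg, h.hGτ, neg_zero]
  skew := fun x => by rw [_root_.neg_apply, inner_neg_left, h.skew, neg_zero]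
  hW := by rw [norm_neg]; exact h.hW
  hκ := by rw [abs_neg]; exact h.hκ
  rel := fun d => by
    have := h.rel d
    rw [_root_.neg_apply, map_neg, map_neg]; linarith
variable (c)

lemma exW : ∃ Kw ≥ (0:ℝ), ∀ p ∈ frontier c.Ω, ∀ τ, ‖τ‖ ≤ 1 → c.G p τ = 0 → ∃ W κ, c.Rot Kw p τ W κ := by
  obtain ⟨g0, hg0, hop⟩ := c.hopf
  obtain ⟨C, hC, hT⟩ := c.taylor
  refine ⟨2 * (C / g0), by positivity, fun p hp τ hτ hGτ => ?_⟩
  have hpc := frontier_subset_closure hp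
  obtain ⟨-, hH, -⟩ := hT p hpc
  have hs := (hop p hp).1
  set g : Euc n := (InnerProductSpace.toDual ℝ (Euc n)).symm (c.G p) with hg
  set h : Euc n := (InnerProductSpace.toDual ℝ (Euc n)).symm (c.H p τ) with hh
  have hgn : ‖g‖ = ‖c.G p‖ := by rw [hg, LinearIsometryEquiv.norm_map]
  have hgv : ∀ v, c.G p v = ⟪g, v⟫ := fun v => by rw [hg, InnerProductSpace.toDual_symm_apply]
  have hhv : ∀ v, c.H p τ v = ⟪h, v⟫ := fun v => by rw [hh, InnerProductSpace.toDual_symm_apply]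
  have hhn : ‖h‖ ≤ C := by
    rw [hh, LinearIsometryEquiv.norm_map]
    refine ((c.H p).le_opNorm τ).trans ?_
    calc _ ≤ C * 1 := by gcongr
      _ = C := mul_one C
  have hgp : 0 < ‖g‖ := by rw [hgn]; linarith
  have hr : ‖h‖ / ‖g‖ ≤ C / g0 := by rw [hgn]; gcongr
  set W : Euc n →L[ℝ] Euc n := (‖g‖^2)⁻¹ • ((innerSL ℝ g).smulRight h - (innerSL ℝ h).smulRight g) with hWd
  have hWa : ∀ z, W z = (‖g‖^2)⁻¹ • (⟪g, z⟫ • h - ⟪h, z⟫ • g) := fun z => by simp [hWd]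
  have hsy := Kb_symm (K0_sub (c.reg.hK p hpc))
  refine ⟨W, ⟪g, h⟫ / ‖g‖^2, hp, hτ, hGτ, ?_, ?_, ?_, ?_⟩
  · intro z
    rw [hWa, inner_smul_left, inner_sub_left, inner_smul_left, inner_smul_left]
    simp; right; ring
  · apply ContinuousLinearMap.opNorm_le_bound _ (by positivity)
    intro z
    rw [hWa, norm_smul, norm_inv, norm_pow, norm_norm, inv_mul_le_iff₀ (by positivity)]
    have h1 := abs_real_inner_le_norm h z
    have h2 := abs_real_inner_le_norm g z
    calc ‖⟪g, z⟫ • h - ⟪h, z⟫ • g‖ ≤ ‖⟪g, z⟫ • h‖ + ‖⟪h, z⟫ • g‖ := norm_sub_le _ _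
      _ ≤ (‖g‖ * ‖z‖) * ‖h‖ + (‖h‖ * ‖z‖) * ‖g‖ := by
          rw [norm_smul, norm_smul, Real.norm_eq_abs, Real.norm_eq_abs]; gcongr
      _ = ‖g‖^2 * (2 * (‖h‖ / ‖g‖) * ‖z‖) := by field_simp; ring
      _ ≤ _ := by gcongr
  · rw [abs_div, abs_of_pos (by positivity : 0 < ‖g‖^2)]
    have h1 := abs_real_inner_le_norm g h
    have h3 : 0 ≤ C / g0 := by positivity
    calc |⟪g, h⟫| / ‖g‖^2 ≤ (‖g‖ * ‖h‖) / ‖g‖^2 := by gcongr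
      _ = ‖h‖ / ‖g‖ := by field_simp
      _ ≤ _ := by linarith
  · intro d
    rw [hsy d τ, hhv, hgv, hgv, hWa, inner_smul_right, inner_sub_right, inner_smul_right, inner_smul_right,
      real_inner_self_eq_norm_sq]
    field_simp
    ring

lemma S5 {Kw : ℝ} (hK : 0 ≤ Kw) : ∃ A ≥ (2:ℝ), (∀ x ∈ closedBall (0 : Euc n) c.ε₀, A * c.ψ x ≤ - c.M) ∧
    ∃ B1 > (0:ℝ), ∃ B2 > (0:ℝ), ∃ δ > (0:ℝ), (∀ p ∈ frontier c.Ω, ∀ x, ‖x - p‖ ≤ 2 * δ → c.ε₀ ≤ ‖x‖) ∧ 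
    ∀ ε u Gu Hu, c.USol ε u Gu Hu → ∀ p τ W κ, c.Rot Kw p τ W κ → ∀ x ∈ c.Ω, ‖x - p‖ < δ →
    Gu x (τ + W (x - p)) ≤ B1 * (u x - A * c.ψ x) + B2 * ‖x - p‖^2 := by
  obtain ⟨A, hA2, hA, B1, hB1, B2, hB2, C', hC', δ, hδ, hδε, t0, ht0, hmain⟩ := c.S5a hK
  refine ⟨A, hA2, hA, B1, hB1, B2, hB2, δ, hδ, hδε, ?_⟩
  intro ε u Gu Hu hu p τ W κ h x hx hxδ
  obtain ⟨O, hO0, hOd, hO1, hO2⟩ := rot W h.skew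
  have hxU : x ∈ c.U ε := mem_U hu.hε hx (hδε p h.hp x (by linarith))
  have hud : HasFDerivAt u (Gu x) x :=
    (hu.reg.hG x (U_V hxU)).hasFDerivAt (mem_of_superset (U_open.mem_nhds hxU) U_V)
  have hyd : HasDerivAt (fun t : ℝ => p + t • τ + O t (x - p)) (τ + W (x - p)) 0 := by
    have h1 : HasDerivAt (fun t : ℝ => p + t • τ) τ 0 := by
      simpa using ((hasDerivAt_id (0:ℝ)).smul_const τ).const_add p
    have h2 := h1.add (hOd (x - p) 0)
    rw [hO0] at h2
    exact h2
  have hy0 : p + (0:ℝ) • τ + O 0 (x - p) = x := by rw [hO0, zero_smul]; abel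
  have hud' : HasFDerivAt u (Gu x) (p + (0:ℝ) • τ + O 0 (x - p)) := by rw [hy0]; exact hud
  have hcd := hud'.comp_hasDerivAt (0:ℝ) hyd
  have hsq : HasDerivAt (fun t : ℝ => C' * t^2) 0 0 := by
    have := (hasDerivAt_pow 2 (0:ℝ)).const_mul C'
    simpa using this
  have hF := (hcd.sub_const (u x)).sub hsq
  rw [sub_zero] at hF
  refine slope_le hF ?_ ?_
  · simp [hO0]
  · have e1 : ∀ᶠ t in 𝓝 (0:ℝ), p + t • τ + O t (x - p) ∈ c.Ω := by
      have := hyd.continuousAt.tendsto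
      rw [hy0] at this
      exact this.eventually (c.ho.mem_nhds hx)
    filter_upwards [e1.filter_mono nhdsWithin_le_nhds, self_mem_nhdsWithin, Ioo_mem_nhdsGT ht0] with t h1 h2 h3
    have ht : 0 < t := h2
    have hW := h.hW
    have hcfg : c.Cfg Kw t p τ W κ (O t) := ⟨h.hp, h.hτ, h.hGτ, h.hW, h.hκ, h.rel, fun d => by
        refine (hO1 d t).trans ?_
        rw [abs_of_pos ht]; gcongr, fun d => by
        refine (hO2 d t).trans ?_
        gcongr⟩
    have := hmain ε u Gu Hu hu p τ W κ t (O t) hcfg ht h3.2 x hx hxδ h1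
    change u (p + t • τ + O t (x - p)) - u x - C' * t^2 ≤ _
    linarith

lemma S6 : ∃ C > (0:ℝ), ∃ A ≥ (2:ℝ), ∀ ε u Gu Hu, c.USol ε u Gu Hu → ∀ p ∈ frontier c.Ω,
    ∃ r, 1 ≤ r ∧ r ≤ A ∧ ∀ τ, ‖τ‖ ≤ 1 → c.G p τ = 0 → ∀ h, |Hu p h τ - r * c.H p h τ| ≤ C * |c.G p h| := by
  obtain ⟨Kw, hK, hW⟩ := c.exW
  obtain ⟨A, hA2, hA, B1, hB1, B2, hB2, δ, hδ, hδε, hS5⟩ := c.S5 hK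
  obtain ⟨g0, hg0, hop⟩ := c.hopf
  refine ⟨B1 * A + A * Kw, by positivity, A, hA2, ?_⟩
  intro ε u Gu Hu hu p hp
  have hpc := frontier_subset_closure hp
  obtain ⟨hs, hin⟩ := hop p hp
  have hG0 : c.G p ≠ 0 := by
    intro h; rw [h, norm_zero] at hs; linarith
  have hpV : p ∈ c.V ε := mem_V hu.hε hpc (hδε p hp p (by simp; positivity))
  have hball : ∀ h : Euc n, ∀ᶠ s in 𝓝[>] (0:ℝ), ‖p + s • h - p‖ < δ := by
    intro h
    have : Tendsto (fun s : ℝ => ‖p + s • h - p‖) (𝓝 0) (𝓝 ‖p + (0:ℝ) • h - p‖) := Continuous.tendsto (by fun_prop) 0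
    simp only [zero_smul, add_zero, sub_self, norm_zero] at this
    exact (this.eventually (gt_mem_nhds hδ)).filter_mono nhdsWithin_le_nhds
  have hinV : ∀ h, c.G p h < 0 → ∀ᶠ s in 𝓝[>] (0:ℝ), p + s • h ∈ c.V ε := by
    intro h hh
    filter_upwards [hin h hh, hball h] with s h1 h2
    exact mem_V hu.hε (subset_closure h1) (hδε p hp _ (by linarith))
  have hinc : ∀ h, c.G p h < 0 → ∀ᶠ s in 𝓝[>] (0:ℝ), p + s • h ∈ closure c.Ω := fun h hh =>
    (hin h hh).mono fun s hs => subset_closure hs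
  have k1 : ∀ h, c.G p h < 0 → Gu p h ≤ 1 * c.G p h := by
    intro h hh
    rw [one_mul]
    refine le_of_tendsto_of_tendsto (deriv_along (hu.reg.hG p hpV) (hinV h hh)) (deriv_along (c.reg.hG p hpc) (hinc h hh)) ?_
    filter_upwards [hinV h hh, self_mem_nhdsWithin] with s h1 h2
    have h2' : 0 < s := h2
    rw [hu.h0 p hp, c.hψ0 p hp]
    have := hu.le_ψ _ (V_sub h1)
    gcongr
  have k2 : ∀ h, c.G p h < 0 → A * c.G p h ≤ Gu p h := by
    intro h hh
    refine le_of_tendsto_of_tendsto ((deriv_along (c.reg.hG p hpc) (hinc h hh)).const_mul A) (deriv_along (hu.reg.hG p hpV) (hinV h hh)) ?_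
    filter_upwards [hinV h hh, self_mem_nhdsWithin] with s h1 h2
    have h2' : 0 < s := h2
    rw [hu.h0 p hp, c.hψ0 p hp]
    have := hu.ge_Aψ (by linarith) hA _ (V_sub h1)
    have e : A * (s⁻¹ * (c.ψ (p + s • h) - 0)) = s⁻¹ * (A * c.ψ (p + s • h) - 0) := by ring
    rw [e]
    gcongr
  obtain ⟨r, hr1, hr⟩ := lin_prop hG0 k1
  have hrv : ∀ v, Gu p v = r * c.G p v := fun v => by rw [hr]; rfl
  have hrA : r ≤ A := by
    obtain ⟨w, hw⟩ : ∃ w, c.G p w < 0 := by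
      by_contra hcon
      push Not at hcon
      apply hG0
      ext w
      have h1 := hcon w
      have h2 := hcon (-w)
      rw [map_neg] at h2
      simp; linarith
    have := k2 w hw
    rw [hrv] at this
    nlinarith
  refine ⟨r, hr1, hrA, ?_⟩
  have key : ∀ τ W κ, c.Rot Kw p τ W κ → ∀ h, c.G p h < 0 →
      Hu p h τ - r * c.H p h τ ≤ (-(B1 * A + A * Kw)) * c.G p h := by
    intro τ W κ hR h hh
    have hGuτ : Gu p τ = 0 := by rw [hrv, hR.hGτ, mul_zero]
    have d1 : HasFDerivWithinAt (fun y => Gu y τ) ((Hu p).flip τ) (c.V ε) p := by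
      have := (hu.reg.hH p hpV).clm_apply (hasFDerivWithinAt_const τ p (c.V ε))
      refine this.congr_fderiv ?_
      ext v; simp
    have t1 := deriv_along d1 (hinV h hh)
    have t2 : Tendsto (fun s : ℝ => Gu (p + s • h) (W h)) (𝓝[>] 0) (𝓝 (Gu p (W h))) := by
      have a1 : Tendsto (fun s : ℝ => p + s • h) (𝓝[>] 0) (𝓝[c.V ε] p) := by
        refine tendsto_nhdsWithin_iff.2 ⟨?_, hinV h hh⟩
        have : Tendsto (fun s : ℝ => p + s • h) (𝓝 0) (𝓝 (p + (0:ℝ) • h)) := Continuous.tendsto (by fun_prop) 0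
        rw [zero_smul, add_zero] at this
        exact this.mono_left nhdsWithin_le_nhds
      have a2 := (hu.reg.cG p hpV).tendsto.comp a1
      exact ((ContinuousLinearMap.apply ℝ ℝ (W h)).continuous.tendsto _).comp a2
    have t3 := ((deriv_along (hu.reg.hG p hpV) (hinV h hh)).sub ((deriv_along (c.reg.hG p hpc) (hinc h hh)).const_mul A)).const_mul B1
    have t4 : Tendsto (fun s : ℝ => B2 * (s * ‖h‖^2)) (𝓝[>] 0) (𝓝 0) := by
      have : Tendsto (fun s : ℝ => B2 * (s * ‖h‖^2)) (𝓝 0) (𝓝 (B2 * (0 * ‖h‖^2))) := Continuous.tendsto (by fun_prop) 0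
      simp only [zero_mul, mul_zero] at this
      exact this.mono_left nhdsWithin_le_nhds
    have hle := le_of_tendsto_of_tendsto (t1.add t2) (t3.add t4) (by
      filter_upwards [hin h hh, hball h, self_mem_nhdsWithin] with s h1 h2 h3
      have h3' : 0 < s := h3
      have := hS5 ε u Gu Hu hu p τ W κ hR _ h1 h2
      rw [hGuτ, hu.h0 p hp, c.hψ0 p hp]
      rw [add_sub_cancel_left, map_smul, map_add, map_smul, norm_smul, Real.norm_of_nonneg h3'.le, smul_eq_mul] at this
      have h4 : s⁻¹ * (Gu (p + s • h) τ + s * Gu (p + s • h) (W h)) ≤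
        s⁻¹ * (B1 * (u (p + s • h) - A * c.ψ (p + s • h)) + B2 * (s * ‖h‖)^2) := by gcongr
      have e1 : s⁻¹ * (Gu (p + s • h) τ + s * Gu (p + s • h) (W h)) = s⁻¹ * (Gu (p + s • h) τ - 0) + Gu (p + s • h) (W h) := by
        field_simp; ring
      have e2 : s⁻¹ * (B1 * (u (p + s • h) - A * c.ψ (p + s • h)) + B2 * (s * ‖h‖)^2) =
        B1 * (s⁻¹ * (u (p + s • h) - 0) - A * (s⁻¹ * (c.ψ (p + s • h) - 0))) + B2 * (s * ‖h‖^2) := by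
        field_simp; ring
      rw [e1, e2] at h4
      exact h4)
    rw [hrv, hrv] at hle
    have hle' : Hu p h τ + r * c.G p (W h) ≤ B1 * (r * c.G p h - A * c.G p h) + 0 := hle
    have hrel := hR.rel h
    have hG : c.G p (W h) = κ * c.G p h - c.H p h τ := by linarith
    rw [hG] at hle'
    have hκ := abs_le.1 hR.hκ
    have h5 : -(A * Kw) ≤ -(r * κ) := by nlinarith
    have h6 : -(B1 * A) ≤ B1 * (r - A) := by nlinarith
    have h7 : (B1 * (r - A) - r * κ) * c.G p h ≤ (-(B1 * A + A * Kw)) * c.G p h :=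
      mul_le_mul_of_nonpos_right (by linarith) hh.le
    linarith
  intro τ hτ hGτ h
  obtain ⟨W, κ, hR⟩ := hW p hp τ hτ hGτ
  set b : Euc n →L[ℝ] ℝ := (Hu p).flip τ - r • (c.H p).flip τ with hb
  have hbv : ∀ v, b v = Hu p v τ - r * c.H p v τ := fun v => by simp [hb]
  obtain ⟨r1, hr1', hb1⟩ := lin_prop (b := b) hG0 (fun v hv => by rw [hbv]; exact key τ W κ hR v hv)
  obtain ⟨r2, hr2', hb2⟩ := lin_prop (b := -b) (c := -(B1 * A + A * Kw)) hG0 (fun v hv => by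
    have := key _ _ _ hR.neg v hv
    rw [map_neg, map_neg] at this
    rw [_root_.neg_apply, hbv]; linarith)
  have h12 : r1 = -r2 := by
    have : (r1 + r2) • c.G p = 0 := by rw [add_smul, ← hb1, ← hb2]; abel
    rcases smul_eq_zero.1 this with h | h
    · linarith
    · exact absurd h hG0
  rw [← hbv, hb1, _root_.smul_apply, smul_eq_mul, abs_mul]
  gcongr
  rw [abs_le]; constructor <;> linarith

end Ctx
end KH


namespace KH
variable {n k : ℕ}

/-- expansion of a symmetric form vanishing on the tangential directions -/
lemma X_bound {X : Bil n} {ν : Euc n} (hν : ‖ν‖ = 1) (hs : ∀ v w, X v w = X w v) {K : ℝ} (hK : 0 ≤ K)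
    (hX : ∀ τ, ⟪ν, τ⟫ = 0 → ∀ h, |X h τ| ≤ K * |⟪ν, h⟫| * ‖τ‖) (v w : Euc n) :
    |X v w - ⟪ν, v⟫ * ⟪ν, w⟫ * X ν ν| ≤ K * (|⟪ν, v⟫| * ‖w‖ + |⟪ν, w⟫| * ‖v‖) := by
  have hp : ∀ v : Euc n, ⟪ν, v - ⟪ν, v⟫ • ν⟫ = 0 := fun v => by
    rw [inner_sub_right, inner_smul_right, real_inner_self_eq_norm_sq, hν]; ring
  have hn : ∀ v : Euc n, ‖v - ⟪ν, v⟫ • ν‖ ≤ ‖v‖ := fun v => by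
    have h1 : ‖v - ⟪ν, v⟫ • ν‖^2 ≤ ‖v‖^2 := by
      rw [norm_sub_sq_real, inner_smul_right, norm_smul, hν, mul_one, Real.norm_eq_abs, sq_abs, real_inner_comm]
      nlinarith [sq_nonneg ⟪ν, v⟫]
    exact (pow_le_pow_iff_left₀ (norm_nonneg _) (norm_nonneg _) two_ne_zero).1 h1
  set τ := v - ⟪ν, v⟫ • ν with hτ
  set σ := w - ⟪ν, w⟫ • ν with hσ
  have hv : v = τ + ⟪ν, v⟫ • ν := by rw [hτ]; abel
  have hw : w = σ + ⟪ν, w⟫ • ν := by rw [hσ]; abel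
  have h1 : X v σ + ⟪ν, w⟫ * X ν τ = X v w - ⟪ν, v⟫ * ⟪ν, w⟫ * X ν ν := by
    have e1 : X v w = X v σ + ⟪ν, w⟫ * X v ν := by
      conv_lhs => rw [hw]
      rw [map_add, map_smul, smul_eq_mul]
    have e2 : X v ν = X ν τ + ⟪ν, v⟫ * X ν ν := by
      rw [hs v ν]
      conv_lhs => rw [hv]
      rw [map_add, map_smul, smul_eq_mul]
    rw [e1, e2]; ring
  rw [← h1]
  have a1 := hX σ (hp w) v
  have a2 := hX τ (hp v) ν
  rw [real_inner_self_eq_norm_sq, hν] at a2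
  have b1 := hn v
  have b2 := hn w
  have a3 : |X v σ| ≤ K * |⟪ν, v⟫| * ‖w‖ := a1.trans (by gcongr)
  have a4 : |X ν τ| ≤ K * ‖v‖ := a2.trans (by
    simp only [one_pow, abs_one, mul_one]; gcongr)
  refine (abs_add_le _ _).trans ?_
  rw [abs_mul]
  have a5 : |⟪ν, w⟫| * |X ν τ| ≤ |⟪ν, w⟫| * (K * ‖v‖) := by gcongr
  linarith

set_option maxHeartbeats 1000000 in
lemma S7a (hk : 1 ≤ k) (hkn : k ≤ n) {K C A η : ℝ} (hK : 0 ≤ K) (hC : 0 ≤ C) (hη : 0 < η) (hA : 0 ≤ A) : ∃ C' > (0:ℝ),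
    ∀ (Hu H : Bil n) (r : ℝ) (ν : Euc n), Hu ∈ K0 k n → (∀ v w, H v w = H w v) → 1 ≤ r → r ≤ A → ‖ν‖ = 1 → ‖H‖ ≤ C →
    (2:ℝ) • (H - η • IdB n) ∈ Kb k n → 
    (∀ τ, ⟪ν, τ⟫ = 0 → ∀ h, |Hu h τ - r * H h τ| ≤ K * |⟪ν, h⟫| * ‖τ‖) → ∀ v w, |Hu v w| ≤ C' * ‖v‖ * ‖w‖ := by
  obtain ⟨b0, hb0, hr1⟩ := Kb_rank1 (k := k) hkn (show 0 < η / 3 by positivity)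
  set m1 := K^2 / (η/2) + 2 * b0 with hm1
  set m2 := m1 + A * n * C + 2 * n * K with hm2
  have hm10 : 0 < m1 := by positivity
  have hm20 : 0 < m2 := by positivity
  refine ⟨2 * K + m2 + A * C, by positivity, ?_⟩
  intro Hu H r ν hHu hHs hr hrA hν hHC hshr hX
  have hus := Kb_symm (K0_sub hHu)
  set X : Bil n := Hu - r • H with hXd
  have hXv : ∀ v w, X v w = Hu v w - r * H v w := fun v w => by simp [hXd]
  have hXs : ∀ v w, X v w = X w v := fun v w => by rw [hXv, hXv, hus v w, hHs v w]
  have hb := X_bound hν hXs hK (fun τ hτ h => by rw [hXv]; exact hX τ hτ h)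
  have hHb : ∀ v w, |H v w| ≤ C * ‖v‖ * ‖w‖ := fun v w => (H.le_opNorm₂ v w).trans (by gcongr)
  have hνv : ∀ v : Euc n, |⟪ν, v⟫| ≤ ‖v‖ := fun v => by
    have := abs_real_inner_le_norm ν v; rwa [hν, one_mul] at this
  set m := X ν ν with hm
  have hup : m < m1 := by
    by_contra hcon
    push Not at hcon
    set b := m - K^2 / (η/2) with hbd
    have hbb : 2 * b0 ≤ b := by linarith
    have hZ := hr1 ν hν (2 * b / 3) (by linarith)
    set Z := (η/3) • IdB n + (2 * b / 3) • tens (innerSL ℝ ν) (innerSL ℝ ν) with hZd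
    set Y := (2:ℝ) • (H - η • IdB n) with hYd
    set s := r / 2 + 3 / 2 with hs
    have hs0 : 1 < s := by linarith
    have hcv := Kb_convex hkn hshr hZ (a := r / 2 / s) (b := 3 / 2 / s) (by positivity) (by positivity) (by
      rw [hs]; field_simp)
    set B' := (r / 2 / s) • Y + (3 / 2 / s) • Z with hB'
    have hsB' : s • B' = (r / 2) • Y + (3/2:ℝ) • Z := by
      have hsne : s ≠ 0 := by linarith
      have q1 : s * (r / 2 / s) = r / 2 := by field_simp
      have q2 : s * (3 / 2 / s) = 3 / 2 := by field_simp
      rw [hB', smul_add, smul_smul s (r / 2 / s) Y, smul_smul s (3 / 2 / s) Z, q1, q2]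
    set P := s⁻¹ • (Hu - s • B') with hP
    have hPB : Hu = s • (B' + P) := by
      rw [hP, smul_add, smul_smul, mul_inv_cancel₀ (by linarith), one_smul]; abel
    have hB's := Kb_symm hcv
    refine K0_Sup hk hkn hHu s hs0 (B' + P) (Kb_add_psd hkn hcv ?_ ?_) hPB
    · intro x y
      simp only [hP, _root_.smul_apply, _root_.sub_apply, hus x y, hB's x y]
    · intro v
      simp only [hP, _root_.smul_apply, _root_.sub_apply, smul_eq_mul]
      apply mul_nonneg (by positivity)
      have e1 : s * B' v v = (r/2) * (2 * (H v v - η * ‖v‖^2)) + 3/2 * (η / 3 * ‖v‖^2 + 2 * b / 3 * (⟪ν, v⟫ * ⟪ν, v⟫)) := by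
        have : (s • B') v v = ((r / 2) • Y + (3/2:ℝ) • Z) v v := by rw [hsB']
        simp only [hYd, hZd, _root_.smul_apply, _root_.add_apply, _root_.sub_apply, smul_eq_mul] at this
        rw [this]; simp
      rw [e1]
      have h1 := (abs_le.1 (hb v v)).1
      rw [hXv] at h1
      have h2 : 2 * (K * (|⟪ν, v⟫| * ‖v‖)) ≤ η/2 * ‖v‖^2 + K^2 / (η/2) * ⟪ν, v⟫^2 := by
        have h3 : 0 ≤ (η/2 * ‖v‖ - K * |⟪ν, v⟫|)^2 / (η/2) := by positivity
        have h4 : (η/2 * ‖v‖ - K * |⟪ν, v⟫|)^2 / (η/2) = η/2 * ‖v‖^2 + K^2 / (η/2) * |⟪ν, v⟫|^2 - 2 * (K * (|⟪ν, v⟫| * ‖v‖)) := by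
          field_simp; ring
        rw [sq_abs] at h4
        linarith
      have h5 : r * (η * ‖v‖^2) ≥ η * ‖v‖^2 := by
        have : 0 ≤ η * ‖v‖^2 := by positivity
        exact le_mul_of_one_le_left this hr
      have h6 : m * ⟪ν, v⟫^2 = b * ⟪ν, v⟫^2 + K^2 / (η/2) * ⟪ν, v⟫^2 := by rw [hbd]; ring
      linarith
  have hlow : -m2 ≤ m := by
    have h1 := Kb_trace hk hkn (K0_sub hHu)
    have h2 : tr Hu ≤ ∑ i : Fin n, (A * C + 2 * K + ⟪ν, bs i⟫^2 * m) := by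
      rw [tr]
      refine Finset.sum_le_sum fun i _ => ?_
      have h3 := (abs_le.1 (hb (bs i) (bs i))).2
      have h4 := hνv (bs i)
      have h5 := (abs_le.1 (hHb (bs i) (bs i))).2
      have h6 : ‖(bs i : Euc n)‖ = 1 := by simp [bs]
      rw [h6] at h3 h4 h5
      rw [hXv] at h3
      have h7 : K * (|⟪ν, bs i⟫| * 1 + |⟪ν, bs i⟫| * 1) ≤ K * (1 * 1 + 1 * 1) := by gcongr
      have h8 : r * H (bs i) (bs i) ≤ A * C := by
        have : r * H (bs i) (bs i) ≤ r * C := by gcongr; linarith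
        have : r * C ≤ A * C := by gcongr
        linarith
      linarith
    rw [Finset.sum_add_distrib, ← Finset.sum_mul, sum_sq_bs, hν] at h2
    simp only [Finset.sum_const, Finset.card_univ, Fintype.card_fin, nsmul_eq_mul, one_pow, one_mul] at h2

    linarith
  have hmm : |m| ≤ m2 := by
    rw [abs_le]; refine ⟨hlow, ?_⟩
    have : 0 ≤ A * n * C + 2 * n * K := by positivity
    linarith
  intro v w
  have h1 := hb v w
  have h2 : |⟪ν, v⟫ * ⟪ν, w⟫ * m| ≤ ‖v‖ * ‖w‖ * m2 := by
    rw [abs_mul, abs_mul]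
    have := hνv v
    have := hνv w
    gcongr
  have h3 : K * (|⟪ν, v⟫| * ‖w‖ + |⟪ν, w⟫| * ‖v‖) ≤ K * (‖v‖ * ‖w‖ + ‖w‖ * ‖v‖) := by
    have := hνv v
    have := hνv w
    gcongr
  have h4 : |r * H v w| ≤ A * (C * ‖v‖ * ‖w‖) := by
    rw [abs_mul, abs_of_pos (by linarith)]
    have := hHb v w
    gcongr
  have e : Hu v w = (X v w - ⟪ν, v⟫ * ⟪ν, w⟫ * m) + ⟪ν, v⟫ * ⟪ν, w⟫ * m + r * H v w := by rw [hXv]; ring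
  rw [e]
  have := abs_add_three (X v w - ⟪ν, v⟫ * ⟪ν, w⟫ * m) (⟪ν, v⟫ * ⟪ν, w⟫ * m) (r * H v w)
  linarith

lemma Ctx.S7 (c : Ctx n k) : ∃ C' > (0:ℝ), ∀ ε u Gu Hu, c.USol ε u Gu Hu → ∀ p ∈ frontier c.Ω, ∀ v w, |Hu p v w| ≤ C' * ‖v‖ * ‖w‖ := by
  obtain ⟨C6, hC6, A, hA2, h6⟩ := c.S6
  obtain ⟨C, hC, hT⟩ := c.taylor
  obtain ⟨η, hη, hshr⟩ := c.shrink
  obtain ⟨g0, hg0, hop⟩ := c.hopf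
  obtain ⟨δ, hδ, hδ1, hδε⟩ := c.exδ
  obtain ⟨C', hC', h7⟩ := S7a (n := n) (k := k) c.hk c.hkn (K := C6 * C) (C := C) (A := A) (by positivity) hC.le hη (by linarith)
  refine ⟨C', hC', fun ε u Gu Hu hu p hp => ?_⟩
  have hpc := frontier_subset_closure hp
  obtain ⟨r, hr1, hrA, hr⟩ := h6 ε u Gu Hu hu p hp
  obtain ⟨hG, hH, -⟩ := hT p hpc
  have hs := (hop p hp).1
  set g : Euc n := (InnerProductSpace.toDual ℝ (Euc n)).symm (c.G p) with hg
  have hgn : ‖g‖ = ‖c.G p‖ := by rw [hg, LinearIsometryEquiv.norm_map]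
  have hgv : ∀ v, c.G p v = ⟪g, v⟫ := fun v => by rw [hg, InnerProductSpace.toDual_symm_apply]
  have hgp : 0 < ‖g‖ := by rw [hgn]; linarith
  set ν : Euc n := ‖g‖⁻¹ • g with hν
  have hν1 : ‖ν‖ = 1 := by rw [hν, norm_smul, norm_inv, norm_norm, inv_mul_cancel₀ hgp.ne']
  have hνv : ∀ v, c.G p v = ‖g‖ * ⟪ν, v⟫ := fun v => by
    rw [hgv, hν, real_inner_smul_left, ← mul_assoc, mul_inv_cancel₀ hgp.ne', one_mul]
  have hpV : p ∈ c.V ε := mem_V hu.hε hpc (hδε p hp p (by simp; positivity))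
  refine h7 (Hu p) (c.H p) r ν (hu.reg.hK p hpV) (Kb_symm (K0_sub (c.reg.hK p hpc))) hr1 hrA hν1 hH (hshr p hpc) ?_
  intro τ hτ h
  by_cases hτ0 : τ = 0
  · simp [hτ0]
  have hτp : 0 < ‖τ‖ := norm_pos_iff.2 hτ0
  have h1 := hr (‖τ‖⁻¹ • τ) (by rw [norm_smul, norm_inv, norm_norm, inv_mul_cancel₀ hτp.ne'])
    (by rw [map_smul, hνv, hτ]; simp) h
  rw [map_smul, map_smul, smul_eq_mul, smul_eq_mul, hνv, abs_mul, abs_of_pos hgp] at h1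
  have e : ‖τ‖⁻¹ * Hu p h τ - r * (‖τ‖⁻¹ * c.H p h τ) = ‖τ‖⁻¹ * (Hu p h τ - r * c.H p h τ) := by ring
  rw [e, abs_mul, abs_of_pos (by positivity), inv_mul_le_iff₀ hτp] at h1
  refine h1.trans ?_
  have h2 : ‖g‖ ≤ C := by rw [hgn]; exact hG
  calc ‖τ‖ * (C6 * (‖g‖ * |⟪ν, h⟫|)) ≤ ‖τ‖ * (C6 * (C * |⟪ν, h⟫|)) := by gcongr
    _ = _ := by ring

lemma opNorm_bd {B : Bil n} {C : ℝ} (hC : 0 ≤ C) (h : ∀ v w, |B v w| ≤ C * ‖v‖ * ‖w‖) :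
    ‖Matrix.toEuclideanCLM (𝕜 := ℝ) (matOf B)‖ ≤ C := by
  apply ContinuousLinearMap.opNorm_le_bound _ hC
  intro y
  set T := Matrix.toEuclideanCLM (𝕜 := ℝ) (matOf B) with hT
  have h1 : ⟪T y, T y⟫ = B (T y) y := by
    rw [matOf_apply, EuclideanSpace.inner_eq_star_dotProduct, dotProduct_comm]
    simp [hT]
  have h2 := (le_abs_self _).trans (h (T y) y)
  rw [← h1, real_inner_self_eq_norm_sq] at h2
  by_contra hcon
  push Not at hcon
  have h3 : 0 < ‖T y‖ := lt_of_le_of_lt (by positivity) hcon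
  nlinarith

end KH

/-- `C²` boundary estimates on `∂Ω₁`, uniform in `ε`. -/
theorem statement12 {n k : ℕ} (hk : 1 ≤ k) (hkn : k ≤ n)
    (Ω₁ : Set (Euc n)) (hΩo : IsOpen Ω₁) (hΩconv : Convex ℝ Ω₁)
    (hΩb : IsBounded Ω₁) (hΩs : HasSmoothBoundary Ω₁)
    (ε₀ : ℝ) (hε₀ : 0 < ε₀) (hball : closedBall (0 : Euc n) ε₀ ⊆ Ω₁)
    (ψ : Euc n → ℝ) (hψ : IsSol22 k Ω₁ ψ)
    (M₁ : ℝ) (hM₁ : 0 < M₁) (hM₁ψ : ∀ x ∈ closure Ω₁, -ψ x < M₁)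
    (hM₁sub : ∀ ε ∈ Ioo (0:ℝ) ε₀, ∀ x ∈ frontier Ω₁, underSol k (0 : Euc n) ε M₁ x ≤ 0)
    (M : ℝ) (hM : M₁ < M)
 :
    ∃ C : ℝ, 0 < C ∧ ∀ ε ∈ Ioo (0:ℝ) ε₀, ∀ u : Euc n → ℝ,
      IsSol k Ω₁ (0 : Euc n) ε M u → ∀ p ∈ frontier Ω₁,
        hessOpNormWithin u (ringSet Ω₁ (0 : Euc n) ε) p < C := by
  obtain ⟨ρ, hρ, hΩρ, hdρ⟩ := hΩs
  obtain ⟨hψ1, hψ2, hψ3⟩ := hψ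
  have hne : Ω₁.Nonempty := ⟨0, hball (by simp [hε₀.le])⟩
  have hud := KH.uniqueDiffOn_closure hΩo hΩconv hne
  have hψ3' : ContDiffOn ℝ 3 ψ (closure Ω₁) := contDiffOn_infty.1 hψ1 3
  have hreg := KH.mk_reg (k := k) hkn hΩo subset_closure subset_rfl hud (hψ3'.of_le (by norm_num)) hψ2
  have h1 : ContDiffOn ℝ 2 (fderivWithin ℝ ψ (closure Ω₁)) (closure Ω₁) := hψ3'.fderivWithin hud (by norm_num)
  have h2 : ContDiffOn ℝ 1 (fderivWithin ℝ (fderivWithin ℝ ψ (closure Ω₁)) (closure Ω₁)) (closure Ω₁) :=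
    h1.fderivWithin hud (by norm_num)
  have h3 : ContDiffOn ℝ 0 (fderivWithin ℝ (fderivWithin ℝ (fderivWithin ℝ ψ (closure Ω₁)) (closure Ω₁)) (closure Ω₁)) (closure Ω₁) :=
    h2.fderivWithin hud (by norm_num)
  obtain ⟨LH, hLH⟩ := hΩb.isCompact_closure.exists_bound_of_continuousOn h3.continuousOn
  let c : KH.Ctx n k := 
    { hk := hk, hkn := hkn, Ω := Ω₁, ho := hΩo, hc := hΩconv, hb := hΩb, ρ := ρ, hρ := hρ, hΩρ := hΩρ, hdρ := hdρ
      ε₀ := ε₀, hε₀ := hε₀, hball := hball, ψ := ψ, G := _, H := _, reg := hreg, LH := LH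
      hLH := fun x hx y hy => hΩconv.closure.norm_image_sub_le_of_norm_hasFDerivWithin_le
        (fun z hz => ((h2 z hz).differentiableWithinAt (by norm_num)).hasFDerivWithinAt) hLH hx hy
      hψ0 := hψ3, M := M, hM := by linarith
      hMψ := fun x hx => by have := hM₁ψ x hx; linarith
      hMsub := fun ε hε x hx => by
        have := hM₁sub ε hε x hx
        unfold underSol at this ⊢
        linarith }
  obtain ⟨C', hC', h7⟩ := c.S7
  refine ⟨C' + 1, by linarith, fun ε hε u hu p hp => ?_⟩
  obtain ⟨Gu, Hu, hus, hH⟩ := KH.mk_USol c hε hu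
  have := KH.opNorm_bd hC'.le (h7 ε u Gu Hu hus p hp)
  unfold hessOpNormWithin
  have e := hH p hp
  change hessianWithin u (ringSet Ω₁ 0 ε) p = _ at e
  rw [e]
  linarith
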